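/- arXiv:2308.01388 — 3 statements merged into one kernel-verified Lean document; each statement's English description precedes it below -/
import Mathlib

section
/- (Theorem 3.1, formula (Amri2).) Let λ ∈ C⁺ and X ∈ a. Then E_k(X,λ) = (3Γ(3k)/(V(λ)^{2k}·Γ(k)²)) ∫_{λ3}^{λ2} ∫_{λ2}^{λ1} [(ν1−λ3)(λ2−ν2)·E_k^{rk1}((x2−x3)/2, ν1−ν2) + (ν1−λ2)(ν2−λ3)·E_k^{rk1}(−(x2−x3)/2, ν1−ν2)] (λ1−ν1)(λ1−ν2) e^{(x2+x3−2x1)(ν1+ν2)/2} W_k(λ,ν) dν1 dν2. -/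
open Real MeasureTheory

/-- The rank-one Dunkl kernel `E_k^{rk1}(x,v)`. -/
noncomputable def Erk1 (k x v : ℝ) : ℝ :=
  (Real.Gamma (k + 1/2) / (Real.sqrt Real.pi * Real.Gamma k)) *
    ∫ z in (-1 : ℝ)..1, Real.exp (z * x * v) * (1 - z) ^ (k - 1) * (1 + z) ^ k

/-- The normalized modified Bessel function `𝒥_a(y)`, for `a > -1/2`. -/
noncomputable def besselJ (a y : ℝ) : ℝ :=
  (Real.Gamma (a + 1) / (Real.sqrt Real.pi * Real.Gamma (a + 1/2))) *
    ∫ z in (-1 : ℝ)..1, Real.exp (y * z) * (1 - z ^ 2) ^ (a - 1/2)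

/-- `W_k(λ,ν)`. -/
noncomputable def Wk (k l1 l2 l3 n1 n2 : ℝ) : ℝ :=
  ((l1 - n1) * (l1 - n2) * (n1 - l2) * (l2 - n2) * (n1 - l3) * (n2 - l3)) ^ (k - 1)

/-- `V(λ) = (λ1-λ2)(λ1-λ3)(λ2-λ3)`. -/
def Vlam (l1 l2 l3 : ℝ) : ℝ := (l1 - l2) * (l1 - l3) * (l2 - l3)

/-- The `A₂` Dunkl kernel `E_k(X,λ)`, defined via the rank-one kernel formula. -/
noncomputable def EkA2 (k x1 x2 x3 l1 l2 l3 : ℝ) : ℝ :=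
  (3 * Real.Gamma (3 * k) / (Vlam l1 l2 l3 ^ (2 * k) * Real.Gamma k ^ 2)) *
    ∫ n2 in l3..l2, ∫ n1 in l2..l1,
      ((n1 - l2) * (l1 - n2) * Erk1 k ((x1 - x2) / 2) (n1 - n2)
        + (l1 - n1) * (l2 - n2) * Erk1 k (-(x1 - x2) / 2) (n1 - n2))
      * ((n1 - l3) * (n2 - l3)) * Real.exp ((x1 + x2 - 2 * x3) * (n1 + n2) / 2)
      * Wk k l1 l2 l3 n1 n2

/-!
Writing the rank-one kernels as integrals over `z ∈ [-1, 1]` turns both sides into integrals of a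
polynomial `q_λ` times `exp φ_X` against one and the same measure in `(ν₁, ν₂, z)`; the right-hand
side arises from the left by a cyclic permutation of the coordinates of both `X` and `λ` in
`q_λ exp φ_X`, the measure being kept. So it suffices that such a permutation `ρ` multiplies the
integral by the sign of `ρ`, and this is checked on each moment `M_n(σ) = ∫ q_{σλ} φ_X ^ n`.

Integrating an explicit vector field by parts gives Euler's relation
`(n + 3k) M_n(σ) + k ∑_τ M_n(στ) = n ⟨X, σλ⟩ M_{n-1}(σ)`, with `τ` running over the three odd
permutations: this is the degree `n` part of `∑ᵢ xᵢ Tᵢ E = ⟨X, λ⟩ E` for the Dunkl operators `Tᵢ`.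
For `n ≥ 1` it is a diagonally dominant linear system for the function `M_n`, so covariance passes
from `n - 1` to `n`; for `n = 0` it forces `M_0` to be a multiple of the sign character.
-/

open Polynomial Equiv

section PolynomialMoments

variable {Ω : Type*} [MeasurableSpace Ω] {μ : Measure Ω} {q f : Ω → ℝ}

lemma hasSum_integral_mul_pow_div_factorial (hq : AEStronglyMeasurable q μ)
    (hf : AEStronglyMeasurable f μ) (hqf : Integrable (fun x ↦ |q x| * exp |f x|) μ) :
    HasSum (fun n : ℕ ↦ (∫ x, q x * f x ^ n ∂μ) / n.factorial) (∫ x, q x * exp (f x) ∂μ) := by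
  have hasSum_exp (c y : ℝ) :
      HasSum (fun n : ℕ ↦ c * y ^ n / n.factorial) (c * exp y) := by
    simpa only [mul_div_assoc, exp_eq_exp_ℝ] using
      (NormedSpace.expSeries_div_hasSum_exp y).mul_left c
  simp_rw [← integral_div]
  refine hasSum_integral_of_dominated_convergence
    (fun n x ↦ |q x| * |f x| ^ n / n.factorial) (fun n ↦ ?_) (fun n ↦ ?_) ?_ ?_ ?_
  · fun_prop
  · exact .of_forall fun x ↦ by simp
  · exact .of_forall fun x ↦ (hasSum_exp |q x| |f x|).summable
  · simpa only [(hasSum_exp _ _).tsum_eq] using hqf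
  · exact .of_forall fun x ↦ hasSum_exp (q x) (f x)

end PolynomialMoments

section CompactSupport

lemma integrable_of_continuous_of_ae_mem_isCompact {X E : Type*} [TopologicalSpace X] [T2Space X]
    [MeasurableSpace X] [OpensMeasurableSpace X] [NormedAddCommGroup E] {μ : Measure X}
    [IsFiniteMeasureOnCompacts μ] {K : Set X} (hK : IsCompact K) (hμK : ∀ᵐ x ∂μ, x ∈ K)
    {f : X → E} (hf : Continuous f) : Integrable f μ := by
  simpa only [IntegrableOn, Measure.restrict_eq_self_of_ae_mem hμK] using
    hf.continuousOn.integrableOn_compact (μ := μ) hK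

variable {ι : Type*} [Fintype ι] {X : ι → Type*} [∀ i, TopologicalSpace (X i)]
  [∀ i, T2Space (X i)] [∀ i, SecondCountableTopology (X i)] [∀ i, MeasurableSpace (X i)]
  [∀ i, BorelSpace (X i)] {μ : ∀ i, Measure (X i)} [∀ i, IsFiniteMeasure (μ i)]
  {K : ∀ i, Set (X i)} {E : Type*} [NormedAddCommGroup E]

lemma integrable_pi_of_continuous_of_ae_mem_isCompact (hK : ∀ i, IsCompact (K i))
    (hμK : ∀ i, ∀ᵐ x ∂μ i, x ∈ K i) {f : (∀ i, X i) → E} (hf : Continuous f) :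
    Integrable f (Measure.pi μ) := by
  refine integrable_of_continuous_of_ae_mem_isCompact (isCompact_univ_pi hK) ?_ hf
  simp only [Set.mem_univ_pi, ae_all_iff]
  exact fun i ↦ (Measure.quasiMeasurePreserving_eval μ i).ae (hμK i)

end CompactSupport

section FubiniPi

variable {E : Type*} [NormedAddCommGroup E] [NormedSpace ℝ E]

variable {n : ℕ} {X : Fin (n + 1) → Type*} [∀ i, MeasurableSpace (X i)]
  {μ : ∀ i, Measure (X i)} [∀ i, SigmaFinite (μ i)] {f : (∀ i, X i) → E}

lemma integral_pi_eq_integral_integral_insertNth (i : Fin (n + 1))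
    (hf : Integrable f (Measure.pi μ)) :
    ∫ t, f t ∂Measure.pi μ =
      ∫ x, ∫ y, f (i.insertNth x y) ∂Measure.pi (fun j ↦ μ (i.succAbove j)) ∂μ i := by
  have mp := (measurePreserving_piFinSuccAbove μ i).symm
  rw [← mp.integral_comp']
  exact integral_prod _ (mp.integrable_comp_of_integrable hf)

lemma integral_pi_eq_integral_integral_insertNth_symm (i : Fin (n + 1))
    (hf : Integrable f (Measure.pi μ)) :
    ∫ t, f t ∂Measure.pi μ =
      ∫ y, ∫ x, f (i.insertNth x y) ∂μ i ∂Measure.pi (fun j ↦ μ (i.succAbove j)) := by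
  have mp := (measurePreserving_piFinSuccAbove μ i).symm
  rw [← mp.integral_comp']
  exact integral_prod_symm _ (mp.integrable_comp_of_integrable hf)

lemma integral_pi_fin_three {X : Type*} [TopologicalSpace X] [T2Space X]
    [SecondCountableTopology X] [MeasurableSpace X] [BorelSpace X] {μ : Fin 3 → Measure X}
    [∀ i, IsFiniteMeasure (μ i)] {K : Fin 3 → Set X} (hK : ∀ i, IsCompact (K i))
    (hμK : ∀ i, ∀ᵐ x ∂μ i, x ∈ K i) {f : (Fin 3 → X) → E} (hf : Continuous f) :
    ∫ t, f t ∂Measure.pi μ = ∫ y, ∫ x, ∫ z, f ![x, y, z] ∂μ 2 ∂μ 0 ∂μ 1 := by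
  rw [integral_pi_eq_integral_integral_insertNth 1
    (integrable_pi_of_continuous_of_ae_mem_isCompact hK hμK hf)]
  congr with y
  have hfy : Continuous fun s : Fin 2 → X ↦ f ((1 : Fin 3).insertNth y s) := by fun_prop
  rw [integral_pi_eq_integral_integral_insertNth 0
    (integrable_pi_of_continuous_of_ae_mem_isCompact (fun j ↦ hK _) (fun j ↦ hμK _) hfy)]
  congr with x
  rw [← (measurePreserving_piUnique _).symm.integral_comp']
  refine integral_congr_ae (.of_forall fun z ↦ congrArg f ?_)
  ext j
  fin_cases j <;> rfl

end FubiniPi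

section JacobiWeight

/-- The polynomials `p` vanishing to first order at `a` and `b` and positive in between. For
`0 < k` their powers `p ^ (k - 1)` are generalized Jacobi weights on `[a, b]`. -/
structure IsJacobiWeight (a b : ℝ) (p : ℝ[X]) : Prop where
  lt : a < b
  exists_eq_mul : ∃ g : ℝ[X], p = (X - C a) * (C b - X) * g ∧ ∀ x ∈ Set.Icc a b, 0 < g.eval x

/-- The measure with density `p ^ (k - 1)` on `(a, b]`, used when `p` is a Jacobi weight. -/
noncomputable def jacobiMeasure (k a b : ℝ) (p : ℝ[X]) : Measure ℝ :=
  (volume.restrict (Set.Ioc a b)).withDensity fun x ↦ ENNReal.ofReal (p.eval x ^ (k - 1))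

lemma ae_jacobiMeasure_mem_Icc (k a b : ℝ) (p : ℝ[X]) :
    ∀ᵐ x ∂jacobiMeasure k a b p, x ∈ Set.Icc a b := by
  refine (withDensity_absolutelyContinuous _ _).ae_le ?_
  filter_upwards [ae_restrict_mem measurableSet_Ioc] with x hx using Set.Ioc_subset_Icc_self hx

lemma intervalIntegrable_sub_rpow_mul_sub_rpow {a b r s : ℝ} (hr : -1 < r) (hs : -1 < s)
    (hab : a < b) :
    IntervalIntegrable (fun x ↦ (x - a) ^ r * (b - x) ^ s) volume a b := by
  obtain ⟨c, hac, hcb⟩ := exists_between hab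
  have left : IntervalIntegrable (fun x ↦ (x - a) ^ r) volume a c := by
    simpa using
      (intervalIntegral.intervalIntegrable_rpow' (a := 0) (b := c - a) hr).comp_sub_right a
  have right : IntervalIntegrable (fun x ↦ (b - x) ^ s) volume c b := by
    simpa using
      (intervalIntegral.intervalIntegrable_rpow' (a := b - c) (b := 0) hs).comp_sub_left b
  refine (left.mul_continuousOn ?_).trans (right.continuousOn_mul ?_)
  · refine ContinuousOn.rpow_const (by fun_prop) fun x hx ↦ Or.inl ?_
    rw [Set.uIcc_of_le hac.le] at hx
    linarith [hx.2]
  · refine ContinuousOn.rpow_const (by fun_prop) fun x hx ↦ Or.inl ?_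
    rw [Set.uIcc_of_le hcb.le] at hx
    linarith [hx.1]

namespace IsJacobiWeight

variable {k a b : ℝ} {p : ℝ[X]}

lemma eval_left (hp : IsJacobiWeight a b p) : p.eval a = 0 := by
  obtain ⟨g, rfl, -⟩ := hp.exists_eq_mul
  simp

lemma eval_right (hp : IsJacobiWeight a b p) : p.eval b = 0 := by
  obtain ⟨g, rfl, -⟩ := hp.exists_eq_mul
  simp

lemma eval_pos (hp : IsJacobiWeight a b p) {x : ℝ} (hx : x ∈ Set.Ioo a b) : 0 < p.eval x := by
  obtain ⟨g, rfl, hg⟩ := hp.exists_eq_mul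
  simpa using mul_pos (mul_pos (sub_pos.2 hx.1) (sub_pos.2 hx.2))
    (hg x (Set.Ioo_subset_Icc_self hx))

lemma eval_nonneg (hp : IsJacobiWeight a b p) {x : ℝ} (hx : x ∈ Set.Icc a b) :
    0 ≤ p.eval x := by
  obtain ⟨g, rfl, hg⟩ := hp.exists_eq_mul
  simpa using mul_nonneg (mul_nonneg (sub_nonneg.2 hx.1) (sub_nonneg.2 hx.2)) (hg x hx).le

lemma intervalIntegrable_rpow (hp : IsJacobiWeight a b p) (hk : 0 < k) :
    IntervalIntegrable (fun x ↦ p.eval x ^ (k - 1)) volume a b := by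
  obtain ⟨g, rfl, hg⟩ := hp.exists_eq_mul
  have hk' : -1 < k - 1 := by linarith
  have hg_cont : ContinuousOn (fun x ↦ g.eval x ^ (k - 1)) (Set.uIcc a b) := by
    rw [Set.uIcc_of_le hp.lt.le]
    exact g.continuous.continuousOn.rpow_const fun x hx ↦ Or.inl (hg x hx).ne'
  refine ((intervalIntegrable_sub_rpow_mul_sub_rpow hk' hk' hp.lt).mul_continuousOn
    hg_cont).congr fun x hx ↦ ?_
  rw [Set.uIoc_of_le hp.lt.le] at hx
  have hxa : 0 ≤ x - a := sub_nonneg.2 hx.1.le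
  have hxb : 0 ≤ b - x := sub_nonneg.2 hx.2
  have hgx := (hg x (Set.Ioc_subset_Icc_self hx)).le
  simp [mul_rpow, mul_nonneg, hxa, hxb, hgx]

lemma isFiniteMeasure_jacobiMeasure (hp : IsJacobiWeight a b p) (hk : 0 < k) :
    IsFiniteMeasure (jacobiMeasure k a b p) :=
  isFiniteMeasure_withDensity_ofReal
    ((intervalIntegrable_iff_integrableOn_Ioc_of_le hp.lt.le).1
      (hp.intervalIntegrable_rpow hk)).2

lemma integral_jacobiMeasure (hp : IsJacobiWeight a b p) (f : ℝ → ℝ) :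
    ∫ x, f x ∂jacobiMeasure k a b p = ∫ x in a..b, p.eval x ^ (k - 1) * f x := by
  have density_meas : Measurable fun x ↦ ENNReal.ofReal (p.eval x ^ (k - 1)) :=
    (p.continuous.measurable.pow_const _).ennreal_ofReal
  rw [jacobiMeasure, integral_withDensity_eq_integral_toReal_smul density_meas (by simp),
    intervalIntegral.integral_of_le hp.lt.le]
  refine setIntegral_congr_fun measurableSet_Ioc fun x hx ↦ ?_
  simp [ENNReal.toReal_ofReal (rpow_nonneg (hp.eval_nonneg (Set.Ioc_subset_Icc_self hx)) _)]

lemma integral_jacobiMeasure_deriv_eq_zero (hp : IsJacobiWeight a b p) (hk : 0 < k)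
    {h h' : ℝ → ℝ} (hh : ∀ x, HasDerivAt h (h' x) x) (hh' : Continuous h') :
    ∫ x, (k * p.derivative.eval x * h x + p.eval x * h' x) ∂jacobiMeasure k a b p = 0 := by
  have h_cont : Continuous h := continuous_iff_continuousAt.2 fun x ↦ (hh x).continuousAt
  rw [hp.integral_jacobiMeasure, intervalIntegral.integral_eq_sub_of_hasDerivAt_of_le hp.lt.le
    (f := fun x ↦ p.eval x ^ k * h x)]
  · simp [hp.eval_left, hp.eval_right, hk.ne']
  · exact ((p.continuous.rpow_const fun _ ↦ Or.inr hk.le).mul h_cont).continuousOn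
  · intro x hx
    have hpx := (hp.eval_pos hx).ne'
    have rpow_eq : p.eval x ^ k = p.eval x ^ (k - 1) * p.eval x := by
      rw [← rpow_add_one hpx, sub_add_cancel]
    refine (((p.hasDerivAt x).rpow_const (Or.inl hpx)).mul (hh x)).congr_deriv ?_
    rw [rpow_eq]
    ring
  · exact (hp.intervalIntegrable_rpow hk).mul_continuousOn (by fun_prop)

end IsJacobiWeight

end JacobiWeight

section JacobiBox

variable {n : ℕ} {k : ℝ} {a b : Fin n → ℝ} {p : Fin n → ℝ[X]}

/-- The product of the Jacobi measures of `p i` on `(a i, b i]`. -/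
noncomputable def jacobiBoxMeasure (k : ℝ) (a b : Fin n → ℝ) (p : Fin n → ℝ[X]) :
    Measure (Fin n → ℝ) :=
  Measure.pi fun i ↦ jacobiMeasure k (a i) (b i) (p i)

lemma integrable_jacobiBoxMeasure (hk : 0 < k) (hp : ∀ i, IsJacobiWeight (a i) (b i) (p i))
    {f : (Fin n → ℝ) → ℝ} (hf : Continuous f) : Integrable f (jacobiBoxMeasure k a b p) := by
  have := fun i ↦ (hp i).isFiniteMeasure_jacobiMeasure hk
  exact integrable_pi_of_continuous_of_ae_mem_isCompact (fun _ ↦ isCompact_Icc)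
    (fun i ↦ ae_jacobiMeasure_mem_Icc k (a i) (b i) (p i)) hf

lemma integral_jacobiBoxMeasure_deriv_eq_zero (hk : 0 < k)
    (hp : ∀ i, IsJacobiWeight (a i) (b i) (p i)) (i : Fin n) {H H' : (Fin n → ℝ) → ℝ}
    (hH : Continuous H) (hH' : Continuous H')
    (hd : ∀ t, HasDerivAt (fun x ↦ H (Function.update t i x)) (H' t) (t i)) :
    ∫ t, (k * (p i).derivative.eval (t i) * H t + (p i).eval (t i) * H' t)
      ∂jacobiBoxMeasure k a b p = 0 := by
  obtain - | n := n
  · exact i.elim0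
  have := fun j ↦ (hp j).isFiniteMeasure_jacobiMeasure hk
  rw [jacobiBoxMeasure, integral_pi_eq_integral_integral_insertNth_symm i
    (integrable_jacobiBoxMeasure hk hp (by fun_prop))]
  refine integral_eq_zero_of_ae (.of_forall fun y ↦ ?_)
  simp only [Fin.insertNth_apply_same, Pi.zero_apply]
  exact (hp i).integral_jacobiMeasure_deriv_eq_zero hk
    (fun x ↦ by simpa using hd (i.insertNth x y)) (by fun_prop)

end JacobiBox

section OddPermutations

lemma eq_zero_of_forall_mul_add_sum_eq_zero {G : Type*} [Mul G] [Finite G] {S : Finset G}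
    {c k : ℝ} (hc : |k| * S.card < c) {D : G → ℝ}
    (hD : ∀ σ, c * D σ + k * ∑ τ ∈ S, D (σ * τ) = 0) : D = 0 := by
  -- Diagonal dominance: evaluate the relation where `|D|` is maximal.
  funext σ
  have : Nonempty G := ⟨σ⟩
  obtain ⟨σ₀, hσ₀⟩ := Finite.exists_max fun σ ↦ |D σ|
  have sum_le : |∑ τ ∈ S, D (σ₀ * τ)| ≤ S.card * |D σ₀| := by
    simpa using (S.abs_sum_le_sum_abs _).trans (S.sum_le_card_nsmul _ _ fun τ _ ↦ hσ₀ (σ₀ * τ))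
  have max_le : c * |D σ₀| ≤ |k| * S.card * |D σ₀| := calc
    c * |D σ₀| ≤ |c * D σ₀| := by rw [abs_mul]; gcongr; exact le_abs_self c
    _ = |k| * |∑ τ ∈ S, D (σ₀ * τ)| := by
        rw [← abs_mul, eq_neg_of_add_eq_zero_left (hD σ₀), abs_neg]
    _ ≤ |k| * S.card * |D σ₀| := by rw [mul_assoc]; gcongr
  have max_eq_zero : |D σ₀| = 0 := by
    nlinarith [abs_nonneg (D σ₀)]
  exact abs_nonpos_iff.1 ((hσ₀ σ).trans max_eq_zero.le)

variable {α M : Type*} [Fintype α] [DecidableEq α] [AddCommMonoid M]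

lemma sum_sign_eq_mul_left (f : Perm α → M) (ε : ℤˣ) (σ : Perm α) :
    ∑ τ with τ.sign = ε, f (σ * τ) = ∑ τ with τ.sign = σ.sign * ε, f τ := by
  simp only [Finset.sum_filter]
  exact Fintype.sum_equiv (Equiv.mulLeft σ) _ _ fun τ ↦ by simp

lemma sum_sign_eq_mul_right (f : Perm α → M) (ε : ℤˣ) (σ : Perm α) :
    ∑ τ with τ.sign = ε, f (τ * σ) = ∑ τ with τ.sign = σ.sign * ε, f τ := by
  simp only [Finset.sum_filter]
  exact Fintype.sum_equiv (Equiv.mulRight σ) _ _ fun τ ↦ by simp [mul_comm τ.sign]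

lemma sum_odd_perm_fin_three (f : Perm (Fin 3) → M) :
    ∑ τ with τ.sign = -1, f τ = f (swap 0 1) + f (swap 0 2) + f (swap 1 2) := by
  rw [show ({τ | τ.sign = -1} : Finset (Perm (Fin 3))) = {swap 0 1, swap 0 2, swap 1 2} by decide,
    Finset.sum_insert (by decide), Finset.sum_insert (by decide), Finset.sum_singleton, add_assoc]

lemma apply_mul_eq_sign_mul_of_sum_odd {f : Perm (Fin 3) → ℝ}
    (hf : ∀ σ, 3 * f σ + ∑ τ with τ.sign = -1, f (σ * τ) = 0) (σ ρ : Perm (Fin 3)) :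
    f (σ * ρ) = ρ.sign * f σ := by
  have three_mul (σ : Perm (Fin 3)) : 3 * f σ = -∑ τ with τ.sign = -σ.sign, f τ := by
    simpa [sum_sign_eq_mul_left] using eq_neg_of_add_eq_zero_left (hf σ)
  have sum_even : ∑ τ with τ.sign = 1, f τ = -∑ τ with τ.sign = -1, f τ := by
    refine mul_left_cancel₀ (three_ne_zero' ℝ) ?_
    calc 3 * ∑ τ with τ.sign = 1, f τ
        = ∑ τ : Perm (Fin 3) with τ.sign = 1, -∑ τ with τ.sign = -1, f τ := by
          rw [Finset.mul_sum]
          exact Finset.sum_congr rfl fun τ hτ ↦ by rw [three_mul, (Finset.mem_filter.1 hτ).2]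
      _ = 3 * -∑ τ with τ.sign = -1, f τ := by
          rw [Finset.sum_const, nsmul_eq_mul]
          norm_cast
  have eq_sign_mul (σ : Perm (Fin 3)) : 3 * f σ = σ.sign * ∑ τ with τ.sign = 1, f τ := by
    obtain hσ | hσ := Int.units_eq_one_or σ.sign <;> simp [three_mul, hσ, sum_even]
  refine mul_left_cancel₀ three_ne_zero ?_
  rw [eq_sign_mul, mul_left_comm, eq_sign_mul, Perm.sign_mul]
  push_cast
  ring

end OddPermutations

section RankOneKernel

lemma isJacobiWeight_one_sub_X_sq : IsJacobiWeight (-1) 1 (1 - X ^ 2) where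
  lt := by norm_num
  exists_eq_mul := ⟨1, by simp only [map_neg, map_one]; ring, by simp⟩

variable {k : ℝ}

lemma Erk1_eq_integral (hk : 0 < k) (x v : ℝ) :
    Erk1 k x v = Gamma (k + 1 / 2) / (√π * Gamma k) *
      ∫ z, (1 + z) * exp (z * x * v) ∂jacobiMeasure k (-1) 1 (1 - X ^ 2) := by
  rw [Erk1, isJacobiWeight_one_sub_X_sq.integral_jacobiMeasure]
  congr 1
  refine intervalIntegral.integral_congr fun z hz ↦ ?_
  rw [Set.uIcc_of_le (by norm_num)] at hz
  have one_sub_nonneg : 0 ≤ 1 - z := sub_nonneg.2 hz.2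
  have one_add_nonneg : 0 ≤ 1 + z := by linarith [hz.1]
  have rpow_eq : (1 + z) ^ k = (1 + z) ^ (k - 1) * (1 + z) := by
    rw [← rpow_add_one' one_add_nonneg (by simpa using hk.ne'), sub_add_cancel]
  have weight_eq : (1 - X ^ 2 : ℝ[X]).eval z = (1 - z) * (1 + z) := by
    simp only [eval_sub, eval_one, eval_pow, eval_X]
    ring
  simp only [weight_eq, mul_rpow one_sub_nonneg one_add_nonneg, rpow_eq]
  ring

lemma Erk1_neg_eq_integral (hk : 0 < k) (x v : ℝ) :
    Erk1 k (-x) v = Gamma (k + 1 / 2) / (√π * Gamma k) *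
      ∫ z, (1 - z) * exp (z * x * v) ∂jacobiMeasure k (-1) 1 (1 - X ^ 2) := by
  have integral_comp_neg (f : ℝ → ℝ) : ∫ z in (-1)..1, f (-z) = ∫ z in (-1)..1, f z := by
    simp
  rw [Erk1_eq_integral hk, isJacobiWeight_one_sub_X_sq.integral_jacobiMeasure,
    isJacobiWeight_one_sub_X_sq.integral_jacobiMeasure, ← integral_comp_neg]
  simp [sub_eq_add_neg]

lemma mul_Erk1_add_mul_Erk1_neg (hk : 0 < k) (A B x v : ℝ) :
    A * Erk1 k x v + B * Erk1 k (-x) v = Gamma (k + 1 / 2) / (√π * Gamma k) *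
      ∫ z, (A * (1 + z) + B * (1 - z)) * exp (z * x * v)
        ∂jacobiMeasure k (-1) 1 (1 - X ^ 2) := by
  have := isJacobiWeight_one_sub_X_sq.isFiniteMeasure_jacobiMeasure hk
  have integrable {f : ℝ → ℝ} (hf : Continuous f) :
      Integrable f (jacobiMeasure k (-1) 1 (1 - X ^ 2)) :=
    integrable_of_continuous_of_ae_mem_isCompact isCompact_Icc
      (ae_jacobiMeasure_mem_Icc k (-1) 1 (1 - X ^ 2)) hf
  rw [Erk1_eq_integral hk, Erk1_neg_eq_integral hk, mul_left_comm A, mul_left_comm B, ← mul_add,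
    ← integral_const_mul, ← integral_const_mul,
    ← integral_add (integrable (by fun_prop)) (integrable (by fun_prop))]
  simp only [add_mul, mul_assoc]

end RankOneKernel

section InterlacingMeasure

/-- The weights attached to the integration variables `t = ![ν₁, ν₂, z]`: the cubic with roots
`l i`, up to sign, for the interlacing variables `ν₁`, `ν₂`, and `1 - z ^ 2` for the variable `z`
of the rank-one kernel. -/
noncomputable def interlacingWeight (l : Fin 3 → ℝ) : Fin 3 → ℝ[X] :=
  ![-Lagrange.nodal Finset.univ l, Lagrange.nodal Finset.univ l, 1 - X ^ 2]

/-- The measure `W_k(λ, ν) (1 - z²) ^ (k - 1) dν dz` on the box `ν₁ ∈ [λ₂, λ₁]`, `ν₂ ∈ [λ₃, λ₂]`,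
`z ∈ [-1, 1]`, in the coordinates `t = ![ν₁, ν₂, z]`. -/
noncomputable def interlacingMeasure (k : ℝ) (l : Fin 3 → ℝ) : Measure (Fin 3 → ℝ) :=
  jacobiBoxMeasure k ![l 1, l 2, -1] ![l 0, l 1, 1] (interlacingWeight l)

lemma interlacingWeight_comp_perm (l : Fin 3 → ℝ) (σ : Perm (Fin 3)) :
    interlacingWeight (l ∘ σ) = interlacingWeight l := by
  have nodal_comp : Lagrange.nodal Finset.univ (l ∘ σ) = Lagrange.nodal Finset.univ l :=
    Equiv.prod_comp σ fun i ↦ X - C (l i)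
  simp only [interlacingWeight, nodal_comp]

variable {k : ℝ} {l : Fin 3 → ℝ}

lemma isJacobiWeight_interlacingWeight (hl : StrictAnti l) (i : Fin 3) :
    IsJacobiWeight (![l 1, l 2, -1] i) (![l 0, l 1, 1] i) (interlacingWeight l i) := by
  have l10 : l 1 < l 0 := hl (by decide)
  have l21 : l 2 < l 1 := hl (by decide)
  have upper : IsJacobiWeight (l 1) (l 0) (-Lagrange.nodal Finset.univ l) := by
    refine ⟨l10, X - C (l 2), ?_, fun x hx ↦ by simpa using l21.trans_le hx.1⟩
    simp only [Lagrange.nodal, Fin.prod_univ_three]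
    ring
  have lower : IsJacobiWeight (l 2) (l 1) (Lagrange.nodal Finset.univ l) := by
    refine ⟨l21, C (l 0) - X, ?_, fun x hx ↦ by simpa using hx.2.trans_lt l10⟩
    simp only [Lagrange.nodal, Fin.prod_univ_three]
    ring
  fin_cases i
  exacts [upper, lower, isJacobiWeight_one_sub_X_sq]

lemma integrable_interlacingMeasure (hk : 0 < k) (hl : StrictAnti l) {f : (Fin 3 → ℝ) → ℝ}
    (hf : Continuous f) : Integrable f (interlacingMeasure k l) :=
  integrable_jacobiBoxMeasure hk (isJacobiWeight_interlacingWeight hl) hf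

lemma Wk_eq_mul_rpow (k : ℝ) (hl : StrictAnti l) {n1 n2 : ℝ} (hn1 : n1 ∈ Set.Icc (l 1) (l 0))
    (hn2 : n2 ∈ Set.Icc (l 2) (l 1)) :
    Wk k (l 0) (l 1) (l 2) n1 n2 = (interlacingWeight l 1).eval n2 ^ (k - 1) *
      (interlacingWeight l 0).eval n1 ^ (k - 1) := by
  rw [← mul_rpow ((isJacobiWeight_interlacingWeight hl 1).eval_nonneg hn2)
    ((isJacobiWeight_interlacingWeight hl 0).eval_nonneg hn1), Wk]
  simp only [interlacingWeight, Lagrange.eval_nodal, Fin.prod_univ_three, Matrix.cons_val, eval_neg]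
  ring_nf

lemma integral_interlacingMeasure (hk : 0 < k) (hl : StrictAnti l) {f : (Fin 3 → ℝ) → ℝ}
    (hf : Continuous f) :
    ∫ t, f t ∂interlacingMeasure k l =
      ∫ n2 in l 2..l 1, ∫ n1 in l 1..l 0, Wk k (l 0) (l 1) (l 2) n1 n2 *
        ∫ z, f ![n1, n2, z] ∂jacobiMeasure k (-1) 1 (1 - X ^ 2) := by
  have hw := isJacobiWeight_interlacingWeight hl
  have := fun i ↦ (hw i).isFiniteMeasure_jacobiMeasure hk
  rw [interlacingMeasure, jacobiBoxMeasure, integral_pi_fin_three (fun _ ↦ isCompact_Icc)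
    (fun i ↦ ae_jacobiMeasure_mem_Icc k _ _ (interlacingWeight l i)) hf,
    (hw 1).integral_jacobiMeasure]
  refine intervalIntegral.integral_congr fun n2 hn2 ↦ ?_
  rw [Set.uIcc_of_le (hw 1).lt.le] at hn2
  simp only [(hw 0).integral_jacobiMeasure, ← intervalIntegral.integral_const_mul]
  refine intervalIntegral.integral_congr fun n1 hn1 ↦ ?_
  rw [Set.uIcc_of_le (hw 0).lt.le] at hn1
  simp only [Wk_eq_mul_rpow k hl hn1 hn2, mul_assoc]
  rfl

end InterlacingMeasure

section DunklKernel

/-- The polynomial factor of the integrand, in the coordinates `t = ![ν₁, ν₂, z]`, once the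
rank-one kernels are written as integrals over `z`. -/
def kernelPoly (m t : Fin 3 → ℝ) : ℝ :=
  ((t 0 - m 1) * (m 0 - t 1) * (1 + t 2) + (m 0 - t 0) * (m 1 - t 1) * (1 - t 2)) *
    ((t 0 - m 2) * (t 1 - m 2))

/-- The exponent of the integrand at the spatial variable `y`, in the coordinates
`t = ![ν₁, ν₂, z]`. With `s = λ₁ + λ₂ + λ₃` this is the exponent for `𝔤𝔩₃`, where `y` and `λ` need
not have trace zero. -/
noncomputable def phase (y : Fin 3 → ℝ) (s : ℝ) (t : Fin 3 → ℝ) : ℝ :=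
  t 2 * ((y 0 - y 1) / 2) * (t 0 - t 1) + (y 0 + y 1) * (t 0 + t 1) / 2 + y 2 * (s - t 0 - t 1)

/-- The gradient of `phase y s`, which does not depend on `s`. -/
noncomputable def phaseGrad (y t : Fin 3 → ℝ) : Fin 3 → ℝ :=
  ![t 2 * ((y 0 - y 1) / 2) + (y 0 + y 1) / 2 - y 2,
    -(t 2 * ((y 0 - y 1) / 2)) + (y 0 + y 1) / 2 - y 2,
    (y 0 - y 1) / 2 * (t 0 - t 1)]

/-- The vector field that is integrated by parts against powers of `phase y s` to obtain Euler's
relation for the Dunkl eigenvalue equations. Its `i`-th component does not involve `t i`. -/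
def eulerField (m t : Fin 3 → ℝ) : Fin 3 → ℝ :=
  ![-(t 1 - m 2) * (m 0 - m 1 + t 2 * (m 0 + m 1 - 2 * t 1)),
    (t 0 - m 2) * (-(m 0 - m 1) + t 2 * (m 0 + m 1 - 2 * t 0)),
    -(m 0 - m 1) ^ 2 * ((t 0 - m 2) * (t 1 - m 2))]

lemma hasDerivAt_phase_update (y t : Fin 3 → ℝ) (s : ℝ) (i : Fin 3) :
    HasDerivAt (fun x ↦ phase y s (Function.update t i x)) (phaseGrad y t i) (t i) := by
  have phase_update (x : ℝ) :
      phase y s (Function.update t i x) = phase y s t + phaseGrad y t i * (x - t i) := by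
    fin_cases i <;>
      simp only [phase, phaseGrad, Function.update_apply, Fin.zero_eta, Fin.mk_one, Fin.reduceFinMk,
        Fin.reduceEq, ↓reduceIte, Matrix.cons_val] <;>
      ring
  simp only [phase_update]
  simpa using (((hasDerivAt_id (t i)).sub_const (t i)).const_mul (phaseGrad y t i)).const_add
    (phase y s t)

lemma eulerField_update (m t : Fin 3 → ℝ) (i : Fin 3) (x : ℝ) :
    eulerField m (Function.update t i x) i = eulerField m t i := by
  fin_cases i <;> simp [eulerField]

@[fun_prop]
lemma continuous_kernelPoly (m : Fin 3 → ℝ) : Continuous (kernelPoly m) := by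
  unfold kernelPoly
  fun_prop

@[fun_prop]
lemma continuous_phase (y : Fin 3 → ℝ) (s : ℝ) : Continuous (phase y s) := by
  unfold phase
  fun_prop

@[fun_prop]
lemma continuous_phaseGrad (y : Fin 3 → ℝ) : Continuous (phaseGrad y) := by
  unfold phaseGrad
  fun_prop

@[fun_prop]
lemma continuous_eulerField (m : Fin 3 → ℝ) : Continuous (eulerField m) := by
  unfold eulerField
  fun_prop

lemma sum_derivative_interlacingWeight_mul_eulerField (m t : Fin 3 → ℝ) :
    ∑ i, (interlacingWeight m i).derivative.eval (t i) * eulerField m t i =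
      3 * kernelPoly m t + ∑ τ : Perm (Fin 3) with τ.sign = -1, kernelPoly (m ∘ τ) t := by
  rw [sum_odd_perm_fin_three]
  simp only [Fin.sum_univ_three, interlacingWeight, eulerField, kernelPoly, Lagrange.nodal,
    Fin.prod_univ_three, Matrix.cons_val, Function.comp_apply, swap_apply_def, Fin.reduceEq,
    ↓reduceIte, derivative_neg, derivative_mul, derivative_sub, derivative_one, derivative_X,
    derivative_X_sq, derivative_C, eval_add, eval_neg, eval_mul, eval_sub, eval_zero, eval_one,
    eval_X, eval_C]
  ring

lemma sum_interlacingWeight_mul_eulerField_mul_phaseGrad (m y t : Fin 3 → ℝ) :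
    ∑ i, (interlacingWeight m i).eval (t i) * eulerField m t i * phaseGrad y t i =
      (phase y (∑ i, m i) t - y ⬝ᵥ m) * kernelPoly m t := by
  simp only [Fin.sum_univ_three, interlacingWeight, eulerField, kernelPoly, phase, phaseGrad,
    Lagrange.eval_nodal, Fin.prod_univ_three, dotProduct, Matrix.cons_val, eval_neg, eval_sub,
    eval_one, eval_pow, eval_X]
  ring

end DunklKernel

section KernelMoment

/-- The coefficient of degree `n` in the expansion of the integral of
`kernelPoly (l ∘ σ) * exp (phase y s)`, up to the factor `n !`. -/
noncomputable def kernelMoment (k : ℝ) (l y : Fin 3 → ℝ) (n : ℕ) (σ : Perm (Fin 3)) : ℝ :=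
  ∫ t, kernelPoly (l ∘ σ) t * phase y (∑ i, l i) t ^ n ∂interlacingMeasure k l

variable {k : ℝ} {l : Fin 3 → ℝ}

lemma integral_kernelPoly_recurrence (hk : 0 < k) (hl : StrictAnti l) (y : Fin 3 → ℝ)
    (n : ℕ) (σ : Perm (Fin 3)) :
    ∫ t, (k * (3 * kernelPoly (l ∘ σ) t +
        ∑ τ : Perm (Fin 3) with τ.sign = -1, kernelPoly (l ∘ ⇑(σ * τ)) t) *
          phase y (∑ i, l i) t ^ n +
        n * phase y (∑ i, l i) t ^ (n - 1) *
          ((phase y (∑ i, l i) t - y ⬝ᵥ (l ∘ σ)) * kernelPoly (l ∘ σ) t))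
      ∂interlacingMeasure k l = 0 := by
  set s := ∑ i, l i
  have hs : s = ∑ i, (l ∘ σ) i := (Equiv.sum_comp σ l).symm
  have integral_deriv_eq_zero (i : Fin 3) :
      ∫ t, (k * (interlacingWeight l i).derivative.eval (t i) *
          (eulerField (l ∘ σ) t i * phase y s t ^ n) +
        (interlacingWeight l i).eval (t i) *
          (eulerField (l ∘ σ) t i * (n * phase y s t ^ (n - 1) * phaseGrad y t i)))
        ∂interlacingMeasure k l = 0 := by
    refine integral_jacobiBoxMeasure_deriv_eq_zero hk (isJacobiWeight_interlacingWeight hl) i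
      (H := fun t ↦ eulerField (l ∘ σ) t i * phase y s t ^ n) (by fun_prop) (by fun_prop) fun t ↦ ?_
    simp only [eulerField_update]
    simpa using ((hasDerivAt_phase_update y t s i).pow n).const_mul (eulerField (l ∘ σ) t i)
  rw [← Finset.sum_eq_zero fun i (_ : i ∈ Finset.univ) ↦ integral_deriv_eq_zero i,
    ← integral_finsetSum _ fun i _ ↦ integrable_interlacingMeasure hk hl (by fun_prop)]
  congr with t
  simp only [Perm.coe_mul, ← Function.comp_assoc,
    ← sum_derivative_interlacingWeight_mul_eulerField, hs,
    ← sum_interlacingWeight_mul_eulerField_mul_phaseGrad, interlacingWeight_comp_perm,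
    Finset.mul_sum, Finset.sum_mul, ← Finset.sum_add_distrib]
  refine Finset.sum_congr rfl fun i _ ↦ ?_
  ring

lemma kernelMoment_recurrence (hk : 0 < k) (hl : StrictAnti l) (y : Fin 3 → ℝ) (n : ℕ)
    (σ : Perm (Fin 3)) :
    (n + 3 * k) * kernelMoment k l y n σ +
        k * ∑ τ : Perm (Fin 3) with τ.sign = -1, kernelMoment k l y n (σ * τ) =
      n * (y ⬝ᵥ (l ∘ σ)) * kernelMoment k l y (n - 1) σ := by
  have integrable {f : (Fin 3 → ℝ) → ℝ} (hf : Continuous f) :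
      Integrable f (interlacingMeasure k l) :=
    integrable_interlacingMeasure hk hl hf
  have nat_mul_pow (x : ℝ) : n * x ^ n = n * (x ^ (n - 1) * x) := by
    obtain rfl | hn := n.eq_zero_or_pos
    · simp
    · rw [pow_sub_one_mul hn.ne']
  rw [← sub_eq_zero, ← integral_kernelPoly_recurrence hk hl y n σ]
  simp only [kernelMoment]
  rw [← integral_finsetSum _ fun τ _ ↦ integrable (by fun_prop),
    ← integral_const_mul, ← integral_const_mul, ← integral_const_mul,
    ← integral_add (integrable (by fun_prop)) (integrable (by fun_prop)),
    ← integral_sub (integrable (by fun_prop)) (integrable (by fun_prop))]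
  congr with t
  rw [← Finset.sum_mul]
  linear_combination kernelPoly (l ∘ σ) t * nat_mul_pow (phase y (∑ i, l i) t)

lemma kernelMoment_comp_mul_recurrence (hk : 0 < k) (hl : StrictAnti l) (y : Fin 3 → ℝ)
    (ρ : Perm (Fin 3)) (n : ℕ) (σ : Perm (Fin 3)) :
    (n + 3 * k) * kernelMoment k l (y ∘ ρ) n (σ * ρ) +
        k * ∑ τ : Perm (Fin 3) with τ.sign = -1, kernelMoment k l (y ∘ ρ) n (σ * τ * ρ) =
      n * (y ⬝ᵥ (l ∘ σ)) * kernelMoment k l (y ∘ ρ) (n - 1) (σ * ρ) := by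
  have pairing_eq : (y ∘ ρ) ⬝ᵥ (l ∘ ⇑(σ * ρ)) = y ⬝ᵥ (l ∘ σ) :=
    comp_equiv_dotProduct_comp_equiv y (l ∘ σ) ρ
  have sum_comm : ∑ τ with τ.sign = -1, kernelMoment k l (y ∘ ρ) n (σ * (τ * ρ)) =
      ∑ τ with τ.sign = -1, kernelMoment k l (y ∘ ρ) n (σ * (ρ * τ)) := by
    rw [sum_sign_eq_mul_left (fun τ ↦ kernelMoment k l (y ∘ ρ) n (σ * τ)),
      sum_sign_eq_mul_right (fun τ ↦ kernelMoment k l (y ∘ ρ) n (σ * τ))]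
  rw [← pairing_eq, ← kernelMoment_recurrence hk hl]
  simp only [mul_assoc σ, sum_comm]

lemma kernelMoment_comp_mul (hk : 0 < k) (hl : StrictAnti l) (y : Fin 3 → ℝ)
    (ρ : Perm (Fin 3)) (n : ℕ) (σ : Perm (Fin 3)) :
    kernelMoment k l (y ∘ ρ) n (σ * ρ) = ρ.sign * kernelMoment k l y n σ := by
  induction n generalizing σ with
  | zero =>
    have moment_zero : kernelMoment k l (y ∘ ρ) 0 = kernelMoment k l y 0 := by
      simp [funext_iff, kernelMoment]
    rw [moment_zero]
    refine apply_mul_eq_sign_mul_of_sum_odd (fun σ ↦ mul_left_cancel₀ hk.ne' ?_) σ ρ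
    linear_combination kernelMoment_recurrence hk hl y 0 σ
  | succ n ih =>
    have dominant : |k| * ({τ : Perm (Fin 3) | τ.sign = -1} : Finset _).card <
        (n + 1 : ℕ) + 3 * k := by
      have card_odd : ({τ : Perm (Fin 3) | τ.sign = -1} : Finset _).card = 3 := by decide
      rw [card_odd, abs_of_pos hk, mul_comm]
      exact lt_add_of_pos_left _ (by positivity)
    refine sub_eq_zero.1 (congrFun (eq_zero_of_forall_mul_add_sum_eq_zero dominant
      (D := fun σ ↦ kernelMoment k l (y ∘ ρ) (n + 1) (σ * ρ) -
        ρ.sign * kernelMoment k l y (n + 1) σ) fun σ ↦ ?_) σ)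
    have rec_rotated := kernelMoment_comp_mul_recurrence hk hl y ρ (n + 1) σ
    have rec_original := kernelMoment_recurrence hk hl y (n + 1) σ
    rw [Nat.add_sub_cancel] at rec_rotated rec_original
    rw [ih] at rec_rotated
    rw [Finset.sum_sub_distrib, ← Finset.mul_sum]
    linear_combination rec_rotated - ρ.sign * rec_original

lemma integral_kernelPoly_comp_mul_exp_phase_comp (hk : 0 < k) (hl : StrictAnti l)
    (y : Fin 3 → ℝ) (ρ : Perm (Fin 3)) :
    ∫ t, kernelPoly (l ∘ ρ) t * exp (phase (y ∘ ρ) (∑ i, l i) t) ∂interlacingMeasure k l =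
      ρ.sign * ∫ t, kernelPoly l t * exp (phase y (∑ i, l i) t) ∂interlacingMeasure k l := by
  have hasSum_moments (y : Fin 3 → ℝ) (σ : Perm (Fin 3)) :
      HasSum (fun n : ℕ ↦ kernelMoment k l y n σ / n.factorial)
        (∫ t, kernelPoly (l ∘ σ) t * exp (phase y (∑ i, l i) t) ∂interlacingMeasure k l) :=
    hasSum_integral_mul_pow_div_factorial (by fun_prop) (by fun_prop)
      (integrable_interlacingMeasure hk hl (by fun_prop))
  refine (hasSum_moments (y ∘ ρ) ρ).unique ?_
  have moments_eq (n : ℕ) : kernelMoment k l (y ∘ ρ) n ρ = ρ.sign * kernelMoment k l y n 1 := by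
    simpa only [one_mul] using kernelMoment_comp_mul hk hl y ρ n 1
  simp only [moments_eq, mul_div_assoc]
  exact (hasSum_moments y 1).mul_left (ρ.sign : ℝ)

end KernelMoment

section Rotation

/-- The double integral in the formula for `EkA2` and in its rotated form, according to the
ordering `m` of the spectral parameters `l i` that enters the polynomial factor. -/
noncomputable def interlacingIntegral (k : ℝ) (l y m : Fin 3 → ℝ) : ℝ :=
  ∫ n2 in l 2..l 1, ∫ n1 in l 1..l 0,
    ((n1 - m 1) * (m 0 - n2) * Erk1 k ((y 0 - y 1) / 2) (n1 - n2)
      + (m 0 - n1) * (m 1 - n2) * Erk1 k (-(y 0 - y 1) / 2) (n1 - n2))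
    * ((n1 - m 2) * (n2 - m 2)) * exp ((y 0 + y 1 - 2 * y 2) * (n1 + n2) / 2)
    * Wk k (l 0) (l 1) (l 2) n1 n2

variable {k : ℝ} {l : Fin 3 → ℝ}

lemma interlacingIntegral_eq (hk : 0 < k) (hl : StrictAnti l) (y m : Fin 3 → ℝ) (s : ℝ) :
    exp (y 2 * s) * interlacingIntegral k l y m = Gamma (k + 1 / 2) / (√π * Gamma k) *
      ∫ t, kernelPoly m t * exp (phase y s t) ∂interlacingMeasure k l := by
  rw [integral_interlacingMeasure hk hl (by fun_prop), interlacingIntegral]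
  simp only [← intervalIntegral.integral_const_mul]
  refine intervalIntegral.integral_congr fun n2 _ ↦ intervalIntegral.integral_congr fun n1 _ ↦ ?_
  have exp_phase (z : ℝ) : exp (phase y s ![n1, n2, z]) = exp (y 2 * s) *
      exp ((y 0 + y 1 - 2 * y 2) * (n1 + n2) / 2) * exp (z * ((y 0 - y 1) / 2) * (n1 - n2)) := by
    rw [← exp_add, ← exp_add]
    congr 1
    simp only [phase, Matrix.cons_val]
    ring
  have integrand_eq (z : ℝ) :
      kernelPoly m ![n1, n2, z] * exp (phase y s ![n1, n2, z]) =
        exp (y 2 * s) * exp ((y 0 + y 1 - 2 * y 2) * (n1 + n2) / 2) *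
          ((n1 - m 2) * (n2 - m 2)) *
          (((n1 - m 1) * (m 0 - n2) * (1 + z) + (m 0 - n1) * (m 1 - n2) * (1 - z)) *
            exp (z * ((y 0 - y 1) / 2) * (n1 - n2))) := by
    simp only [kernelPoly, exp_phase, Matrix.cons_val]
    ring
  simp only [integrand_eq, integral_const_mul, neg_div, mul_Erk1_add_mul_Erk1_neg hk]
  ring

lemma exp_mul_interlacingIntegral_comp (hk : 0 < k) (hl : StrictAnti l) (y : Fin 3 → ℝ)
    (ρ : Perm (Fin 3)) :
    exp (y (ρ 2) * ∑ i, l i) * interlacingIntegral k l (y ∘ ρ) (l ∘ ρ) =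
      ρ.sign * (exp (y 2 * ∑ i, l i) * interlacingIntegral k l y l) := by
  rw [interlacingIntegral_eq hk hl, mul_left_comm,
    ← integral_kernelPoly_comp_mul_exp_phase_comp hk hl, ← interlacingIntegral_eq hk hl]
  rfl

lemma exp_mul_interlacingIntegral_rotate (hk : 0 < k) (hl : StrictAnti l) (y : Fin 3 → ℝ) :
    exp ((y 0 - y 2) * ∑ i, l i) * interlacingIntegral k l ![y 1, y 2, y 0] ![l 1, l 2, l 0] =
      interlacingIntegral k l y l := by
  have comp_finRotate (v : Fin 3 → ℝ) : v ∘ finRotate 3 = ![v 1, v 2, v 0] := by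
    ext i
    fin_cases i <;> rfl
  have rotated := exp_mul_interlacingIntegral_comp hk hl y (finRotate 3)
  rw [comp_finRotate, comp_finRotate, sign_finRotate, show finRotate 3 2 = 0 from rfl] at rotated
  rw [sub_mul, exp_sub, div_mul_eq_mul_div, rotated]
  simp

end Rotation

theorem EkA2_eq_beta_formula_general (k : ℝ) (hk : 0 < k) (l1 l2 l3 x1 x2 x3 : ℝ)
    (hl12 : l2 < l1) (hl23 : l3 < l2) :
    EkA2 k x1 x2 x3 l1 l2 l3
    = (3 * Real.Gamma (3 * k) / (Vlam l1 l2 l3 ^ (2 * k) * Real.Gamma k ^ 2)) *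
      (exp ((x1 - x3) * (l1 + l2 + l3)) * ∫ n2 in l3..l2, ∫ n1 in l2..l1,
        ((n1 - l3) * (l2 - n2) * Erk1 k ((x2 - x3) / 2) (n1 - n2)
          + (n1 - l2) * (n2 - l3) * Erk1 k (-(x2 - x3) / 2) (n1 - n2))
        * ((l1 - n1) * (l1 - n2)) * Real.exp ((x2 + x3 - 2 * x1) * (n1 + n2) / 2)
        * Wk k l1 l2 l3 n1 n2) := by
  have hl : StrictAnti ![l1, l2, l3] :=
    Fin.strictAnti_iff_succ_lt.2 (Fin.forall_fin_two.2 ⟨hl12, hl23⟩)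
  have sum_eq : ∑ i, ![l1, l2, l3] i = l1 + l2 + l3 := by simp [Fin.sum_univ_three]
  have EkA2_eq : EkA2 k x1 x2 x3 l1 l2 l3 =
      3 * Gamma (3 * k) / (Vlam l1 l2 l3 ^ (2 * k) * Gamma k ^ 2) *
        interlacingIntegral k ![l1, l2, l3] ![x1, x2, x3] ![l1, l2, l3] := rfl
  rw [EkA2_eq, ← exp_mul_interlacingIntegral_rotate hk hl, sum_eq]
  refine congrArg _ (congrArg _ (intervalIntegral.integral_congr fun n2 _ ↦
    intervalIntegral.integral_congr fun n1 _ ↦ ?_))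
  simp only [Matrix.cons_val]
  ring

/-- Theorem 3.1, formula (Amri2). -/
theorem EkA2_eq_beta_formula (k : ℝ) (hk : 0 < k) (l1 l2 l3 x1 x2 x3 : ℝ)
    (hl : l1 + l2 + l3 = 0) (hl12 : l2 < l1) (hl23 : l3 < l2)
    (hx : x1 + x2 + x3 = 0) :
    EkA2 k x1 x2 x3 l1 l2 l3
    = (3 * Real.Gamma (3 * k) / (Vlam l1 l2 l3 ^ (2 * k) * Real.Gamma k ^ 2)) *
      ∫ n2 in l3..l2, ∫ n1 in l2..l1,
        ((n1 - l3) * (l2 - n2) * Erk1 k ((x2 - x3) / 2) (n1 - n2)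
          + (n1 - l2) * (n2 - l3) * Erk1 k (-(x2 - x3) / 2) (n1 - n2))
        * ((l1 - n1) * (l1 - n2)) * Real.exp ((x2 + x3 - 2 * x1) * (n1 + n2) / 2)
        * Wk k l1 l2 l3 n1 n2 := by
  simpa [hl] using EkA2_eq_beta_formula_general k hk l1 l2 l3 x1 x2 x3 hl12 hl23
end

section
/- (Theorem 4.1(i).) Uniformly over all λ ∈ C⁺ and all X ∈ a with x1 ≥ x2 ≥ x3, one has E_k(X,λ) ≍ e^{⟨λ,X⟩} / [ (1+α_λ α_X)^k (1+β_λ β_X)^k (1+γ_λ γ_X)^k ]. -/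
open Real MeasureTheory

/-!
After an affine change of variables the rank-one kernel is an exponential times the Laplace
transform of a Beta density, which is comparable to `(1 + s) ^ (-κ)`. The substitution
`ν₁ = λ₁ - α_λ t`, `ν₂ = λ₂ - β_λ w` maps the domain of integration of `EkA2` to the unit square
and extracts the factor `exp ⟨λ, X⟩`. What remains is a Beta density in `t` damped at scale
`1 / (1 + α_λ γ_X)`, times a Beta density in `w` damped at scale `1 / (1 + β_λ β_X)`, times an
amplitude governed by `min (α_λ + β_λ w) (1 / α_X)`. Since the integrand concentrates at these
scales, replacing `w` by `1 / (1 + β_λ β_X)` in the amplitude costs only polynomial weights that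
the exponential damping absorbs. The integrand is thus sandwiched between products of functions of
one variable, and the double integral is comparable to an explicit rational expression raised to
the power `k`.
-/

open Set

section RealPowers

lemma rpow_le_two_rpow_abs {x : ℝ} (hx : 1 / 2 ≤ x) (hx1 : x ≤ 1) (e : ℝ) : x ^ e ≤ 2 ^ |e| := by
  have hx0 : 0 < x := by linarith
  calc x ^ e ≤ x ^ (-|e|) := rpow_le_rpow_of_exponent_ge hx0 hx1 (neg_abs_le e)
    _ = (x⁻¹) ^ |e| := by rw [rpow_neg hx0.le, inv_rpow hx0.le]
    _ ≤ 2 ^ |e| := by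
      gcongr
      exact inv_le_of_inv_le₀ two_pos (by linarith)

lemma one_half_rpow_abs_le_rpow {x : ℝ} (hx : 1 / 2 ≤ x) (hx1 : x ≤ 1) (e : ℝ) :
    (1 / 2) ^ |e| ≤ x ^ e :=
  calc (1 / 2) ^ |e| ≤ x ^ |e| := by gcongr
    _ ≤ x ^ e := rpow_le_rpow_of_exponent_ge (by linarith) hx1 (le_abs_self e)

lemma rpow_le_mul_exp_div {κ c y : ℝ} (hκ : 0 < κ) (hc : 0 < c) (hy : 0 ≤ y) :
    y ^ κ ≤ (κ * c) ^ κ * exp (y / c) := by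
  have hbase : y ≤ κ * c * exp (y / c / κ) :=
    calc y = κ * c * (y / c / κ) := by field_simp
      _ ≤ κ * c * exp (y / c / κ) := by
        gcongr
        linarith [add_one_le_exp (y / c / κ)]
  calc y ^ κ ≤ (κ * c * exp (y / c / κ)) ^ κ := by gcongr
    _ = (κ * c) ^ κ * exp (y / c) := by
      rw [mul_rpow (by positivity) (exp_pos _).le, ← exp_mul, div_mul_cancel₀ _ hκ.ne']

lemma exp_neg_half_le_mul_rpow_neg {κ s : ℝ} (hκ : 0 < κ) (hs : 0 ≤ s) :
    exp (-(s / 2)) ≤ (κ * 2) ^ κ * exp (1 / 2) * (1 + s) ^ (-κ) := by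
  rw [rpow_neg (by positivity), ← div_eq_mul_inv, le_div_iff₀ (by positivity)]
  calc exp (-(s / 2)) * (1 + s) ^ κ
      ≤ exp (-(s / 2)) * ((κ * 2) ^ κ * exp ((1 + s) / 2)) := by
        gcongr
        exact rpow_le_mul_exp_div hκ two_pos (by positivity)
    _ = (κ * 2) ^ κ * (exp (-(s / 2)) * exp ((1 + s) / 2)) := by ring
    _ = (κ * 2) ^ κ * exp (1 / 2) := by
        rw [← exp_add]
        ring_nf

lemma one_add_mul_rpow_neg_le {θ s κ : ℝ} (hθ : 0 < θ) (hθ1 : θ ≤ 1) (hs : 0 ≤ s) (hκ : 0 ≤ κ) :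
    (1 + θ * s) ^ (-κ) ≤ θ ^ (-κ) * (1 + s) ^ (-κ) := by
  rw [← mul_rpow hθ.le (by positivity)]
  exact rpow_le_rpow_of_nonpos (by positivity) (by linarith) (by linarith)

lemma le_one_add_mul_rpow_neg {θ s κ : ℝ} (hθ : 1 ≤ θ) (hs : 0 ≤ s) (hκ : 0 ≤ κ) :
    θ ^ (-κ) * (1 + s) ^ (-κ) ≤ (1 + θ * s) ^ (-κ) := by
  rw [← mul_rpow (by linarith) (by positivity)]
  exact rpow_le_rpow_of_nonpos (by positivity) (by linarith) (by linarith)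

lemma one_add_rpow_neg_le_mul {u v κ : ℝ} (hu : 0 ≤ u) (hv : 0 ≤ v) (hκ : 0 ≤ κ) :
    (1 + v) ^ (-κ) ≤ (1 + u) ^ κ * (1 + (u + v)) ^ (-κ) := by
  rw [rpow_neg (by positivity), rpow_neg (by positivity), ← div_eq_mul_inv,
    inv_le_comm₀ (by positivity) (by positivity), inv_div, div_le_iff₀ (by positivity),
    ← mul_rpow (by positivity) (by positivity)]
  gcongr
  linarith [mul_nonneg hv hu]

lemma rpow_sub_one_mul_self {x : ℝ} (hx : x ≠ 0) (e : ℝ) : x ^ (e - 1) * x = x ^ e := by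
  rw [rpow_sub_one hx, div_mul_cancel₀ _ hx]

lemma div_mul_mul_rpow {c x y z k : ℝ} (hc : 0 ≤ c) (hx : 0 ≤ x) (hy : 0 ≤ y) (hz : 0 ≤ z) :
    (c / (x * y * z)) ^ k = c ^ k / (x ^ k * y ^ k * z ^ k) := by
  rw [div_rpow hc (by positivity), mul_rpow (by positivity) hz, mul_rpow hx hy]

end RealPowers

section BetaLaplace

/-- The integrand of `betaLaplace`: the unnormalised Beta density with shape parameters `κ`, `η`,
damped by `exp (-s * u)`. -/
noncomputable def betaLaplaceKernel (κ η s u : ℝ) : ℝ :=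
  exp (-(s * u)) * u ^ (κ - 1) * (1 - u) ^ (η - 1)

/-- The Laplace transform at `s` of the unnormalised Beta density with shape parameters `κ`, `η`;
for positive parameters it is `B(κ, η) ₁F₁(κ; κ + η; -s)`. -/
noncomputable def betaLaplace (κ η s : ℝ) : ℝ :=
  ∫ u in Ioo (0 : ℝ) 1, betaLaplaceKernel κ η s u

variable {κ η s u : ℝ}

lemma betaLaplaceKernel_pos (hu : u ∈ Ioo (0 : ℝ) 1) : 0 < betaLaplaceKernel κ η s u := by
  have hu0 : 0 < u := hu.1
  have hu1 : 0 < 1 - u := sub_pos.2 hu.2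
  unfold betaLaplaceKernel
  positivity

@[fun_prop]
lemma measurable_betaLaplaceKernel : Measurable (betaLaplaceKernel κ η s) := by
  unfold betaLaplaceKernel
  fun_prop

@[fun_prop]
lemma measurable_betaLaplace : Measurable (betaLaplace κ η) := by
  refine StronglyMeasurable.measurable (StronglyMeasurable.integral_prod_right
    (f := betaLaplaceKernel κ η) (Measurable.stronglyMeasurable ?_))
  unfold betaLaplaceKernel Function.uncurry
  fun_prop

lemma betaLaplace_nonneg : 0 ≤ betaLaplace κ η s :=
  setIntegral_nonneg measurableSet_Ioo fun _ hu => (betaLaplaceKernel_pos hu).le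

lemma integrableOn_rpow_mul_exp_neg_mul (hκ : 0 < κ) {c : ℝ} (hc : 0 < c) :
    IntegrableOn (fun u : ℝ => u ^ (κ - 1) * exp (-(c * u))) (Ioi 0) := by
  simpa using integrableOn_rpow_mul_exp_neg_mul_rpow (by linarith : -1 < κ - 1) one_pos hc

lemma integrableOn_one_sub_rpow (hη : 0 < η) :
    IntegrableOn (fun u : ℝ => (1 - u) ^ (η - 1)) (Ioo 0 1) := by
  have h := intervalIntegral.intervalIntegrable_rpow' (a := 0) (b := 1)
    (by linarith : -1 < η - 1)
  rw [← intervalIntegrable_iff_integrableOn_Ioo_of_le zero_le_one]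
  simpa using (h.comp_sub_left 1).symm

lemma integral_one_sub_rpow (hη : 0 < η) :
    ∫ u in Ioo (0 : ℝ) 1, (1 - u) ^ (η - 1) = 1 / η := by
  rw [← integral_Ioc_eq_integral_Ioo, ← intervalIntegral.integral_of_le zero_le_one,
    intervalIntegral.integral_comp_sub_left (fun x => x ^ (η - 1)) 1,
    integral_rpow (Or.inl (by linarith))]
  simp [zero_rpow hη.ne']

/-- A majorant of `betaLaplaceKernel` separating the two endpoint singularities: near `0` the factor
`exp (-s * u)` is kept, while away from `0` it is uniformly exponentially small. -/
noncomputable def betaLaplaceMajorant (κ η s u : ℝ) : ℝ :=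
  2 ^ |η - 1| * exp 1 * (u ^ (κ - 1) * exp (-((1 + s) * u)))
    + 2 ^ |κ - 1| * exp (-(s / 2)) * (1 - u) ^ (η - 1)

lemma betaLaplaceKernel_le (hs : 0 ≤ s) (hu : u ∈ Ioo (0 : ℝ) 1) :
    betaLaplaceKernel κ η s u ≤ betaLaplaceMajorant κ η s u := by
  obtain ⟨hu0, hu1⟩ := hu
  unfold betaLaplaceKernel betaLaplaceMajorant
  rcases le_total u (1 / 2) with h | h
  · refine le_add_of_le_of_nonneg ?_ (by positivity)
    have hexp : exp (-(s * u)) ≤ exp 1 * exp (-((1 + s) * u)) := by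
      rw [← exp_add]
      exact exp_le_exp.2 (by linarith)
    calc _ ≤ exp 1 * exp (-((1 + s) * u)) * u ^ (κ - 1) * 2 ^ |η - 1| := by
          gcongr
          exact rpow_le_two_rpow_abs (by linarith) (by linarith) _
      _ = _ := by ring
  · refine le_add_of_nonneg_of_le (by positivity) ?_
    calc _ ≤ exp (-(s / 2)) * 2 ^ |κ - 1| * (1 - u) ^ (η - 1) := by
          gcongr
          · nlinarith
          · exact rpow_le_two_rpow_abs h hu1.le _
      _ = _ := by ring

lemma integrableOn_rpow_mul_exp_neg_mul_Ioo (hκ : 0 < κ) {c : ℝ} (hc : 0 < c) :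
    IntegrableOn (fun u : ℝ => u ^ (κ - 1) * exp (-(c * u))) (Ioo 0 1) :=
  (integrableOn_rpow_mul_exp_neg_mul hκ hc).mono_set Ioo_subset_Ioi_self

lemma integrableOn_betaLaplaceMajorant (hκ : 0 < κ) (hη : 0 < η) (hs : 0 ≤ s) :
    IntegrableOn (betaLaplaceMajorant κ η s) (Ioo 0 1) :=
  ((integrableOn_rpow_mul_exp_neg_mul_Ioo hκ (by positivity)).const_mul _).add
    ((integrableOn_one_sub_rpow hη).const_mul _)

lemma integrableOn_betaLaplaceKernel (hκ : 0 < κ) (hη : 0 < η) (hs : 0 ≤ s) :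
    IntegrableOn (betaLaplaceKernel κ η s) (Ioo 0 1) := by
  refine Integrable.mono' (integrableOn_betaLaplaceMajorant hκ hη hs)
    measurable_betaLaplaceKernel.aestronglyMeasurable
    (ae_restrict_of_forall_mem measurableSet_Ioo fun u hu => ?_)
  rw [norm_of_nonneg (betaLaplaceKernel_pos hu).le]
  exact betaLaplaceKernel_le hs hu

lemma setIntegral_rpow_mul_exp_neg_mul_le (hκ : 0 < κ) {c : ℝ} (hc : 0 < c) :
    ∫ u in Ioo (0 : ℝ) 1, u ^ (κ - 1) * exp (-(c * u)) ≤ Gamma κ * c ^ (-κ) := by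
  calc _ ≤ ∫ u in Ioi (0 : ℝ), u ^ (κ - 1) * exp (-(c * u)) := by
        refine setIntegral_mono_set (integrableOn_rpow_mul_exp_neg_mul hκ hc)
          (ae_restrict_of_forall_mem measurableSet_Ioi fun u (hu : 0 < u) => ?_)
          Ioo_subset_Ioi_self.eventuallyLE
        simp only [Pi.zero_apply]
        positivity
    _ = Gamma κ * c ^ (-κ) := by
        rw [integral_rpow_mul_exp_neg_mul_Ioi hκ hc, one_div, inv_rpow hc.le, ← rpow_neg hc.le,
          mul_comm]

lemma exists_betaLaplace_le (hκ : 0 < κ) (hη : 0 < η) :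
    ∃ M, 0 < M ∧ ∀ s, 0 ≤ s → betaLaplace κ η s ≤ M * (1 + s) ^ (-κ) := by
  refine ⟨2 ^ |η - 1| * exp 1 * Gamma κ + 2 ^ |κ - 1| * ((κ * 2) ^ κ * exp (1 / 2)) * (1 / η),
    by positivity, fun s hs => ?_⟩
  calc betaLaplace κ η s ≤ ∫ u in Ioo (0 : ℝ) 1, betaLaplaceMajorant κ η s u :=
        setIntegral_mono_on (integrableOn_betaLaplaceKernel hκ hη hs)
          (integrableOn_betaLaplaceMajorant hκ hη hs) measurableSet_Ioo
          fun u hu => betaLaplaceKernel_le hs hu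
    _ = 2 ^ |η - 1| * exp 1 * (∫ u in Ioo (0 : ℝ) 1, u ^ (κ - 1) * exp (-((1 + s) * u)))
          + 2 ^ |κ - 1| * exp (-(s / 2)) * (1 / η) := by
        unfold betaLaplaceMajorant
        rw [integral_add
            ((integrableOn_rpow_mul_exp_neg_mul_Ioo hκ (by positivity)).const_mul _)
            ((integrableOn_one_sub_rpow hη).const_mul _),
          integral_const_mul, integral_const_mul, integral_one_sub_rpow hη]
    _ ≤ 2 ^ |η - 1| * exp 1 * (Gamma κ * (1 + s) ^ (-κ))
          + 2 ^ |κ - 1| * ((κ * 2) ^ κ * exp (1 / 2) * (1 + s) ^ (-κ)) * (1 / η) := by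
        gcongr
        · exact setIntegral_rpow_mul_exp_neg_mul_le hκ (by positivity)
        · exact exp_neg_half_le_mul_rpow_neg hκ hs
    _ = _ := by ring

lemma le_betaLaplaceKernel (hs : 0 ≤ s) (hu : u ∈ Ioo 0 (1 / (2 * (1 + s)))) :
    exp (-1) * (1 / 2) ^ |η - 1| * u ^ (κ - 1) ≤ betaLaplaceKernel κ η s u := by
  obtain ⟨hu0, hu1⟩ := hu
  have hu2 : u * (2 * (1 + s)) < 1 := (lt_div_iff₀ (by positivity)).1 hu1
  have hus : 0 ≤ u * s := by positivity
  calc exp (-1) * (1 / 2) ^ |η - 1| * u ^ (κ - 1)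
      ≤ exp (-(s * u)) * (1 - u) ^ (η - 1) * u ^ (κ - 1) := by
        gcongr
        · linarith
        · exact one_half_rpow_abs_le_rpow (by linarith) (by linarith) _
    _ = betaLaplaceKernel κ η s u := by
        unfold betaLaplaceKernel
        ring

lemma exists_le_betaLaplace (hκ : 0 < κ) (hη : 0 < η) :
    ∃ m, 0 < m ∧ ∀ s, 0 ≤ s → m * (1 + s) ^ (-κ) ≤ betaLaplace κ η s := by
  refine ⟨exp (-1) * (1 / 2) ^ |η - 1| * (2 ^ (-κ) / κ), by positivity, fun s hs => ?_⟩
  have hδ : 0 ≤ 1 / (2 * (1 + s)) := by positivity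
  have hδ1 : 1 / (2 * (1 + s)) ≤ 1 := by
    rw [div_le_one (by positivity)]
    linarith
  have hint := integrableOn_betaLaplaceKernel hκ hη hs
  have hrpow : IntegrableOn (fun u : ℝ => u ^ (κ - 1)) (Ioo 0 (1 / (2 * (1 + s)))) :=
    (intervalIntegrable_iff_integrableOn_Ioo_of_le hδ).1
      (intervalIntegral.intervalIntegrable_rpow' (by linarith))
  have hpow : ∫ u in Ioo 0 (1 / (2 * (1 + s))), u ^ (κ - 1) = 2 ^ (-κ) / κ * (1 + s) ^ (-κ) := by
    rw [← integral_Ioc_eq_integral_Ioo, ← intervalIntegral.integral_of_le hδ,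
      integral_rpow (Or.inl (by linarith)), sub_add_cancel, zero_rpow hκ.ne', sub_zero, one_div,
      inv_rpow (by positivity), ← rpow_neg (by positivity),
      mul_rpow (by positivity) (by positivity)]
    ring
  calc _ = ∫ u in Ioo 0 (1 / (2 * (1 + s))), exp (-1) * (1 / 2) ^ |η - 1| * u ^ (κ - 1) := by
        rw [integral_const_mul, hpow]
        ring
    _ ≤ ∫ u in Ioo 0 (1 / (2 * (1 + s))), betaLaplaceKernel κ η s u :=
        setIntegral_mono_on (hrpow.const_mul _) (hint.mono_set (Ioo_subset_Ioo_right hδ1))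
          measurableSet_Ioo fun u hu => le_betaLaplaceKernel hs hu
    _ ≤ betaLaplace κ η s :=
        setIntegral_mono_set hint
          (ae_restrict_of_forall_mem measurableSet_Ioo fun u hu => (betaLaplaceKernel_pos hu).le)
          (Ioo_subset_Ioo_right hδ1).eventuallyLE

end BetaLaplace

section BetaLaplaceWeights

variable {κ η s u k : ℝ}

lemma betaLaplaceKernel_mul_rpow_le (hk : 0 < k) (hs : 0 ≤ s) (hu : u ∈ Ioo (0 : ℝ) 1) :
    betaLaplaceKernel κ η s u * (1 + (1 + s) * u) ^ k ≤
      (k * 2) ^ k * exp 1 * betaLaplaceKernel κ η (1 / 2 * s) u := by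
  obtain ⟨hu0, hu1⟩ := hu
  have hweight : (1 + (1 + s) * u) ^ k ≤ (k * 2) ^ k * exp (1 + s * u / 2) :=
    calc (1 + (1 + s) * u) ^ k ≤ (2 + s * u) ^ k := by
          gcongr ?_ ^ k
          linarith
      _ ≤ (k * 2) ^ k * exp ((2 + s * u) / 2) := rpow_le_mul_exp_div hk two_pos (by positivity)
      _ = (k * 2) ^ k * exp (1 + s * u / 2) := by ring_nf
  calc _ ≤ betaLaplaceKernel κ η s u * ((k * 2) ^ k * exp (1 + s * u / 2)) :=
        mul_le_mul_of_nonneg_left hweight (betaLaplaceKernel_pos ⟨hu0, hu1⟩).le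
    _ = (k * 2) ^ k * (exp (-(s * u)) * exp (1 + s * u / 2)) * u ^ (κ - 1) * (1 - u) ^ (η - 1) := by
        unfold betaLaplaceKernel
        ring
    _ = _ := by
        rw [← exp_add, show -(s * u) + (1 + s * u / 2) = 1 + -(1 / 2 * s * u) by ring, exp_add]
        unfold betaLaplaceKernel
        ring

lemma le_betaLaplaceKernel_mul_rpow (hk : 0 ≤ k) (hs : 0 ≤ s) (hu : u ∈ Ioo (0 : ℝ) 1) :
    exp (-k) * (1 + s) ^ k * betaLaplaceKernel (κ + k) η ((1 + k) * s) u ≤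
      betaLaplaceKernel κ η s u * ((1 + s) * u * exp (-((1 + s) * u))) ^ k := by
  obtain ⟨hu0, hu1⟩ := hu
  have hexp : exp (-k) * exp (-((1 + k) * s * u)) ≤ exp (-(s * u)) * exp (-((1 + s) * u) * k) := by
    rw [← exp_add, ← exp_add]
    exact exp_le_exp.2 (by nlinarith)
  unfold betaLaplaceKernel
  rw [mul_rpow (by positivity) (exp_pos _).le, mul_rpow (by positivity) hu0.le, ← exp_mul,
    add_sub_right_comm, rpow_add hu0]
  calc _ = exp (-k) * exp (-((1 + k) * s * u)) *
        ((1 + s) ^ k * u ^ (κ - 1) * u ^ k * (1 - u) ^ (η - 1)) := by ring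
    _ ≤ exp (-(s * u)) * exp (-((1 + s) * u) * k) *
        ((1 + s) ^ k * u ^ (κ - 1) * u ^ k * (1 - u) ^ (η - 1)) := by gcongr
    _ = _ := by ring

lemma exists_betaLaplace_half_mul_le (hκ : 0 < κ) (hη : 0 < η) :
    ∃ M, 0 < M ∧ ∀ s, 0 ≤ s → betaLaplace κ η (1 / 2 * s) ≤ M * (1 + s) ^ (-κ) := by
  obtain ⟨M, hM, hM_le⟩ := exists_betaLaplace_le hκ hη
  refine ⟨M * (1 / 2) ^ (-κ), by positivity, fun s hs => ?_⟩
  calc _ ≤ M * (1 + 1 / 2 * s) ^ (-κ) := hM_le _ (by positivity)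
    _ ≤ M * ((1 / 2) ^ (-κ) * (1 + s) ^ (-κ)) := by
        gcongr
        exact one_add_mul_rpow_neg_le (by norm_num) (by norm_num) hs hκ.le
    _ = _ := by ring

lemma exists_le_rpow_mul_betaLaplace (hκ : 0 < κ) (hη : 0 < η) (hk : 0 ≤ k) :
    ∃ m, 0 < m ∧ ∀ s, 0 ≤ s →
      m * (1 + s) ^ (-κ) ≤ (1 + s) ^ k * betaLaplace (κ + k) η ((1 + k) * s) := by
  obtain ⟨m, hm, hm_le⟩ := exists_le_betaLaplace (by positivity : 0 < κ + k) hη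
  refine ⟨m * (1 + k) ^ (-(κ + k)), by positivity, fun s hs => ?_⟩
  have hsplit : (1 + s) ^ (-κ) = (1 + s) ^ k * (1 + s) ^ (-(κ + k)) := by
    rw [← rpow_add (by positivity)]
    ring_nf
  calc _ = (1 + s) ^ k * (m * ((1 + k) ^ (-(κ + k)) * (1 + s) ^ (-(κ + k)))) := by
        rw [hsplit]
        ring
    _ ≤ (1 + s) ^ k * (m * (1 + (1 + k) * s) ^ (-(κ + k))) := by
        gcongr
        exact le_one_add_mul_rpow_neg (by linarith) hs (by positivity)
    _ ≤ _ := by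
        gcongr
        exact hm_le _ (by positivity)

lemma betaLaplaceKernel_mul_one_sub_rpow {ρ : ℝ} (hu : u ∈ Ioo (0 : ℝ) 1) :
    betaLaplaceKernel κ η s u * (1 - u) ^ ρ = betaLaplaceKernel κ (η + ρ) s u := by
  unfold betaLaplaceKernel
  rw [add_sub_right_comm, rpow_add (sub_pos.2 hu.2), mul_assoc]

lemma betaLaplace_neg : betaLaplace κ η (-s) = exp s * betaLaplace η κ s := by
  have hreflect (f : ℝ → ℝ) : ∫ u in Ioo (0 : ℝ) 1, f u = ∫ u in Ioo (0 : ℝ) 1, f (1 - u) := by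
    simp only [← integral_Ioc_eq_integral_Ioo, ← intervalIntegral.integral_of_le zero_le_one]
    simp
  unfold betaLaplace
  rw [hreflect, ← integral_const_mul]
  refine integral_congr_ae (ae_of_all _ fun u => ?_)
  simp only [betaLaplaceKernel, sub_sub_cancel]
  rw [show -(-s * (1 - u)) = s + -(s * u) by ring, exp_add]
  ring

end BetaLaplaceWeights

section Saturation

/-- The concave increasing function `c ↦ c / (1 + p * c)`, comparable to `min c p⁻¹`. -/
noncomputable def saturation (p c : ℝ) : ℝ := c / (1 + p * c)

variable {p c : ℝ}

lemma saturation_pos (hp : 0 ≤ p) (hc : 0 < c) : 0 < saturation p c := by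
  unfold saturation
  positivity

lemma saturation_mono {d : ℝ} (hp : 0 ≤ p) (hc : 0 ≤ c) (hcd : c ≤ d) :
    saturation p c ≤ saturation p d := by
  have hd : 0 ≤ d := hc.trans hcd
  unfold saturation
  rw [div_le_div_iff₀ (by positivity) (by positivity)]
  linarith

lemma saturation_mul_le {r : ℝ} (hp : 0 ≤ p) (hc : 0 ≤ c) (hr : 1 ≤ r) :
    saturation p (r * c) ≤ r * saturation p c := by
  unfold saturation
  rw [← mul_div_assoc]
  gcongr
  nlinarith

lemma mul_saturation_le {r : ℝ} (hp : 0 ≤ p) (hc : 0 ≤ c) (hr : 0 ≤ r) (hr1 : r ≤ 1) :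
    r * saturation p c ≤ saturation p (r * c) := by
  unfold saturation
  rw [← mul_div_assoc]
  gcongr
  nlinarith

lemma saturation_rpow (hp : 0 ≤ p) {k : ℝ} (hc : 0 ≤ c) :
    saturation p c ^ k = c ^ k * (1 + p * c) ^ (-k) := by
  unfold saturation
  rw [div_rpow hc (by positivity), rpow_neg (by positivity), div_eq_mul_inv]

variable {a b s w : ℝ}

lemma saturation_add_mul_le (hp : 0 ≤ p) (ha : 0 ≤ a) (hb : 0 ≤ b) (hs : 0 ≤ s) (hw : 0 ≤ w) :
    saturation p (a + b * w) ≤ (1 + (1 + s) * w) * saturation p (a + b / (1 + s)) := by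
  refine (saturation_mono hp (by positivity) ?_).trans
    (saturation_mul_le hp (by positivity) (by linarith [(by positivity : 0 ≤ (1 + s) * w)]))
  calc a + b * w ≤ a + b * w + (b / (1 + s) + (1 + s) * w * a) :=
        le_add_of_nonneg_right (by positivity)
    _ = (1 + (1 + s) * w) * (a + b / (1 + s)) := by
        field_simp
        ring

/-- The weight `τ * exp (-τ)`, with `τ = (1 + s) * w`, is a convenient lower bound for `min 1 τ`. -/
lemma mul_exp_neg_mul_saturation_le (hp : 0 ≤ p) (ha : 0 ≤ a) (hb : 0 ≤ b) (hs : 0 ≤ s)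
    (hw : 0 ≤ w) :
    (1 + s) * w * exp (-((1 + s) * w)) * saturation p (a + b / (1 + s)) ≤
      saturation p (a + b * w) := by
  set τ := (1 + s) * w with hτ
  have hτ0 : 0 ≤ τ := by positivity
  have hle_one : τ * exp (-τ) ≤ 1 := by
    rw [exp_neg, ← div_eq_mul_inv, div_le_one (exp_pos τ)]
    linarith [add_one_le_exp τ]
  have hle_self : τ * exp (-τ) ≤ τ :=
    mul_le_of_le_one_right hτ0 (exp_le_one_iff.2 (neg_nonpos.2 hτ0))
  refine (mul_saturation_le hp (by positivity) (by positivity) hle_one).trans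
    (saturation_mono hp (by positivity) ?_)
  calc τ * exp (-τ) * (a + b / (1 + s)) = τ * exp (-τ) * a + τ * exp (-τ) * (b / (1 + s)) := by ring
    _ ≤ 1 * a + τ * (b / (1 + s)) := by gcongr
    _ = a + b * w := by
        rw [hτ]
        field_simp

end Saturation

section RankOne

/-- The constant relating `Erk1` to `betaLaplace`. -/
noncomputable def rankOneConst (k : ℝ) : ℝ :=
  2 ^ (2 * k) * Gamma (k + 1 / 2) / (√π * Gamma k)

lemma rankOneConst_pos {k : ℝ} (hk : 0 < k) : 0 < rankOneConst k := by
  unfold rankOneConst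
  positivity

lemma intervalIntegral_eq_sub_mul_setIntegral_Ioo (f : ℝ → ℝ) (c d : ℝ) :
    ∫ x in c..d, f x = (d - c) * ∫ t in Ioo (0 : ℝ) 1, f (d - (d - c) * t) := by
  rw [← integral_Ioc_eq_integral_Ioo, ← intervalIntegral.integral_of_le zero_le_one,
    intervalIntegral.mul_integral_comp_sub_mul]
  simp

lemma Erk1_eq_betaLaplace (k x v : ℝ) :
    Erk1 k x v = rankOneConst k * exp (x * v) * betaLaplace k (k + 1) (2 * (x * v)) := by
  have hpow : (2 : ℝ) ^ (2 * k) = 2 * (2 ^ (k - 1) * 2 ^ k) :=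
    calc (2 : ℝ) ^ (2 * k) = 2 ^ (1 + (k - 1 + k)) := by ring_nf
      _ = 2 * (2 ^ (k - 1) * 2 ^ k) := by rw [rpow_add two_pos, rpow_add two_pos, rpow_one]
  have hintegrand : ∀ u ∈ Ioo (0 : ℝ) 1,
      2 * (exp ((1 - 2 * u) * x * v) * (1 - (1 - 2 * u)) ^ (k - 1) * (1 + (1 - 2 * u)) ^ k) =
      2 ^ (2 * k) * exp (x * v) * betaLaplaceKernel k (k + 1) (2 * (x * v)) u := by
    rintro u ⟨hu0, hu1⟩
    rw [sub_sub_cancel, show 1 + (1 - 2 * u) = 2 * (1 - u) by ring, mul_rpow two_pos.le hu0.le,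
      mul_rpow two_pos.le (sub_pos.2 hu1).le,
      show (1 - 2 * u) * x * v = x * v + -(2 * (x * v) * u) by ring, exp_add, hpow]
    unfold betaLaplaceKernel
    rw [add_sub_cancel_right]
    ring
  unfold Erk1 rankOneConst betaLaplace
  rw [intervalIntegral_eq_sub_mul_setIntegral_Ioo, sub_neg_eq_add, one_add_one_eq_two,
    ← integral_const_mul, setIntegral_congr_fun measurableSet_Ioo hintegrand, integral_const_mul]
  ring

lemma Erk1_neg_eq_betaLaplace (k x v : ℝ) :
    Erk1 k (-x) v = rankOneConst k * exp (x * v) * betaLaplace (k + 1) k (2 * (x * v)) := by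
  rw [Erk1_eq_betaLaplace, neg_mul, mul_neg, betaLaplace_neg, mul_assoc, ← mul_assoc (exp _),
    ← exp_add, mul_assoc]
  ring_nf

end RankOne

section IteratedIntegral

variable {α β : Type*} [MeasurableSpace α] [MeasurableSpace β] {μ : Measure α} {ν : Measure β}
  {s : Set α} {t : Set β} {F : α → β → ℝ} {g : α → ℝ} {h : β → ℝ}

lemma setIntegral_setIntegral_le_mul (hs : MeasurableSet s) (ht : MeasurableSet t)
    (hg : IntegrableOn g s μ) (hh : IntegrableOn h t ν)
    (hF : ∀ x ∈ s, ∀ y ∈ t, 0 ≤ F x y) (hFgh : ∀ x ∈ s, ∀ y ∈ t, F x y ≤ g x * h y) :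
    ∫ x in s, ∫ y in t, F x y ∂ν ∂μ ≤ (∫ x in s, g x ∂μ) * ∫ y in t, h y ∂ν := by
  rw [← integral_mul_const]
  refine integral_mono_of_nonneg
    (ae_restrict_of_forall_mem hs fun x hx => setIntegral_nonneg ht (hF x hx)) (hg.mul_const _)
    (ae_restrict_of_forall_mem hs fun x hx => ?_)
  simp only [← integral_const_mul]
  exact integral_mono_of_nonneg (ae_restrict_of_forall_mem ht (hF x hx)) (hh.const_mul _)
    (ae_restrict_of_forall_mem ht (hFgh x hx))

variable [SFinite μ] [SFinite ν]

lemma integrableOn_prod_of_le_mul (hs : MeasurableSet s) (ht : MeasurableSet t)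
    (hFm : Measurable (Function.uncurry F)) (hg : IntegrableOn g s μ) (hh : IntegrableOn h t ν)
    (hF : ∀ x ∈ s, ∀ y ∈ t, 0 ≤ F x y) (hFgh : ∀ x ∈ s, ∀ y ∈ t, F x y ≤ g x * h y) :
    IntegrableOn (Function.uncurry F) (s ×ˢ t) (μ.prod ν) := by
  have hgh : IntegrableOn (fun z : α × β => g z.1 * h z.2) (s ×ˢ t) (μ.prod ν) := by
    rw [IntegrableOn, ← Measure.prod_restrict]
    exact hg.mul_prod hh
  refine Integrable.mono' hgh hFm.aestronglyMeasurable
    (ae_restrict_of_forall_mem (hs.prod ht) fun ⟨x, y⟩ ⟨hx, hy⟩ => ?_)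
  rw [Function.uncurry_apply_pair, norm_of_nonneg (hF x hx y hy)]
  exact hFgh x hx y hy

lemma mul_le_setIntegral_setIntegral (hs : MeasurableSet s) (ht : MeasurableSet t)
    (hFint : IntegrableOn (Function.uncurry F) (s ×ˢ t) (μ.prod ν))
    (hg : ∀ x ∈ s, 0 ≤ g x) (hh : ∀ y ∈ t, 0 ≤ h y)
    (hghF : ∀ x ∈ s, ∀ y ∈ t, g x * h y ≤ F x y) :
    (∫ x in s, g x ∂μ) * ∫ y in t, h y ∂ν ≤ ∫ x in s, ∫ y in t, F x y ∂ν ∂μ := by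
  rw [IntegrableOn, ← Measure.prod_restrict] at hFint
  rw [← integral_mul_const]
  refine integral_mono_of_nonneg
    (ae_restrict_of_forall_mem hs fun x hx => mul_nonneg (hg x hx) (setIntegral_nonneg ht hh))
    hFint.integral_prod_left ?_
  filter_upwards [hFint.prod_right_ae, ae_restrict_mem hs] with x hx hxs
  simp only [← integral_const_mul]
  exact integral_mono_of_nonneg
    (ae_restrict_of_forall_mem ht fun y hy => mul_nonneg (hg x hxs) (hh y hy)) hx
    (ae_restrict_of_forall_mem ht (hghF x hxs))

end IteratedIntegral

section ReducedIntegrand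

/-- The non-exponential factor of the integrand of `EkA2` after the substitution
`ν₁ = λ₁ - a * t`, `ν₂ = λ₂ - b * w`, where `a = λ₁ - λ₂`, `b = λ₂ - λ₃` and `p = x₁ - x₂`. -/
noncomputable def reducedAmplitude (k a b p t w : ℝ) : ℝ :=
  (a + b * w) ^ (k - 1) * (a + b - a * t) ^ k *
    ((1 - t) * (a + b * w) * betaLaplace k (k + 1) (p * (a * (1 - t) + b * w)) +
      t * (b * w) * betaLaplace (k + 1) k (p * (a * (1 - t) + b * w)))

/-- The integrand of `EkA2` after mapping the domain of integration to the unit square,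
where `a = λ₁ - λ₂`, `b = λ₂ - λ₃`, `p = x₁ - x₂` and `q = x₂ - x₃`. -/
noncomputable def reducedIntegrand (k a b p q w t : ℝ) : ℝ :=
  betaLaplaceKernel k (k + 1) (b * q) w * betaLaplaceKernel k k (a * (p + q)) t *
    reducedAmplitude k a b p t w

/-- The integrand of `EkA2`. -/
noncomputable def EkA2Integrand (k x1 x2 x3 l1 l2 l3 n1 n2 : ℝ) : ℝ :=
  ((n1 - l2) * (l1 - n2) * Erk1 k ((x1 - x2) / 2) (n1 - n2)
      + (l1 - n1) * (l2 - n2) * Erk1 k (-(x1 - x2) / 2) (n1 - n2))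
    * ((n1 - l3) * (n2 - l3)) * exp ((x1 + x2 - 2 * x3) * (n1 + n2) / 2) * Wk k l1 l2 l3 n1 n2

lemma EkA2_eq_setIntegral (k x1 x2 x3 l1 l2 l3 : ℝ) :
    EkA2 k x1 x2 x3 l1 l2 l3 =
      3 * Gamma (3 * k) / (Vlam l1 l2 l3 ^ (2 * k) * Gamma k ^ 2) *
        ∫ w in Ioo (0 : ℝ) 1, ∫ t in Ioo (0 : ℝ) 1, (l2 - l3) * ((l1 - l2) *
          EkA2Integrand k x1 x2 x3 l1 l2 l3 (l1 - (l1 - l2) * t) (l2 - (l2 - l3) * w)) := by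
  simp only [integral_const_mul]
  change _ * (∫ n2 in l3..l2, ∫ n1 in l2..l1, EkA2Integrand k x1 x2 x3 l1 l2 l3 n1 n2) = _
  rw [intervalIntegral_eq_sub_mul_setIntegral_Ioo]
  simp only [intervalIntegral_eq_sub_mul_setIntegral_Ioo _ l2 l1, integral_const_mul]

variable {k a b p q t w : ℝ}

lemma Wk_eq {l1 l2 l3 : ℝ} (h12 : l2 < l1) (h23 : l3 < l2) (ht : t ∈ Ioo (0 : ℝ) 1)
    (hw : w ∈ Ioo (0 : ℝ) 1) :
    Wk k l1 l2 l3 (l1 - (l1 - l2) * t) (l2 - (l2 - l3) * w) =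
      (((l1 - l2) * (l2 - l3)) ^ 2) ^ (k - 1) * (t ^ (k - 1) * (1 - t) ^ (k - 1)) *
        (w ^ (k - 1) * (1 - w) ^ (k - 1)) *
        ((l1 - l2 + (l2 - l3) * w) ^ (k - 1) *
          (l1 - l2 + (l2 - l3) - (l1 - l2) * t) ^ (k - 1)) := by
  obtain ⟨ht0, ht1⟩ := ht
  obtain ⟨hw0, hw1⟩ := hw
  have ht' : 0 < 1 - t := sub_pos.2 ht1
  have hw' : 0 < 1 - w := sub_pos.2 hw1
  have hR : 0 < l1 - l2 + (l2 - l3) - (l1 - l2) * t := by nlinarith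
  rw [← mul_rpow ht0.le ht'.le, ← mul_rpow hw0.le hw'.le, ← mul_rpow (by positivity) hR.le,
    ← mul_rpow (by positivity) (by positivity), ← mul_rpow (by positivity) (by positivity),
    ← mul_rpow (by positivity) (by positivity)]
  unfold Wk
  congr 1
  ring

lemma EkA2Integrand_eq_reducedIntegrand {x1 x2 x3 l1 l2 l3 : ℝ} (h12 : l2 < l1) (h23 : l3 < l2)
    (ht : t ∈ Ioo (0 : ℝ) 1) (hw : w ∈ Ioo (0 : ℝ) 1) :
    (l2 - l3) * ((l1 - l2) *
        EkA2Integrand k x1 x2 x3 l1 l2 l3 (l1 - (l1 - l2) * t) (l2 - (l2 - l3) * w)) =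
      rankOneConst k * exp (l1 * (x1 - x3) + l2 * (x2 - x3)) * ((l1 - l2) * (l2 - l3)) ^ (2 * k) *
        reducedIntegrand k (l1 - l2) (l2 - l3) (x1 - x2) (x2 - x3) w t := by
  have hab : 0 < (l1 - l2) * (l2 - l3) := mul_pos (sub_pos.2 h12) (sub_pos.2 h23)
  have hR : 0 < l1 - l2 + (l2 - l3) - (l1 - l2) * t := by nlinarith [ht.2]
  unfold EkA2Integrand
  rw [Wk_eq h12 h23 ht hw, neg_div, Erk1_eq_betaLaplace, Erk1_neg_eq_betaLaplace]
  set n1 := l1 - (l1 - l2) * t with hn1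
  set n2 := l2 - (l2 - l3) * w with hn2
  have hphase : 2 * ((x1 - x2) / 2 * (n1 - n2)) =
      (x1 - x2) * ((l1 - l2) * (1 - t) + (l2 - l3) * w) := by
    rw [hn1, hn2]
    ring
  have hexp : exp ((x1 - x2) / 2 * (n1 - n2)) * exp ((x1 + x2 - 2 * x3) * (n1 + n2) / 2) =
      exp (l1 * (x1 - x3) + l2 * (x2 - x3)) * (exp (-((l2 - l3) * (x2 - x3) * w)) *
        exp (-((l1 - l2) * (x1 - x2 + (x2 - x3)) * t))) := by
    simp only [← exp_add, hn1, hn2]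
    ring_nf
  unfold reducedIntegrand reducedAmplitude betaLaplaceKernel
  rw [hphase, rpow_mul hab.le, rpow_two, ← rpow_sub_one_mul_self (pow_pos hab 2).ne' k,
    ← rpow_sub_one_mul_self hR.ne' k, add_sub_cancel_right,
    ← rpow_sub_one_mul_self (sub_pos.2 hw.2).ne' k]
  generalize betaLaplace k (k + 1) _ = B₁, betaLaplace (k + 1) k _ = B₂
  generalize exp ((x1 - x2) / 2 * (n1 - n2)) = E₁,
    exp ((x1 + x2 - 2 * x3) * (n1 + n2) / 2) = E₂ at hexp ⊢
  rw [hn1, hn2]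
  linear_combination rankOneConst k *
    ((((l1 - l2) * (l2 - l3)) ^ 2) ^ (k - 1) * ((l1 - l2) * (l2 - l3)) ^ 2) *
    (t ^ (k - 1) * (1 - t) ^ (k - 1) * (w ^ (k - 1) * ((1 - w) ^ (k - 1) * (1 - w)))) *
    ((l1 - l2 + (l2 - l3) * w) ^ (k - 1) *
      ((l1 - l2 + (l2 - l3) - (l1 - l2) * t) ^ (k - 1) *
        (l1 - l2 + (l2 - l3) - (l1 - l2) * t))) *
    ((1 - t) * (l1 - l2 + (l2 - l3) * w) * B₁ + t * ((l2 - l3) * w) * B₂) * hexp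

/-- The constant of proportionality between `EkA2` and the integral of `reducedIntegrand`. -/
noncomputable def EkA2Const (k : ℝ) : ℝ := 3 * Gamma (3 * k) * rankOneConst k / Gamma k ^ 2

lemma EkA2Const_pos (hk : 0 < k) : 0 < EkA2Const k := by
  have hc := rankOneConst_pos hk
  unfold EkA2Const
  positivity

lemma EkA2_eq_integral_reducedIntegrand {x1 x2 x3 l1 l2 l3 : ℝ} (h12 : l2 < l1) (h23 : l3 < l2) :
    EkA2 k x1 x2 x3 l1 l2 l3 =
      EkA2Const k * exp (l1 * (x1 - x3) + l2 * (x2 - x3)) * (((l1 - l3) ^ (2 * k))⁻¹ *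
        ∫ w in Ioo (0 : ℝ) 1, ∫ t in Ioo (0 : ℝ) 1,
          reducedIntegrand k (l1 - l2) (l2 - l3) (x1 - x2) (x2 - x3) w t) := by
  have ha : 0 < l1 - l2 := sub_pos.2 h12
  have hb : 0 < l2 - l3 := sub_pos.2 h23
  have hc : 0 < l1 - l3 := sub_pos.2 (h23.trans h12)
  have hV : Vlam l1 l2 l3 ^ (2 * k) = ((l1 - l2) * (l2 - l3)) ^ (2 * k) * (l1 - l3) ^ (2 * k) := by
    rw [← mul_rpow (by positivity) hc.le]
    unfold Vlam
    ring_nf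
  rw [EkA2_eq_setIntegral, setIntegral_congr_fun measurableSet_Ioo fun w hw =>
    setIntegral_congr_fun measurableSet_Ioo fun t ht =>
      EkA2Integrand_eq_reducedIntegrand h12 h23 ht hw]
  simp only [integral_const_mul]
  rw [hV]
  unfold EkA2Const
  field_simp

end ReducedIntegrand

section IntegrandBounds

variable {k a b p q t w : ℝ}

lemma reducedAmplitude_nonneg (ha : 0 ≤ a) (hb : 0 ≤ b) (ht : t ∈ Ioo (0 : ℝ) 1) (hw : 0 ≤ w) :
    0 ≤ reducedAmplitude k a b p t w := by
  have ht0 := ht.1.le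
  have ht' : 0 ≤ 1 - t := sub_nonneg.2 ht.2.le
  have hR : 0 ≤ a + b - a * t := by nlinarith
  have hL {κ η s : ℝ} : 0 ≤ betaLaplace κ η s := betaLaplace_nonneg
  unfold reducedAmplitude
  exact mul_nonneg (by positivity) (add_nonneg (mul_nonneg (by positivity) hL)
    (mul_nonneg (by positivity) hL))

lemma reducedIntegrand_nonneg (ha : 0 ≤ a) (hb : 0 ≤ b) (hw : w ∈ Ioo (0 : ℝ) 1)
    (ht : t ∈ Ioo (0 : ℝ) 1) : 0 ≤ reducedIntegrand k a b p q w t :=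
  mul_nonneg (mul_pos (betaLaplaceKernel_pos hw) (betaLaplaceKernel_pos ht)).le
    (reducedAmplitude_nonneg ha hb ht hw.1.le)

lemma measurable_uncurry_reducedIntegrand :
    Measurable (Function.uncurry (reducedIntegrand k a b p q)) := by
  unfold Function.uncurry reducedIntegrand reducedAmplitude
  fun_prop

lemma exists_reducedAmplitude_le (hk : 0 < k) :
    ∃ M, 0 < M ∧ ∀ a b p t w : ℝ, 0 < a → 0 < b → 0 ≤ p → t ∈ Ioo (0 : ℝ) 1 → 0 ≤ w →
      reducedAmplitude k a b p t w ≤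
        M * (a + b) ^ k * (1 + a * p * t) ^ k * saturation p (a + b * w) ^ k := by
  obtain ⟨M₁, hM₁, hM₁_le⟩ := exists_betaLaplace_le hk (by positivity : 0 < k + 1)
  obtain ⟨M₂, hM₂, hM₂_le⟩ := exists_betaLaplace_le (by positivity : 0 < k + 1) hk
  refine ⟨M₁ + M₂, by positivity, fun a b p t w ha hb hp ⟨ht0, ht1⟩ hw => ?_⟩
  have hR : 0 ≤ a + b - a * t := by nlinarith
  have hc : 0 < a + b * w := by positivity
  set v := a * (1 - t) + b * w with hv
  have hpv : 0 ≤ p * v := by positivity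
  have hL₁ : betaLaplace k (k + 1) (p * v) ≤ M₁ * (1 + p * v) ^ (-k) := hM₁_le (p * v) hpv
  have hL₂ : betaLaplace (k + 1) k (p * v) ≤ M₂ * (1 + p * v) ^ (-k) :=
    (hM₂_le (p * v) hpv).trans (by gcongr <;> linarith)
  have hphase : (1 + p * v) ^ (-k) ≤ (1 + a * p * t) ^ k * (1 + p * (a + b * w)) ^ (-k) := by
    convert one_add_rpow_neg_le_mul (u := a * p * t) (by positivity) hpv hk.le using 4
    rw [hv]
    ring
  have hbracket : (1 - t) * (a + b * w) * betaLaplace k (k + 1) (p * v) +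
      t * (b * w) * betaLaplace (k + 1) k (p * v) ≤
      (a + b * w) * ((M₁ + M₂) * (1 + p * v) ^ (-k)) :=
    calc _ ≤ 1 * (a + b * w) * (M₁ * (1 + p * v) ^ (-k)) +
          1 * (a + b * w) * (M₂ * (1 + p * v) ^ (-k)) := by
          gcongr <;> first | exact betaLaplace_nonneg | linarith
      _ = _ := by ring
  unfold reducedAmplitude
  rw [← hv, saturation_rpow hp hc.le, ← rpow_sub_one_mul_self hc.ne' k]
  calc _ ≤ (a + b * w) ^ (k - 1) * (a + b) ^ k * ((a + b * w) * ((M₁ + M₂) *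
        ((1 + a * p * t) ^ k * (1 + p * (a + b * w)) ^ (-k)))) := by
        refine mul_le_mul_of_nonneg (by gcongr; nlinarith) (hbracket.trans (by gcongr))
          (by positivity) (by positivity)
    _ = _ := by ring

lemma exists_le_reducedAmplitude (hk : 0 < k) :
    ∃ m, 0 < m ∧ ∀ a b p t w : ℝ, 0 < a → 0 < b → 0 ≤ p → t ∈ Ioo (0 : ℝ) 1 → 0 ≤ w →
      m * (a + b) ^ k * (1 - t) ^ (k + 1) * saturation p (a + b * w) ^ k ≤
        reducedAmplitude k a b p t w := by
  obtain ⟨m, hm, hm_le⟩ := exists_le_betaLaplace hk (by positivity : 0 < k + 1)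
  refine ⟨m, hm, fun a b p t w ha hb hp ⟨ht0, ht1⟩ hw => ?_⟩
  have ht' : 0 < 1 - t := sub_pos.2 ht1
  have hc : 0 < a + b * w := by positivity
  have hR : (a + b) * (1 - t) ≤ a + b - a * t := by nlinarith
  set v := a * (1 - t) + b * w with hv
  have hphase : (1 + p * (a + b * w)) ^ (-k) ≤ (1 + p * v) ^ (-k) := by
    refine rpow_le_rpow_of_nonpos (by positivity) ?_ (by linarith)
    gcongr
    nlinarith
  unfold reducedAmplitude
  rw [← hv, saturation_rpow hp hc.le, ← rpow_sub_one_mul_self hc.ne' k, rpow_add_one ht'.ne']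
  calc _ = (a + b * w) ^ (k - 1) * ((a + b) * (1 - t)) ^ k *
        ((1 - t) * (a + b * w) * (m * (1 + p * (a + b * w)) ^ (-k)) + 0) := by
        rw [mul_rpow (by positivity) ht'.le]
        ring
    _ ≤ _ := by
        have hL₁ := (mul_le_mul_of_nonneg_left hphase hm.le).trans (hm_le _ (by positivity))
        have hL₂ : 0 ≤ betaLaplace (k + 1) k (p * v) := betaLaplace_nonneg
        have hR' : 0 ≤ a + b - a * t := hR.trans' (by positivity)
        gcongr
        positivity

lemma exists_reducedIntegrand_le (hk : 0 < k) :
    ∃ M, 0 < M ∧ ∀ a b p q w t : ℝ, 0 < a → 0 < b → 0 ≤ p → 0 ≤ q →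
      w ∈ Ioo (0 : ℝ) 1 → t ∈ Ioo (0 : ℝ) 1 →
      reducedIntegrand k a b p q w t ≤
        M * ((a + b) * saturation p (a + b / (1 + b * q))) ^ k *
          betaLaplaceKernel k (k + 1) (1 / 2 * (b * q)) w *
          betaLaplaceKernel k k (1 / 2 * (a * (p + q))) t := by
  obtain ⟨M, hM, hM_le⟩ := exists_reducedAmplitude_le hk
  refine ⟨M * ((k * 2) ^ k * exp 1) ^ 2, by positivity, fun a b p q w t ha hb hp hq hw ht => ?_⟩
  have ht0 := ht.1
  have hw0 := hw.1
  have hsat := saturation_pos hp (by positivity : 0 < a + b / (1 + b * q))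
  have hsat' := saturation_pos hp (by positivity : 0 < a + b * w)
  have hKw := betaLaplaceKernel_pos (κ := k) (η := k + 1) (s := b * q) hw
  have hKt := betaLaplaceKernel_pos (κ := k) (η := k) (s := a * (p + q)) ht
  calc _ ≤ betaLaplaceKernel k (k + 1) (b * q) w * betaLaplaceKernel k k (a * (p + q)) t *
        (M * (a + b) ^ k * (1 + a * p * t) ^ k * saturation p (a + b * w) ^ k) :=
        mul_le_mul_of_nonneg_left (hM_le a b p t w ha hb hp ht hw0.le) (by positivity)
    _ ≤ betaLaplaceKernel k (k + 1) (b * q) w * betaLaplaceKernel k k (a * (p + q)) t *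
        (M * (a + b) ^ k * (1 + (1 + a * (p + q)) * t) ^ k *
          ((1 + (1 + b * q) * w) * saturation p (a + b / (1 + b * q))) ^ k) := by
        gcongr
        · nlinarith [mul_nonneg ha.le hq]
        · exact saturation_add_mul_le hp ha.le hb.le (by positivity) hw0.le
    _ = M * ((a + b) * saturation p (a + b / (1 + b * q))) ^ k *
        (betaLaplaceKernel k (k + 1) (b * q) w * (1 + (1 + b * q) * w) ^ k) *
        (betaLaplaceKernel k k (a * (p + q)) t * (1 + (1 + a * (p + q)) * t) ^ k) := by
        rw [mul_rpow (by positivity) hsat.le, mul_rpow (by positivity) hsat.le]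
        ring
    _ ≤ M * ((a + b) * saturation p (a + b / (1 + b * q))) ^ k *
        ((k * 2) ^ k * exp 1 * betaLaplaceKernel k (k + 1) (1 / 2 * (b * q)) w) *
        ((k * 2) ^ k * exp 1 * betaLaplaceKernel k k (1 / 2 * (a * (p + q))) t) := by
        have := betaLaplaceKernel_pos (κ := k) (η := k + 1) (s := 1 / 2 * (b * q)) hw
        gcongr ?_ * ?_ * ?_
        · exact betaLaplaceKernel_mul_rpow_le hk (by positivity) hw
        · exact betaLaplaceKernel_mul_rpow_le hk (by positivity) ht
    _ = _ := by ring

lemma exists_le_reducedIntegrand (hk : 0 < k) :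
    ∃ m, 0 < m ∧ ∀ a b p q w t : ℝ, 0 < a → 0 < b → 0 ≤ p → 0 ≤ q →
      w ∈ Ioo (0 : ℝ) 1 → t ∈ Ioo (0 : ℝ) 1 →
      m * ((a + b) * saturation p (a + b / (1 + b * q))) ^ k *
          ((1 + b * q) ^ k * betaLaplaceKernel (k + k) (k + 1) ((1 + k) * (b * q)) w) *
          betaLaplaceKernel k (k + (k + 1)) (a * (p + q)) t ≤
        reducedIntegrand k a b p q w t := by
  obtain ⟨m, hm, hm_le⟩ := exists_le_reducedAmplitude hk
  refine ⟨m * exp (-k), by positivity, fun a b p q w t ha hb hp hq hw ht => ?_⟩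
  have ht' : 0 < 1 - t := sub_pos.2 ht.2
  have hw0 := hw.1
  have hsat := saturation_pos hp (by positivity : 0 < a + b / (1 + b * q))
  have hKw := betaLaplaceKernel_pos (κ := k) (η := k + 1) (s := b * q) hw
  have hKt := betaLaplaceKernel_pos (κ := k) (η := k) (s := a * (p + q)) ht
  rw [← betaLaplaceKernel_mul_one_sub_rpow ht]
  set τ := (1 + b * q) * w
  calc _ = m * ((a + b) * saturation p (a + b / (1 + b * q))) ^ k *
        (exp (-k) * (1 + b * q) ^ k * betaLaplaceKernel (k + k) (k + 1) ((1 + k) * (b * q)) w) *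
        (betaLaplaceKernel k k (a * (p + q)) t * (1 - t) ^ (k + 1)) := by ring
    _ ≤ m * ((a + b) * saturation p (a + b / (1 + b * q))) ^ k *
        (betaLaplaceKernel k (k + 1) (b * q) w * (τ * exp (-τ)) ^ k) *
        (betaLaplaceKernel k k (a * (p + q)) t * (1 - t) ^ (k + 1)) := by
        gcongr ?_ * ?_ * _
        exact le_betaLaplaceKernel_mul_rpow hk.le (by positivity) hw
    _ = betaLaplaceKernel k (k + 1) (b * q) w * betaLaplaceKernel k k (a * (p + q)) t *
        (m * (a + b) ^ k * (1 - t) ^ (k + 1) *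
          (τ * exp (-τ) * saturation p (a + b / (1 + b * q))) ^ k) := by
        rw [mul_rpow (by positivity) hsat.le, mul_rpow (by positivity) hsat.le]
        ring
    _ ≤ betaLaplaceKernel k (k + 1) (b * q) w * betaLaplaceKernel k k (a * (p + q)) t *
        (m * (a + b) ^ k * (1 - t) ^ (k + 1) * saturation p (a + b * w) ^ k) := by
        gcongr
        exact mul_exp_neg_mul_saturation_le hp ha.le hb.le (by positivity) hw0.le
    _ ≤ _ := mul_le_mul_of_nonneg_left (hm_le a b p t w ha hb hp ht hw0.le) (by positivity)

end IntegrandBounds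

section IntegralBounds

/-- The base of the `k`-th power to which `(a + b) ^ (-2 * k)` times the integral of
`reducedIntegrand` is comparable. -/
noncomputable def kernelScale (a b p q : ℝ) : ℝ :=
  saturation p (a + b / (1 + b * q)) / ((a + b) * ((1 + b * q) * (1 + a * (p + q))))

variable {k a b p q : ℝ}

lemma kernelScale_pos (ha : 0 < a) (hb : 0 < b) (hp : 0 ≤ p) (hq : 0 ≤ q) :
    0 < kernelScale a b p q := by
  have hsat := saturation_pos hp (by positivity : 0 < a + b / (1 + b * q))
  unfold kernelScale
  positivity

lemma rpow_mul_kernelScale_rpow (ha : 0 < a) (hb : 0 < b) (hp : 0 ≤ p) (hq : 0 ≤ q) :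
    (a + b) ^ (2 * k) * kernelScale a b p q ^ k =
      ((a + b) * saturation p (a + b / (1 + b * q))) ^ k *
        ((1 + b * q) ^ (-k) * (1 + a * (p + q)) ^ (-k)) := by
  have hsat := saturation_pos hp (by positivity : 0 < a + b / (1 + b * q))
  have hscale := kernelScale_pos ha hb hp hq
  rw [rpow_mul (by positivity), ← mul_rpow (by positivity) hscale.le,
    ← mul_rpow (by positivity) (by positivity), rpow_neg (by positivity),
    ← inv_rpow (by positivity), ← mul_rpow (by positivity) (by positivity)]
  unfold kernelScale
  congr 1
  rw [rpow_two]
  field_simp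

lemma exists_integral_reducedIntegrand_le (hk : 0 < k) :
    ∃ M, 0 < M ∧ ∀ a b p q : ℝ, 0 < a → 0 < b → 0 ≤ p → 0 ≤ q →
      ∫ w in Ioo (0 : ℝ) 1, ∫ t in Ioo (0 : ℝ) 1, reducedIntegrand k a b p q w t ≤
        M * ((a + b) ^ (2 * k) * kernelScale a b p q ^ k) := by
  obtain ⟨M, hM, hM_le⟩ := exists_reducedIntegrand_le hk
  obtain ⟨M₁, hM₁, hM₁_le⟩ := exists_betaLaplace_half_mul_le hk (by positivity : 0 < k + 1)
  obtain ⟨M₂, hM₂, hM₂_le⟩ := exists_betaLaplace_half_mul_le hk hk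
  refine ⟨M * M₁ * M₂, by positivity, fun a b p q ha hb hp hq => ?_⟩
  have hsat := saturation_pos hp (by positivity : 0 < a + b / (1 + b * q))
  calc _ ≤ (∫ w in Ioo (0 : ℝ) 1, M * ((a + b) * saturation p (a + b / (1 + b * q))) ^ k *
          betaLaplaceKernel k (k + 1) (1 / 2 * (b * q)) w) *
        betaLaplace k k (1 / 2 * (a * (p + q))) :=
        setIntegral_setIntegral_le_mul measurableSet_Ioo measurableSet_Ioo
          ((integrableOn_betaLaplaceKernel hk (by positivity) (by positivity)).const_mul _)
          (integrableOn_betaLaplaceKernel hk hk (by positivity))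
          (fun w hw t ht => reducedIntegrand_nonneg ha.le hb.le hw ht)
          (fun w hw t ht => hM_le a b p q w t ha hb hp hq hw ht)
    _ = M * ((a + b) * saturation p (a + b / (1 + b * q))) ^ k *
        betaLaplace k (k + 1) (1 / 2 * (b * q)) * betaLaplace k k (1 / 2 * (a * (p + q))) := by
        rw [integral_const_mul, ← betaLaplace]
    _ ≤ M * ((a + b) * saturation p (a + b / (1 + b * q))) ^ k *
        (M₁ * (1 + b * q) ^ (-k)) * (M₂ * (1 + a * (p + q)) ^ (-k)) := by
        gcongr
        · exact betaLaplace_nonneg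
        · exact hM₁_le _ (by positivity)
        · exact hM₂_le _ (by positivity)
    _ = _ := by
        rw [rpow_mul_kernelScale_rpow ha hb hp hq]
        ring

lemma integrableOn_uncurry_reducedIntegrand (hk : 0 < k) (ha : 0 < a) (hb : 0 < b) (hp : 0 ≤ p)
    (hq : 0 ≤ q) :
    IntegrableOn (Function.uncurry (reducedIntegrand k a b p q)) (Ioo 0 1 ×ˢ Ioo 0 1) := by
  obtain ⟨M, _, hM_le⟩ := exists_reducedIntegrand_le hk
  exact integrableOn_prod_of_le_mul measurableSet_Ioo measurableSet_Ioo
    measurable_uncurry_reducedIntegrand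
    ((integrableOn_betaLaplaceKernel hk (by positivity) (by positivity)).const_mul _)
    (integrableOn_betaLaplaceKernel hk hk (by positivity))
    (fun w hw t ht => reducedIntegrand_nonneg ha.le hb.le hw ht)
    (fun w hw t ht => hM_le a b p q w t ha hb hp hq hw ht)

lemma exists_le_integral_reducedIntegrand (hk : 0 < k) :
    ∃ m, 0 < m ∧ ∀ a b p q : ℝ, 0 < a → 0 < b → 0 ≤ p → 0 ≤ q →
      m * ((a + b) ^ (2 * k) * kernelScale a b p q ^ k) ≤
        ∫ w in Ioo (0 : ℝ) 1, ∫ t in Ioo (0 : ℝ) 1, reducedIntegrand k a b p q w t := by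
  obtain ⟨m, hm, hm_le⟩ := exists_le_reducedIntegrand hk
  obtain ⟨m₁, hm₁, hm₁_le⟩ := exists_le_rpow_mul_betaLaplace hk (by positivity : 0 < k + 1) hk.le
  obtain ⟨m₂, hm₂, hm₂_le⟩ := exists_le_betaLaplace hk (by positivity : 0 < k + (k + 1))
  refine ⟨m * m₁ * m₂, by positivity, fun a b p q ha hb hp hq => ?_⟩
  have hsat := saturation_pos hp (by positivity : 0 < a + b / (1 + b * q))
  calc _ = m * ((a + b) * saturation p (a + b / (1 + b * q))) ^ k *
        (m₁ * (1 + b * q) ^ (-k)) * (m₂ * (1 + a * (p + q)) ^ (-k)) := by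
        rw [rpow_mul_kernelScale_rpow ha hb hp hq]
        ring
    _ ≤ m * ((a + b) * saturation p (a + b / (1 + b * q))) ^ k *
        ((1 + b * q) ^ k * betaLaplace (k + k) (k + 1) ((1 + k) * (b * q))) *
        betaLaplace k (k + (k + 1)) (a * (p + q)) := by
        have hL₁ := hm₁_le (b * q) (by positivity)
        have hL₂ := hm₂_le (a * (p + q)) (by positivity)
        have hL : 0 ≤ betaLaplace (k + k) (k + 1) ((1 + k) * (b * q)) := betaLaplace_nonneg
        gcongr
    _ = (∫ w in Ioo (0 : ℝ) 1, m * ((a + b) * saturation p (a + b / (1 + b * q))) ^ k *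
          ((1 + b * q) ^ k * betaLaplaceKernel (k + k) (k + 1) ((1 + k) * (b * q)) w)) *
        ∫ t in Ioo (0 : ℝ) 1, betaLaplaceKernel k (k + (k + 1)) (a * (p + q)) t := by
        rw [integral_const_mul, integral_const_mul, ← betaLaplace, ← betaLaplace]
    _ ≤ _ := by
        refine mul_le_setIntegral_setIntegral measurableSet_Ioo measurableSet_Ioo
          (integrableOn_uncurry_reducedIntegrand hk ha hb hp hq) (fun w hw => ?_)
          (fun t ht => (betaLaplaceKernel_pos ht).le)
          (fun w hw t ht => hm_le a b p q w t ha hb hp hq hw ht)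
        have := betaLaplaceKernel_pos (κ := k + k) (η := k + 1) (s := (1 + k) * (b * q)) hw
        positivity

lemma kernelScale_le (ha : 0 < a) (hb : 0 < b) (hp : 0 ≤ p) (hq : 0 ≤ q) :
    kernelScale a b p q ≤ 4 / ((1 + a * p) * (1 + b * q) * (1 + (a + b) * (p + q))) := by
  unfold kernelScale saturation
  rw [div_div, div_le_div_iff₀ (by positivity) (by positivity)]
  field_simp
  rw [← sub_nonneg]
  ring_nf
  positivity

lemma le_kernelScale (ha : 0 < a) (hb : 0 < b) (hp : 0 ≤ p) (hq : 0 ≤ q) :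
    1 / 4 / ((1 + a * p) * (1 + b * q) * (1 + (a + b) * (p + q))) ≤ kernelScale a b p q := by
  unfold kernelScale saturation
  rw [div_div, div_div, div_le_div_iff₀ (by positivity) (by positivity)]
  field_simp
  rw [← sub_nonneg]
  ring_nf
  positivity

end IntegralBounds

section KernelBounds

variable {k : ℝ}

lemma exists_EkA2_le (hk : 0 < k) :
    ∃ M, 0 < M ∧ ∀ l1 l2 l3 x1 x2 x3 : ℝ, l2 < l1 → l3 < l2 → x2 ≤ x1 → x3 ≤ x2 →
      EkA2 k x1 x2 x3 l1 l2 l3 ≤ M * (exp (l1 * (x1 - x3) + l2 * (x2 - x3)) /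
        ((1 + (l1 - l2) * (x1 - x2)) ^ k * (1 + (l2 - l3) * (x2 - x3)) ^ k *
          (1 + (l1 - l3) * (x1 - x3)) ^ k)) := by
  obtain ⟨M, hM, hM_le⟩ := exists_integral_reducedIntegrand_le hk
  have hA := EkA2Const_pos hk
  refine ⟨EkA2Const k * M * 4 ^ k, by positivity, fun l1 l2 l3 x1 x2 x3 h12 h23 hx12 hx23 => ?_⟩
  have ha := sub_pos.2 h12
  have hb := sub_pos.2 h23
  have hc := sub_pos.2 (h23.trans h12)
  have hp := sub_nonneg.2 hx12
  have hq := sub_nonneg.2 hx23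
  have hr := sub_nonneg.2 (hx23.trans hx12)
  have hint := hM_le _ _ _ _ ha hb hp hq
  have hscale := rpow_le_rpow (kernelScale_pos ha hb hp hq).le (kernelScale_le ha hb hp hq) hk.le
  rw [sub_add_sub_cancel] at hint
  rw [sub_add_sub_cancel, sub_add_sub_cancel, div_mul_mul_rpow (by positivity) (by positivity)
    (by positivity) (by positivity)] at hscale
  rw [EkA2_eq_integral_reducedIntegrand h12 h23]
  calc _ ≤ EkA2Const k * exp (l1 * (x1 - x3) + l2 * (x2 - x3)) * (((l1 - l3) ^ (2 * k))⁻¹ *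
        (M * ((l1 - l3) ^ (2 * k) * kernelScale (l1 - l2) (l2 - l3) (x1 - x2) (x2 - x3) ^ k))) := by
        gcongr
    _ = EkA2Const k * M * exp (l1 * (x1 - x3) + l2 * (x2 - x3)) *
        kernelScale (l1 - l2) (l2 - l3) (x1 - x2) (x2 - x3) ^ k := by field_simp
    _ ≤ EkA2Const k * M * exp (l1 * (x1 - x3) + l2 * (x2 - x3)) *
        (4 ^ k / ((1 + (l1 - l2) * (x1 - x2)) ^ k *
          (1 + (l2 - l3) * (x2 - x3)) ^ k * (1 + (l1 - l3) * (x1 - x3)) ^ k)) := by gcongr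
    _ = _ := by ring

lemma exists_le_EkA2 (hk : 0 < k) :
    ∃ m, 0 < m ∧ ∀ l1 l2 l3 x1 x2 x3 : ℝ, l2 < l1 → l3 < l2 → x2 ≤ x1 → x3 ≤ x2 →
      m * (exp (l1 * (x1 - x3) + l2 * (x2 - x3)) /
        ((1 + (l1 - l2) * (x1 - x2)) ^ k * (1 + (l2 - l3) * (x2 - x3)) ^ k *
          (1 + (l1 - l3) * (x1 - x3)) ^ k)) ≤ EkA2 k x1 x2 x3 l1 l2 l3 := by
  obtain ⟨m, hm, hm_le⟩ := exists_le_integral_reducedIntegrand hk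
  have hA := EkA2Const_pos hk
  refine ⟨EkA2Const k * m * (1 / 4) ^ k, by positivity,
    fun l1 l2 l3 x1 x2 x3 h12 h23 hx12 hx23 => ?_⟩
  have ha := sub_pos.2 h12
  have hb := sub_pos.2 h23
  have hc := sub_pos.2 (h23.trans h12)
  have hp := sub_nonneg.2 hx12
  have hq := sub_nonneg.2 hx23
  have hr := sub_nonneg.2 (hx23.trans hx12)
  have hint := hm_le _ _ _ _ ha hb hp hq
  have hscale := rpow_le_rpow (by positivity) (le_kernelScale ha hb hp hq) hk.le
  rw [sub_add_sub_cancel] at hint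
  rw [sub_add_sub_cancel, sub_add_sub_cancel, div_mul_mul_rpow (by positivity) (by positivity)
    (by positivity) (by positivity)] at hscale
  rw [EkA2_eq_integral_reducedIntegrand h12 h23]
  calc _ = EkA2Const k * m * exp (l1 * (x1 - x3) + l2 * (x2 - x3)) *
        ((1 / 4) ^ k / ((1 + (l1 - l2) * (x1 - x2)) ^ k *
          (1 + (l2 - l3) * (x2 - x3)) ^ k * (1 + (l1 - l3) * (x1 - x3)) ^ k)) := by ring
    _ ≤ EkA2Const k * m * exp (l1 * (x1 - x3) + l2 * (x2 - x3)) *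
        kernelScale (l1 - l2) (l2 - l3) (x1 - x2) (x2 - x3) ^ k := by gcongr
    _ = EkA2Const k * exp (l1 * (x1 - x3) + l2 * (x2 - x3)) * (((l1 - l3) ^ (2 * k))⁻¹ *
        (m * ((l1 - l3) ^ (2 * k) * kernelScale (l1 - l2) (l2 - l3) (x1 - x2) (x2 - x3) ^ k))) := by
        field_simp
    _ ≤ _ := by gcongr

theorem estimate_Cplus_general (k : ℝ) (hk : 0 < k) :
    ∃ C : ℝ, 0 < C ∧ ∀ l1 l2 l3 x1 x2 x3 : ℝ,
      l2 < l1 →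
      l3 < l2 →
      x2 ≤ x1 →
      x3 ≤ x2 →
      (C⁻¹ * (exp (l1 * (x1 - x3) + l2 * (x2 - x3)) /
          ((1 + (l1 - l2) * (x1 - x2)) ^ k * (1 + (l2 - l3) * (x2 - x3)) ^ k
            * (1 + (l1 - l3) * (x1 - x3)) ^ k))
        ≤ EkA2 k x1 x2 x3 l1 l2 l3 ∧
      EkA2 k x1 x2 x3 l1 l2 l3
        ≤ C * (exp (l1 * (x1 - x3) + l2 * (x2 - x3)) /
          ((1 + (l1 - l2) * (x1 - x2)) ^ k * (1 + (l2 - l3) * (x2 - x3)) ^ k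
            * (1 + (l1 - l3) * (x1 - x3)) ^ k))) := by
  obtain ⟨M, hM, hM_le⟩ := exists_EkA2_le hk
  obtain ⟨m, hm, hm_le⟩ := exists_le_EkA2 hk
  refine ⟨max M m⁻¹, hM.trans_le (le_max_left _ _), fun l1 l2 l3 x1 x2 x3 h12 h23 hx12 hx23 => ?_⟩
  have hc := sub_pos.2 (h23.trans h12)
  have hr := sub_nonneg.2 (hx23.trans hx12)
  constructor
  · refine le_trans ?_ (hm_le l1 l2 l3 x1 x2 x3 h12 h23 hx12 hx23)
    gcongr
    exact inv_le_of_inv_le₀ hm (le_max_right _ _)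
  · refine (hM_le l1 l2 l3 x1 x2 x3 h12 h23 hx12 hx23).trans ?_
    gcongr
    exact le_max_left _ _

end KernelBounds

/-- Theorem 4.1: sharp estimate of the `A₂` Dunkl kernel. -/
theorem estimate_Cplus (k : ℝ) (hk : 0 < k) :
    ∃ C : ℝ, 0 < C ∧ ∀ l1 l2 l3 x1 x2 x3 : ℝ,
      l1 + l2 + l3 = 0 →
      l2 < l1 →
      l3 < l2 →
      x1 + x2 + x3 = 0 →
      x2 ≤ x1 →
      x3 ≤ x2 →
      (C⁻¹ * (Real.exp (l1 * x1 + l2 * x2 + l3 * x3) /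
          ((1 + (l1 - l2) * (x1 - x2)) ^ k * (1 + (l2 - l3) * (x2 - x3)) ^ k
            * (1 + (l1 - l3) * (x1 - x3)) ^ k))
        ≤ EkA2 k x1 x2 x3 l1 l2 l3 ∧
      EkA2 k x1 x2 x3 l1 l2 l3
        ≤ C * (Real.exp (l1 * x1 + l2 * x2 + l3 * x3) /
          ((1 + (l1 - l2) * (x1 - x2)) ^ k * (1 + (l2 - l3) * (x2 - x3)) ^ k
            * (1 + (l1 - l3) * (x1 - x3)) ^ k))) := by
  obtain ⟨C, hC, hbound⟩ := estimate_Cplus_general k hk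
  refine ⟨C, hC, fun l1 l2 l3 x1 x2 x3 hl h12 h23 _ hx12 hx23 => ?_⟩
  rw [show l1 * x1 + l2 * x2 + l3 * x3 = l1 * (x1 - x3) + l2 * (x2 - x3) by
    linear_combination x3 * hl]
  exact hbound l1 l2 l3 x1 x2 x3 h12 h23 hx12 hx23
end

section
/- (Theorem 4.1(ii), chamber C₂₁₃.) Uniformly over all λ ∈ C⁺ and all X ∈ a with x2 ≥ x1 ≥ x3, one has E_k(X,λ) ≍ e^{⟨λ,X⁺⟩} / [ (1+α_λ α_{X⁺})^{k+1} (1+β_λ β_{X⁺})^{k} (1+γ_λ γ_{X⁺})^{k} ]. -/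
open Real MeasureTheory

/-!
Let `a, b` and `x, y` be the values of the two simple roots at `λ` and at `X⁺`. Substituting
`ν = (λ₁ - s, λ₂ - t)` takes `e^{⟨λ, X⁺⟩}` out of the integral. The rank-one kernel is a Kummer
integral, of size `e^w (1 + 2w)^{-k}` or `e^w (1 + 2w)^{-(k+1)}` according to the sign of its
argument; with this the integrand becomes the product of the Kummer densities
`e^{-(x+y)s} s^{k-1} (a-s)^{k-1}` and `e^{-yt} t^{k-1} (b-t)^k` and of a profile that grows at most
polynomially in `x s` and `y t`. Half of the exponential decay absorbs this growth, so the integral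
has the size of the product of the two Kummer integrals and of the value of the profile at
`s ≍ a / (1 + (x+y) a)` and `t ≍ b / (1 + y b)`, where the densities have their mass.
-/

/-- The positive numbers `u` and `v` agree up to the factor `C`. A uniform estimate `f ≍ g` is the
existence of one `C` with `Comparable C (f i) (g i)` for all `i`. -/
structure Comparable (C u v : ℝ) : Prop where
  left_pos : 0 < u
  right_pos : 0 < v
  left_le : u ≤ C * v
  right_le : v ≤ C * u

namespace Comparable

variable {C D u v u' v' : ℝ}

lemma const_pos (h : Comparable C u v) : 0 < C :=
  pos_of_mul_pos_left (h.left_pos.trans_le h.left_le) h.right_pos.le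

lemma inv_mul_le (h : Comparable C u v) : C⁻¹ * v ≤ u := (inv_mul_le_iff₀ h.const_pos).2 h.right_le

lemma mono (h : Comparable C u v) (hCD : C ≤ D) : Comparable D u v :=
  ⟨h.left_pos, h.right_pos, h.left_le.trans (mul_le_mul_of_nonneg_right hCD h.right_pos.le),
    h.right_le.trans (mul_le_mul_of_nonneg_right hCD h.left_pos.le)⟩

lemma trans {w : ℝ} (h : Comparable C u v) (h' : Comparable D v w) : Comparable (C * D) u w := by
  have hC := h.const_pos
  have hD := h'.const_pos
  refine ⟨h.left_pos, h'.right_pos, ?_, ?_⟩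
  · calc u ≤ C * v := h.left_le
      _ ≤ C * (D * w) := by gcongr; exact h'.left_le
      _ = C * D * w := by ring
  · calc w ≤ D * v := h'.right_le
      _ ≤ D * (C * u) := by gcongr; exact h.right_le
      _ = C * D * u := by ring

lemma add (h : Comparable C u v) (h' : Comparable C u' v') : Comparable C (u + u') (v + v') :=
  ⟨add_pos h.left_pos h'.left_pos, add_pos h.right_pos h'.right_pos,
    by linarith [h.left_le, h'.left_le], by linarith [h.right_le, h'.right_le]⟩

lemma mul_left {c : ℝ} (hc : 0 < c) (h : Comparable C u v) : Comparable C (c * u) (c * v) :=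
  ⟨mul_pos hc h.left_pos, mul_pos hc h.right_pos,
    by linarith [mul_le_mul_of_nonneg_left h.left_le hc.le],
    by linarith [mul_le_mul_of_nonneg_left h.right_le hc.le]⟩

lemma inv (h : Comparable C u v) : Comparable C u⁻¹ v⁻¹ := by
  have hu := h.left_pos
  have hv := h.right_pos
  refine ⟨inv_pos.2 hu, inv_pos.2 hv, ?_, ?_⟩
  · rw [← div_eq_mul_inv, le_div_iff₀ hv, inv_mul_le_iff₀ hu, mul_comm]
    exact h.right_le
  · rw [← div_eq_mul_inv, le_div_iff₀ hu, inv_mul_le_iff₀ hv, mul_comm]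
    exact h.left_le

lemma rpow_of_nonneg {r : ℝ} (h : Comparable C u v) (hr : 0 ≤ r) :
    Comparable (C ^ r) (u ^ r) (v ^ r) := by
  have hC := h.const_pos.le
  have hu := h.left_pos
  have hv := h.right_pos
  refine ⟨by positivity, by positivity, ?_, ?_⟩
  · rw [← Real.mul_rpow hC hv.le]
    exact Real.rpow_le_rpow hu.le h.left_le hr
  · rw [← Real.mul_rpow hC hu.le]
    exact Real.rpow_le_rpow hv.le h.right_le hr

lemma rpow (h : Comparable C u v) (r : ℝ) : Comparable (C ^ |r|) (u ^ r) (v ^ r) := by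
  rcases le_total 0 r with hr | hr
  · rw [abs_of_nonneg hr]
    exact h.rpow_of_nonneg hr
  · have h' := (h.rpow_of_nonneg (neg_nonneg.2 hr)).inv
    rwa [Real.rpow_neg h.left_pos.le, Real.rpow_neg h.right_pos.le, inv_inv, inv_inv,
      ← abs_of_nonpos hr] at h'

end Comparable

lemma comparable_of_mul_le_of_le_mul {c C u v : ℝ} (hc : 0 < c) (hv : 0 < v) (hlower : c * v ≤ u)
    (hupper : u ≤ C * v) : Comparable (max C c⁻¹) u v := by
  have hu : 0 < u := (mul_pos hc hv).trans_le hlower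
  refine ⟨hu, hv, hupper.trans (mul_le_mul_of_nonneg_right (le_max_left _ _) hv.le), ?_⟩
  calc v ≤ c⁻¹ * u := (le_inv_mul_iff₀ hc).2 hlower
    _ ≤ max C c⁻¹ * u := by
      gcongr
      exact le_max_right _ _

lemma comparable_const_mul {c v : ℝ} (hc : 0 < c) (hv : 0 < v) :
    Comparable (max c c⁻¹) (c * v) v :=
  comparable_of_mul_le_of_le_mul hc hv le_rfl le_rfl

lemma comparable_two_of_half_le {u a : ℝ} (ha : 0 < a) (hu : a / 2 ≤ u) (hua : u ≤ a) :
    Comparable 2 u a :=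
  ⟨by linarith, ha, by linarith, by linarith⟩

/-- The effective length of `[0, a]` under the weight `e^{-M s}`; it is comparable to
`min a (1 / M)`. -/
noncomputable def cutoff (M a : ℝ) : ℝ := a / (1 + M * a)

section Cutoff

variable {M M' a a' c : ℝ}

lemma cutoff_pos (hM : 0 ≤ M) (ha : 0 < a) : 0 < cutoff M a := by
  unfold cutoff
  positivity

lemma cutoff_le_self (hM : 0 ≤ M) (ha : 0 < a) : cutoff M a ≤ a :=
  div_le_self ha.le (le_add_of_nonneg_right (by positivity))

lemma mul_cutoff_le_one (hM : 0 ≤ M) (ha : 0 < a) : M * cutoff M a ≤ 1 := by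
  rw [cutoff, ← mul_div_assoc, div_le_one (by positivity)]
  linarith

lemma cutoff_le_cutoff_right (hM : 0 ≤ M) (ha : 0 < a) (h : a ≤ a') :
    cutoff M a ≤ cutoff M a' := by
  have ha' := ha.trans_le h
  unfold cutoff
  rw [div_le_div_iff₀ (by positivity) (by positivity)]
  linarith

lemma cutoff_le_mul_cutoff_left (hM : 0 ≤ M) (hc : 1 ≤ c) (h : M' ≤ c * M) (hM' : 0 ≤ M')
    (ha : 0 < a) : cutoff M a ≤ c * cutoff M' a := by
  unfold cutoff
  rw [← mul_div_assoc, div_le_div_iff₀ (by positivity) (by positivity)]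
  nlinarith [mul_le_mul_of_nonneg_right h (sq_nonneg a), mul_nonneg (sub_nonneg.2 hc) ha.le]

lemma cutoff_mul_le (hM : 0 ≤ M) (ha : 0 < a) (hc : 1 ≤ c) :
    cutoff M (c * a) ≤ c * cutoff M a := by
  unfold cutoff
  rw [← mul_div_assoc]
  gcongr
  exact le_mul_of_one_le_left ha.le hc

end Cutoff

lemma exists_one_add_rpow_le_mul_exp {p c : ℝ} (hp : 0 < p) (hc : 0 < c) :
    ∃ K > 0, ∀ y ≥ 0, (1 + y) ^ p ≤ K * Real.exp (c * y) := by
  have hK : 0 < max 1 (p / c) := lt_max_of_lt_left one_pos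
  refine ⟨max 1 (p / c) ^ p, by positivity, fun y hy => ?_⟩
  have hbase : 1 + y ≤ max 1 (p / c) * Real.exp (c * y / p) := calc
    1 + y = 1 * 1 + p / c * (c * y / p) := by field_simp
    _ ≤ max 1 (p / c) * 1 + max 1 (p / c) * (c * y / p) := by
      gcongr
      · exact le_max_left _ _
      · exact le_max_right _ _
    _ = max 1 (p / c) * (c * y / p + 1) := by ring
    _ ≤ max 1 (p / c) * Real.exp (c * y / p) := by
      gcongr
      exact Real.add_one_le_exp _
  calc (1 + y) ^ p ≤ (max 1 (p / c) * Real.exp (c * y / p)) ^ p := by gcongr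
    _ = max 1 (p / c) ^ p * Real.exp (c * y) := by
      rw [Real.mul_rpow hK.le (Real.exp_pos _).le, ← Real.exp_mul, div_mul_cancel₀ _ hp.ne']

/-- The integrand on `[0, a]` of Kummer's integral for the confluent hypergeometric function. -/
noncomputable def kummerDensity (p q M a s : ℝ) : ℝ :=
  Real.exp (-(M * s)) * s ^ (p - 1) * (a - s) ^ (q - 1)

section Kummer

open Set

variable {p q M a s : ℝ}

lemma kummerDensity_pos (hs : s ∈ Ioo 0 a) : 0 < kummerDensity p q M a s := by
  have h0 := hs.1
  have h1 : 0 < a - s := sub_pos.2 hs.2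
  unfold kummerDensity
  positivity

@[fun_prop]
lemma measurable_kummerDensity : Measurable (kummerDensity p q M a) := by
  unfold kummerDensity
  fun_prop

lemma mul_kummerDensity (hs : 0 < s) :
    s * kummerDensity p q M a s = kummerDensity (p + 1) q M a s := by
  rw [kummerDensity, kummerDensity, add_sub_right_comm, Real.rpow_add_one hs.ne']
  ring

/-- Sum of the contributions of the halves `s ≤ a / 2` and `a / 2 ≤ s`, on each of which one of the
two power factors is comparable to a power of `a`. -/
noncomputable def kummerMajorant (p q M a s : ℝ) : ℝ :=
  2 ^ |q - 1| * a ^ (q - 1) * (s ^ (p - 1) * Real.exp (-(M * s))) +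
    2 ^ |p - 1| * a ^ (p - 1) * Real.exp (-(M * a / 2)) * (a - s) ^ (q - 1)

lemma kummerDensity_le_kummerMajorant (hM : 0 ≤ M) (hs : s ∈ Ioo 0 a) :
    kummerDensity p q M a s ≤ kummerMajorant p q M a s := by
  have h0 := hs.1
  have ha : 0 < a := h0.trans hs.2
  have h1 : 0 < a - s := sub_pos.2 hs.2
  unfold kummerDensity kummerMajorant
  rcases le_total s (a / 2) with h | h
  · have hfar := ((comparable_two_of_half_le (u := a - s) ha (by linarith)
      (by linarith)).rpow (q - 1)).left_le
    calc Real.exp (-(M * s)) * s ^ (p - 1) * (a - s) ^ (q - 1)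
        ≤ Real.exp (-(M * s)) * s ^ (p - 1) * (2 ^ |q - 1| * a ^ (q - 1)) := by gcongr
      _ = 2 ^ |q - 1| * a ^ (q - 1) * (s ^ (p - 1) * Real.exp (-(M * s))) := by ring
      _ ≤ _ := le_add_of_nonneg_right (by positivity)
  · have hfar := ((comparable_two_of_half_le (u := s) ha h hs.2.le).rpow (p - 1)).left_le
    have hexp : M * a / 2 ≤ M * s := by nlinarith
    calc Real.exp (-(M * s)) * s ^ (p - 1) * (a - s) ^ (q - 1)
        ≤ Real.exp (-(M * a / 2)) * (2 ^ |p - 1| * a ^ (p - 1)) * (a - s) ^ (q - 1) := by gcongr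
      _ = 2 ^ |p - 1| * a ^ (p - 1) * Real.exp (-(M * a / 2)) * (a - s) ^ (q - 1) := by ring
      _ ≤ _ := le_add_of_nonneg_left (by positivity)

lemma integrableOn_rpow_sub_one_mul_exp (hp : 0 < p) (ha : 0 ≤ a) :
    IntegrableOn (fun s => s ^ (p - 1) * Real.exp (-(M * s))) (Ioo 0 a) := by
  rw [← intervalIntegrable_iff_integrableOn_Ioo_of_le ha]
  exact (intervalIntegral.intervalIntegrable_rpow' (by linarith)).mul_continuousOn (by fun_prop)

lemma integrableOn_sub_rpow_sub_one (hq : 0 < q) (ha : 0 ≤ a) :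
    IntegrableOn (fun s => (a - s) ^ (q - 1)) (Ioo 0 a) := by
  rw [← intervalIntegrable_iff_integrableOn_Ioo_of_le ha]
  simpa using ((intervalIntegral.intervalIntegrable_rpow' (a := 0) (b := a)
    (show -1 < q - 1 by linarith)).comp_sub_left a).symm

lemma integrableOn_kummerMajorant (hp : 0 < p) (hq : 0 < q) (ha : 0 ≤ a) :
    IntegrableOn (kummerMajorant p q M a) (Ioo 0 a) :=
  ((integrableOn_rpow_sub_one_mul_exp hp ha).const_mul _).add
    ((integrableOn_sub_rpow_sub_one hq ha).const_mul _)

lemma integrableOn_kummerDensity (hp : 0 < p) (hq : 0 < q) (hM : 0 ≤ M) (ha : 0 ≤ a) :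
    IntegrableOn (kummerDensity p q M a) (Ioo 0 a) := by
  refine (integrableOn_kummerMajorant (M := M) hp hq ha).mono'
    measurable_kummerDensity.aestronglyMeasurable
    (ae_restrict_of_forall_mem measurableSet_Ioo fun s hs => ?_)
  rw [Real.norm_of_nonneg (kummerDensity_pos hs).le]
  exact kummerDensity_le_kummerMajorant hM hs

lemma setIntegral_rpow_sub_one_mul_exp_le (hp : 0 < p) (hM : 0 ≤ M) (ha : 0 < a) :
    ∫ s in Ioo 0 a, s ^ (p - 1) * Real.exp (-(M * s)) ≤
      Real.exp 1 * Real.Gamma p * cutoff M a ^ p := by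
  have hr : 0 < M + 1 / a := by positivity
  have hcutoff : cutoff M a = 1 / (M + 1 / a) := by
    unfold cutoff
    field_simp
    ring
  have hint : IntegrableOn (fun s : ℝ => s ^ (p - 1) * Real.exp (-((M + 1 / a) * s))) (Ioi 0) := by
    simpa only [Real.rpow_one, neg_mul] using
      integrableOn_rpow_mul_exp_neg_mul_rpow (p := 1) (s := p - 1) (by linarith) one_pos hr
  calc ∫ s in Ioo 0 a, s ^ (p - 1) * Real.exp (-(M * s))
      ≤ ∫ s in Ioo 0 a, Real.exp 1 * (s ^ (p - 1) * Real.exp (-((M + 1 / a) * s))) := by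
        refine setIntegral_mono_on (integrableOn_rpow_sub_one_mul_exp hp ha.le)
          ((hint.mono_set Ioo_subset_Ioi_self).const_mul _) measurableSet_Ioo fun s hs => ?_
        have hs0 := hs.1
        have hs1 : s / a ≤ 1 := (div_le_one ha).2 hs.2.le
        rw [mul_left_comm, ← Real.exp_add]
        gcongr
        linarith [show (M + 1 / a) * s = M * s + s / a by ring]
    _ ≤ Real.exp 1 * ∫ s in Ioi 0, s ^ (p - 1) * Real.exp (-((M + 1 / a) * s)) := by
        rw [integral_const_mul]
        refine mul_le_mul_of_nonneg_left (setIntegral_mono_set hint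
          (ae_restrict_of_forall_mem measurableSet_Ioi fun s (hs : 0 < s) => ?_)
          Ioo_subset_Ioi_self.eventuallyLE) (Real.exp_pos 1).le
        simp only [Pi.zero_apply]
        positivity
    _ = Real.exp 1 * Real.Gamma p * cutoff M a ^ p := by
        rw [Real.integral_rpow_mul_exp_neg_mul_Ioi hp hr, hcutoff]
        ring

lemma setIntegral_sub_rpow_sub_one (hq : 0 < q) (ha : 0 ≤ a) :
    ∫ s in Ioo 0 a, (a - s) ^ (q - 1) = a ^ q / q := by
  rw [← integral_Ioc_eq_integral_Ioo, ← intervalIntegral.integral_of_le ha,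
    intervalIntegral.integral_comp_sub_left fun s => s ^ (q - 1),
    integral_rpow (Or.inl (by linarith))]
  simp [Real.zero_rpow hq.ne']

lemma exists_setIntegral_kummerDensity_le (hp : 0 < p) (hq : 0 < q) :
    ∃ C > 0, ∀ M ≥ 0, ∀ a > 0,
      ∫ s in Ioo 0 a, kummerDensity p q M a s ≤ C * (a ^ (q - 1) * cutoff M a ^ p) := by
  obtain ⟨K, hK, hexp⟩ := exists_one_add_rpow_le_mul_exp hp (show (0 : ℝ) < 1 / 2 by norm_num)
  refine ⟨2 ^ |q - 1| * (Real.exp 1 * Real.Gamma p) + 2 ^ |p - 1| * K / q, by positivity,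
    fun M hM a ha => ?_⟩
  have hdecay : a ^ p * Real.exp (-(M * a / 2)) ≤ K * cutoff M a ^ p := by
    have h := hexp (M * a) (by positivity)
    rw [cutoff, Real.div_rpow ha.le (by positivity), Real.exp_neg, ← div_eq_mul_inv,
      ← mul_div_assoc, div_le_div_iff₀ (by positivity) (by positivity),
      show M * a / 2 = 1 / 2 * (M * a) by ring]
    nlinarith [Real.rpow_pos_of_pos ha p]
  calc ∫ s in Ioo 0 a, kummerDensity p q M a s
      ≤ ∫ s in Ioo 0 a, kummerMajorant p q M a s :=
        setIntegral_mono_on (integrableOn_kummerDensity hp hq hM ha.le)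
          (integrableOn_kummerMajorant hp hq ha.le) measurableSet_Ioo
          fun s hs => kummerDensity_le_kummerMajorant hM hs
    _ = 2 ^ |q - 1| * a ^ (q - 1) * (∫ s in Ioo 0 a, s ^ (p - 1) * Real.exp (-(M * s))) +
          2 ^ |p - 1| * a ^ (p - 1) * Real.exp (-(M * a / 2)) * (a ^ q / q) := by
        unfold kummerMajorant
        rw [integral_add ((integrableOn_rpow_sub_one_mul_exp hp ha.le).const_mul _)
          ((integrableOn_sub_rpow_sub_one hq ha.le).const_mul _), integral_const_mul,
          integral_const_mul, setIntegral_sub_rpow_sub_one hq ha.le]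
    _ = 2 ^ |q - 1| * a ^ (q - 1) * (∫ s in Ioo 0 a, s ^ (p - 1) * Real.exp (-(M * s))) +
          2 ^ |p - 1| / q * a ^ (q - 1) * (a ^ p * Real.exp (-(M * a / 2))) := by
        rw [Real.rpow_sub_one ha.ne', Real.rpow_sub_one ha.ne']
        ring
    _ ≤ 2 ^ |q - 1| * a ^ (q - 1) * (Real.exp 1 * Real.Gamma p * cutoff M a ^ p) +
          2 ^ |p - 1| / q * a ^ (q - 1) * (K * cutoff M a ^ p) := by
        gcongr
        exact setIntegral_rpow_sub_one_mul_exp_le hp hM ha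
    _ = _ := by ring

/-- The part of `[0, a]` that carries a fixed proportion of the mass of `kummerDensity p q M a`. -/
def bulk (M a : ℝ) : Set ℝ := Icc (cutoff M a / 4) (cutoff M a / 2)

lemma measurableSet_bulk : MeasurableSet (bulk M a) := measurableSet_Icc

lemma bulk_subset_Ioo (hM : 0 ≤ M) (ha : 0 < a) : bulk M a ⊆ Ioo 0 a := fun s hs =>
  ⟨by linarith [hs.1, cutoff_pos hM ha], by linarith [hs.2, cutoff_le_self hM ha]⟩

lemma le_kummerDensity_of_mem_bulk (p q : ℝ) (hM : 0 ≤ M) (ha : 0 < a) (hs : s ∈ bulk M a) :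
    Real.exp (-1) * (2 ^ |p - 1|)⁻¹ * (2 ^ |q - 1|)⁻¹ * ((cutoff M a / 2) ^ (p - 1) * a ^ (q - 1)) ≤
      kummerDensity p q M a s := by
  have hL := cutoff_pos hM ha
  have hs0 := (bulk_subset_Ioo hM ha hs).1
  have hnear := ((comparable_two_of_half_le (half_pos hL)
    (by linarith [hs.1]) hs.2).rpow (p - 1)).inv_mul_le
  have hfar := ((comparable_two_of_half_le (u := a - s) ha
    (by linarith [hs.2, cutoff_le_self hM ha]) (by linarith)).rpow (q - 1)).inv_mul_le
  have hexp : M * s ≤ 1 := by nlinarith [hs.2, mul_cutoff_le_one hM ha]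
  calc Real.exp (-1) * (2 ^ |p - 1|)⁻¹ * (2 ^ |q - 1|)⁻¹ *
        ((cutoff M a / 2) ^ (p - 1) * a ^ (q - 1))
      = Real.exp (-1) * ((2 ^ |p - 1|)⁻¹ * (cutoff M a / 2) ^ (p - 1)) *
          ((2 ^ |q - 1|)⁻¹ * a ^ (q - 1)) := by ring
    _ ≤ kummerDensity p q M a s := by
      unfold kummerDensity
      gcongr

lemma exists_le_setIntegral_bulk_kummerDensity (hp : 0 < p) (hq : 0 < q) :
    ∃ c > 0, ∀ M ≥ 0, ∀ a > 0,
      c * (a ^ (q - 1) * cutoff M a ^ p) ≤ ∫ s in bulk M a, kummerDensity p q M a s := by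
  refine ⟨Real.exp (-1) * (2 ^ |p - 1|)⁻¹ * (2 ^ |q - 1|)⁻¹ * (2 * 2 ^ p)⁻¹, by positivity,
    fun M hM a ha => ?_⟩
  have hL := cutoff_pos hM ha
  calc _ = ∫ _ in bulk M a, Real.exp (-1) * (2 ^ |p - 1|)⁻¹ * (2 ^ |q - 1|)⁻¹ *
          ((cutoff M a / 2) ^ (p - 1) * a ^ (q - 1)) := by
        rw [setIntegral_const, bulk, Real.volume_real_Icc_of_le (by linarith),
          Real.rpow_sub_one (half_pos hL).ne', Real.div_rpow hL.le zero_le_two, smul_eq_mul]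
        field_simp
        norm_num
    _ ≤ ∫ s in bulk M a, kummerDensity p q M a s :=
        setIntegral_mono_on (integrableOn_const (by simp [bulk]))
          ((integrableOn_kummerDensity hp hq hM ha.le).mono_set (bulk_subset_Ioo hM ha))
          measurableSet_bulk fun s hs => le_kummerDensity_of_mem_bulk p q hM ha hs

theorem exists_setIntegral_kummerDensity_comparable (hp : 0 < p) (hq : 0 < q) :
    ∃ C, ∀ M ≥ 0, ∀ a > 0,
      Comparable C (∫ s in Ioo 0 a, kummerDensity p q M a s) (a ^ (q - 1) * cutoff M a ^ p) := by
  obtain ⟨C, -, hle⟩ := exists_setIntegral_kummerDensity_le hp hq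
  obtain ⟨c, hc, hge⟩ := exists_le_setIntegral_bulk_kummerDensity hp hq
  refine ⟨max C c⁻¹, fun M hM a ha => ?_⟩
  have hL := cutoff_pos hM ha
  have hlower : c * (a ^ (q - 1) * cutoff M a ^ p) ≤
      ∫ s in Ioo 0 a, kummerDensity p q M a s :=
    (hge M hM a ha).trans <| setIntegral_mono_set (integrableOn_kummerDensity hp hq hM ha.le)
      (ae_restrict_of_forall_mem measurableSet_Ioo fun s hs => (kummerDensity_pos hs).le)
      (bulk_subset_Ioo hM ha).eventuallyLE
  exact comparable_of_mul_le_of_le_mul hc (by positivity) hlower (hle M hM a ha)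

lemma exists_kummerDensity_mul_rpow_le {r : ℝ} (hr : 0 < r) :
    ∃ K > 0, ∀ p q M x a s, 0 ≤ x → x ≤ M → s ∈ Ioo 0 a →
      kummerDensity p q M a s * (1 + x * s) ^ r ≤ K * kummerDensity p q (M / 2) a s := by
  obtain ⟨K, hK, hexp⟩ := exists_one_add_rpow_le_mul_exp hr (show (0 : ℝ) < 1 / 2 by norm_num)
  refine ⟨K, hK, fun p q M x a s hx hxM hs => ?_⟩
  have h0 := hs.1
  have hM := hx.trans hxM
  have hsplit : Real.exp (-(M * s)) * Real.exp (1 / 2 * (M * s)) = Real.exp (-(M / 2 * s)) := by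
    rw [← Real.exp_add]
    ring_nf
  calc kummerDensity p q M a s * (1 + x * s) ^ r
      ≤ kummerDensity p q M a s * (1 + M * s) ^ r := by
        have := kummerDensity_pos (p := p) (q := q) (M := M) hs
        gcongr
    _ ≤ kummerDensity p q M a s * (K * Real.exp (1 / 2 * (M * s))) :=
        mul_le_mul_of_nonneg_left (hexp _ (by positivity)) (kummerDensity_pos hs).le
    _ = K * kummerDensity p q (M / 2) a s := by
        rw [kummerDensity, kummerDensity, ← hsplit]
        ring

end Kummer

section RankOne

open Set

variable {k : ℝ}

lemma Erk1_eq_setIntegral_kummerDensity (k x v : ℝ) :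
    Erk1 k x v = Real.Gamma (k + 1 / 2) / (√π * Real.Gamma k) *
      (Real.exp (x * v) * ∫ s in Ioo 0 2, kummerDensity k (k + 1) (x * v) 2 s) := by
  have hsubst := intervalIntegral.integral_comp_sub_left (a := 0) (b := 2)
    (fun z => Real.exp (z * x * v) * (1 - z) ^ (k - 1) * (1 + z) ^ k) 1
  rw [show (1 : ℝ) - 2 = -1 by norm_num, sub_zero] at hsubst
  rw [Erk1, ← hsubst, ← integral_Ioc_eq_integral_Ioo, ← intervalIntegral.integral_of_le zero_le_two]
  congr 1
  rw [← intervalIntegral.integral_const_mul]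
  apply intervalIntegral.integral_congr
  intro s _
  have hexp : Real.exp ((1 - s) * x * v) = Real.exp (x * v) * Real.exp (-(x * v * s)) := by
    rw [← Real.exp_add]
    ring_nf
  simp only [kummerDensity, hexp, sub_sub_cancel, add_sub_cancel_right,
    show 1 + (1 - s) = 2 - s by ring]
  ring

lemma Erk1_neg_eq_setIntegral_kummerDensity (k x v : ℝ) :
    Erk1 k (-x) v = Real.Gamma (k + 1 / 2) / (√π * Real.Gamma k) *
      (Real.exp (x * v) * ∫ s in Ioo 0 2, kummerDensity (k + 1) k (x * v) 2 s) := by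
  have hsubst := intervalIntegral.integral_comp_sub_right (a := 0) (b := 2)
    (fun z => Real.exp (z * -x * v) * (1 - z) ^ (k - 1) * (1 + z) ^ k) 1
  rw [show (2 : ℝ) - 1 = 1 by norm_num, zero_sub] at hsubst
  rw [Erk1, ← hsubst, ← integral_Ioc_eq_integral_Ioo, ← intervalIntegral.integral_of_le zero_le_two]
  congr 1
  rw [← intervalIntegral.integral_const_mul]
  apply intervalIntegral.integral_congr
  intro s _
  have hexp : Real.exp ((s - 1) * -x * v) = Real.exp (x * v) * Real.exp (-(x * v * s)) := by
    rw [← Real.exp_add]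
    ring_nf
  simp only [kummerDensity, hexp, add_sub_cancel, add_sub_cancel_right,
    show 1 - (s - 1) = 2 - s by ring]
  ring

lemma exists_setIntegral_kummerDensity_two_comparable {p q : ℝ} (hp : 0 < p) (hq : 0 < q) :
    ∃ C, ∀ M ≥ 0,
      Comparable C (∫ s in Ioo 0 2, kummerDensity p q M 2 s) ((1 + 2 * M) ^ p)⁻¹ := by
  obtain ⟨C, hC⟩ := exists_setIntegral_kummerDensity_comparable hp hq
  refine ⟨C * max (2 ^ (q - 1) * 2 ^ p) (2 ^ (q - 1) * 2 ^ p)⁻¹,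
    fun M hM => (hC M hM 2 two_pos).trans ?_⟩
  have hcutoff : (2 : ℝ) ^ (q - 1) * cutoff M 2 ^ p =
      2 ^ (q - 1) * 2 ^ p * ((1 + 2 * M) ^ p)⁻¹ := by
    rw [cutoff, Real.div_rpow zero_le_two (by positivity), mul_comm M]
    ring
  rw [hcutoff]
  exact comparable_const_mul (by positivity) (by positivity)

theorem exists_Erk1_comparable (hk : 0 < k) :
    ∃ C, ∀ x v, 0 ≤ x * v →
      Comparable C (Erk1 k x v) (Real.exp (x * v) * ((1 + 2 * (x * v)) ^ k)⁻¹) ∧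
      Comparable C (Erk1 k (-x) v) (Real.exp (x * v) * ((1 + 2 * (x * v)) ^ (k + 1))⁻¹) := by
  obtain ⟨C₁, h₁⟩ := exists_setIntegral_kummerDensity_two_comparable hk (add_pos hk one_pos)
  obtain ⟨C₂, h₂⟩ := exists_setIntegral_kummerDensity_two_comparable (add_pos hk one_pos) hk
  have hc : 0 < Real.Gamma (k + 1 / 2) / (√π * Real.Gamma k) := by positivity
  set c := Real.Gamma (k + 1 / 2) / (√π * Real.Gamma k)
  refine ⟨max c c⁻¹ * max C₁ C₂, fun x v hxv => ⟨?_, ?_⟩⟩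
  · rw [Erk1_eq_setIntegral_kummerDensity]
    exact (comparable_const_mul hc (mul_pos (Real.exp_pos _) (h₁ _ hxv).left_pos)).trans
      (((h₁ _ hxv).mono (le_max_left C₁ C₂)).mul_left (Real.exp_pos _))
  · rw [Erk1_neg_eq_setIntegral_kummerDensity]
    exact (comparable_const_mul hc (mul_pos (Real.exp_pos _) (h₂ _ hxv).left_pos)).trans
      (((h₂ _ hxv).mono (le_max_right C₁ C₂)).mul_left (Real.exp_pos _))

@[fun_prop]
lemma measurable_Erk1 (k x : ℝ) : Measurable (Erk1 k x) := by
  unfold Erk1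
  refine Measurable.const_mul ?_ _
  simp_rw [intervalIntegral.integral_of_le (show (-1 : ℝ) ≤ 1 by norm_num)]
  refine (StronglyMeasurable.integral_prod_right (f := fun v z =>
    Real.exp (z * x * v) * (1 - z) ^ (k - 1) * (1 + z) ^ k)
    (Measurable.stronglyMeasurable ?_)).measurable
  unfold Function.uncurry
  fun_prop

end RankOne

/-- The integrand of `EkA2` at `ν = (λ₁ - s, λ₂ - t)`, where `a` and `b` are the values of the
simple roots at `λ`, `x` and `y` their values at `X⁺ = (x₂, x₁, x₃)`, and the factor
`e^{⟨λ, X⁺⟩}` is taken out. -/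
noncomputable def dunklIntegrand (k x y a b s t : ℝ) : ℝ :=
  Real.exp (-((x / 2 + y) * (s + t) + x * a / 2)) * ((a + b - s) * (b - t)) *
    (s * (a + t) * (a - s) * t * (a + b - s) * (b - t)) ^ (k - 1) *
    ((a - s) * (a + t) * Erk1 k (-(x / 2)) (a - s + t) + s * t * Erk1 k (x / 2) (a - s + t))

/-- The ratio of `dunklIntegrand` to a product of two Kummer densities, up to bounded factors. -/
noncomputable def dunklProfile (k x a b s t : ℝ) : ℝ :=
  (a + b - s) ^ k * (a + t) ^ (k - 1) * (a - s + t) * ((1 + x * (a - s + t)) ^ (k + 1))⁻¹ *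
    (a + x * s * t)

section Integrand

open Set

variable {k x y a b s t : ℝ}

theorem EkA2_eq_integral_dunklIntegrand (k x1 x2 x3 l1 l2 l3 : ℝ) :
    EkA2 k x1 x2 x3 l1 l2 l3 =
      3 * Real.Gamma (3 * k) / (Vlam l1 l2 l3 ^ (2 * k) * Real.Gamma k ^ 2) *
        (Real.exp (l1 * (x2 - x3) + l2 * (x1 - x3)) *
          ∫ t in (0 : ℝ)..(l2 - l3), ∫ s in (0 : ℝ)..(l1 - l2),
            dunklIntegrand k (x2 - x1) (x1 - x3) (l1 - l2) (l2 - l3) s t) := by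
  have hsubst₁ := fun f : ℝ → ℝ =>
    intervalIntegral.integral_comp_sub_left (a := 0) (b := l1 - l2) f l1
  have hsubst₂ := fun f : ℝ → ℝ =>
    intervalIntegral.integral_comp_sub_left (a := 0) (b := l2 - l3) f l2
  simp only [sub_sub_cancel, sub_zero] at hsubst₁ hsubst₂
  rw [EkA2, ← hsubst₂]
  congr 1
  rw [← intervalIntegral.integral_const_mul]
  apply intervalIntegral.integral_congr
  intro t _
  simp only
  rw [← hsubst₁, ← intervalIntegral.integral_const_mul]
  apply intervalIntegral.integral_congr
  intro s _
  have hexp : Real.exp ((x1 + x2 - 2 * x3) * (l1 - s + (l2 - t)) / 2) =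
      Real.exp (l1 * (x2 - x3) + l2 * (x1 - x3)) *
        Real.exp (-(((x2 - x1) / 2 + (x1 - x3)) * (s + t) + (x2 - x1) * (l1 - l2) / 2)) := by
    rw [← Real.exp_add]
    ring_nf
  simp only [dunklIntegrand, Wk, hexp, sub_sub_cancel,
    show (x1 - x2) / 2 = -((x2 - x1) / 2) by ring, show -(x1 - x2) / 2 = (x2 - x1) / 2 by ring,
    show l1 - s - (l2 - t) = l1 - l2 - s + t by ring, show l1 - s - l2 = l1 - l2 - s by ring,
    show l1 - (l2 - t) = l1 - l2 + t by ring,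
    show l1 - s - l3 = l1 - l2 + (l2 - l3) - s by ring, show l2 - t - l3 = l2 - l3 - t by ring]
  ring

lemma measurable_dunklIntegrand (k x y a b : ℝ) :
    Measurable fun z : ℝ × ℝ => dunklIntegrand k x y a b z.2 z.1 := by
  unfold dunklIntegrand
  fun_prop

/-- The two summands of the integrand recombine through
`(a - s) (a + t) + s t (1 + x v) = v (a + x s t)`, where `v = a - s + t`. -/
lemma kummerDensity_mul_dunklProfile (hx : 0 ≤ x) (hs : s ∈ Ioo 0 a) (ht : t ∈ Ioo 0 b) :
    Real.exp (-((x / 2 + y) * (s + t) + x * a / 2)) * ((a + b - s) * (b - t)) *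
      (s * (a + t) * (a - s) * t * (a + b - s) * (b - t)) ^ (k - 1) *
      ((a - s) * (a + t) * (Real.exp (x / 2 * (a - s + t)) *
          ((1 + 2 * (x / 2 * (a - s + t))) ^ (k + 1))⁻¹) +
        s * t * (Real.exp (x / 2 * (a - s + t)) * ((1 + 2 * (x / 2 * (a - s + t))) ^ k)⁻¹)) =
    kummerDensity k k (x + y) a s * kummerDensity k (k + 1) y b t * dunklProfile k x a b s t := by
  obtain ⟨hs0, hsa⟩ := hs
  obtain ⟨ht0, htb⟩ := ht
  have has : 0 < a - s := sub_pos.2 hsa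
  have hbt : 0 < b - t := sub_pos.2 htb
  have hat : 0 < a + t := by linarith
  have habs : 0 < a + b - s := by linarith
  have hv : 0 < 1 + x * (a - s + t) := by positivity
  have hexp : Real.exp (-((x / 2 + y) * (s + t) + x * a / 2)) * Real.exp (x / 2 * (a - s + t)) =
      Real.exp (-((x + y) * s)) * Real.exp (-(y * t)) := by
    rw [← Real.exp_add, ← Real.exp_add]
    ring_nf
  have hweight : ((a + b - s) * (b - t)) *
      (s * (a + t) * (a - s) * t * (a + b - s) * (b - t)) ^ (k - 1) =
      s ^ (k - 1) * (a - s) ^ (k - 1) * (t ^ (k - 1) * (b - t) ^ k) *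
        ((a + b - s) ^ k * (a + t) ^ (k - 1)) := by
    rw [← sub_add_cancel k 1, Real.rpow_add_one hbt.ne', Real.rpow_add_one habs.ne',
      add_sub_cancel_right, Real.mul_rpow (by positivity) hbt.le,
      Real.mul_rpow (by positivity) habs.le, Real.mul_rpow (by positivity) ht0.le,
      Real.mul_rpow (by positivity) has.le, Real.mul_rpow hs0.le hat.le]
    ring
  have hsum : (a - s) * (a + t) * ((1 + x * (a - s + t)) ^ (k + 1))⁻¹ +
      s * t * ((1 + x * (a - s + t)) ^ k)⁻¹ =
      (a - s + t) * ((1 + x * (a - s + t)) ^ (k + 1))⁻¹ * (a + x * s * t) := by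
    rw [Real.rpow_add_one hv.ne']
    field_simp
    ring
  rw [show 2 * (x / 2 * (a - s + t)) = x * (a - s + t) by ring]
  simp only [kummerDensity, dunklProfile, add_sub_cancel_right]
  calc _ = Real.exp (-((x / 2 + y) * (s + t) + x * a / 2)) * Real.exp (x / 2 * (a - s + t)) *
        (((a + b - s) * (b - t)) *
          (s * (a + t) * (a - s) * t * (a + b - s) * (b - t)) ^ (k - 1)) *
        ((a - s) * (a + t) * ((1 + x * (a - s + t)) ^ (k + 1))⁻¹ +
          s * t * ((1 + x * (a - s + t)) ^ k)⁻¹) := by ring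
    _ = _ := by
      rw [hexp, hweight, hsum]
      ring

theorem exists_dunklIntegrand_comparable (hk : 0 < k) :
    ∃ C, ∀ x ≥ 0, ∀ y a b s t, s ∈ Ioo 0 a → t ∈ Ioo 0 b →
      Comparable C (dunklIntegrand k x y a b s t)
        (kummerDensity k k (x + y) a s * kummerDensity k (k + 1) y b t *
          dunklProfile k x a b s t) := by
  obtain ⟨C, hC⟩ := exists_Erk1_comparable hk
  refine ⟨C, fun x hx y a b s t hs ht => ?_⟩
  rw [← kummerDensity_mul_dunklProfile hx hs ht]
  obtain ⟨hs0, hsa⟩ := hs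
  obtain ⟨ht0, htb⟩ := ht
  have hat : 0 < a + t := by linarith
  have habs : 0 < a + b - s := by linarith
  obtain ⟨hpos, hneg⟩ := hC (x / 2) (a - s + t) (by positivity)
  exact ((hneg.mul_left (by positivity)).add (hpos.mul_left (by positivity))).mul_left
    (by positivity)

end Integrand

section Profile

open Set

variable {k x y a b s t : ℝ}

/-- The value of `dunklProfile k x a b s t` up to a bounded factor as long as `s` is at most `a / 2`
and at most the decay length `1 / x`. -/
noncomputable def dunklProfileModel (k x a b s t : ℝ) : ℝ :=
  (a + b) ^ k * cutoff x (a + t) ^ k * ((a + x * s * t) / (1 + x * (a + t)))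

lemma dunklProfileModel_eq (k b s : ℝ) (hx : 0 ≤ x) (hat : 0 < a + t) :
    dunklProfileModel k x a b s t =
      (a + b) ^ k * (a + t) ^ (k - 1) * (a + t) * ((1 + x * (a + t)) ^ (k + 1))⁻¹ *
        (a + x * s * t) := by
  have hxat : 0 < 1 + x * (a + t) := by positivity
  rw [dunklProfileModel, cutoff, Real.div_rpow hat.le hxat.le, Real.rpow_add_one hxat.ne',
    mul_assoc _ ((a + t) ^ (k - 1)), ← Real.rpow_add_one hat.ne', sub_add_cancel]
  field_simp

lemma dunklProfile_le (hk : 0 < k) (hx : 0 ≤ x) (hs : s ∈ Ioo 0 a) (ht : t ∈ Ioo 0 b) :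
    dunklProfile k x a b s t ≤ (1 + x * s) ^ (k + 1) * dunklProfileModel k x a b s t := by
  obtain ⟨hs0, hsa⟩ := hs
  obtain ⟨ht0, htb⟩ := ht
  have ha := hs0.trans hsa
  have hb := ht0.trans htb
  have hat : 0 < a + t := by linarith
  have hv : 0 < a - s + t := by linarith
  have hbase : 1 + x * (a + t) ≤ (1 + x * s) * (1 + x * (a - s + t)) := by
    nlinarith [mul_nonneg (mul_nonneg hx hs0.le) (mul_nonneg hx hv.le)]
  have hinv : ((1 + x * (a - s + t)) ^ (k + 1))⁻¹ ≤
      (1 + x * s) ^ (k + 1) * ((1 + x * (a + t)) ^ (k + 1))⁻¹ := by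
    rw [← div_eq_mul_inv, le_div_iff₀ (by positivity), inv_mul_le_iff₀ (by positivity),
      ← Real.mul_rpow (by positivity) (by positivity)]
    exact Real.rpow_le_rpow (by positivity) (hbase.trans_eq (mul_comm _ _)) (by positivity)
  rw [dunklProfileModel_eq k b s hx hat]
  calc dunklProfile k x a b s t
      ≤ (a + b) ^ k * (a + t) ^ (k - 1) * (a + t) *
          ((1 + x * s) ^ (k + 1) * ((1 + x * (a + t)) ^ (k + 1))⁻¹) * (a + x * s * t) := by
        unfold dunklProfile
        gcongr <;> linarith
    _ = _ := by ring

lemma le_dunklProfile (hk : 0 < k) (hx : 0 ≤ x) (hs0 : 0 < s) (hsa : s ≤ a / 2)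
    (ht : t ∈ Ioo 0 b) :
    dunklProfileModel k x a b s t ≤ 2 ^ (k + 1) * dunklProfile k x a b s t := by
  obtain ⟨ht0, htb⟩ := ht
  have ha : 0 < a := by linarith
  have hat : 0 < a + t := by linarith
  have hv : 0 < a - s + t := by linarith
  have habs : 0 < a + b - s := by linarith
  have hab : (a + b) ^ k ≤ 2 ^ k * (a + b - s) ^ k := by
    rw [← Real.mul_rpow zero_le_two (by linarith)]
    exact Real.rpow_le_rpow (by linarith) (by linarith) hk.le
  rw [dunklProfileModel_eq k b s hx hat]
  calc (a + b) ^ k * (a + t) ^ (k - 1) * (a + t) * ((1 + x * (a + t)) ^ (k + 1))⁻¹ *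
        (a + x * s * t)
      ≤ (2 ^ k * (a + b - s) ^ k) * (a + t) ^ (k - 1) * (2 * (a - s + t)) *
          ((1 + x * (a - s + t)) ^ (k + 1))⁻¹ * (a + x * s * t) := by
        gcongr <;> linarith
    _ = 2 ^ (k + 1) * dunklProfile k x a b s t := by
        rw [dunklProfile, Real.rpow_add_one two_ne_zero]
        ring

lemma cutoff_add_le (hx : 0 ≤ x) (hy : 0 ≤ y) (ha : 0 < a) (ht : t ∈ Ioo 0 b) :
    cutoff x (a + t) ≤ (1 + y * t) * cutoff x (a + cutoff y b) := by
  obtain ⟨ht0, htb⟩ := ht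
  have hb := ht0.trans htb
  have hB := cutoff_pos hy hb
  have ht_le : t ≤ (1 + y * t) * cutoff y b := by
    rw [cutoff, mul_div_assoc', le_div_iff₀ (by positivity)]
    linarith
  have hyt : 1 ≤ 1 + y * t := le_add_of_nonneg_right (by positivity)
  calc cutoff x (a + t) ≤ cutoff x ((1 + y * t) * (a + cutoff y b)) :=
        cutoff_le_cutoff_right hx (by positivity) (by nlinarith)
    _ ≤ _ := cutoff_mul_le hx (by positivity) hyt

lemma dunklProfile_le_separated (hk : 0 < k) (hx : 0 ≤ x) (hy : 0 ≤ y) (hs : s ∈ Ioo 0 a)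
    (ht : t ∈ Ioo 0 b) :
    dunklProfile k x a b s t ≤ ((a + b) * cutoff x (a + cutoff y b)) ^ k *
      (((1 + x * s) ^ (k + 1) * (cutoff x a + s)) * (1 + y * t) ^ k) := by
  have hs0 := hs.1
  have ha := hs0.trans hs.2
  have ht0 := ht.1
  have hb := ht0.trans ht.2
  have hB := cutoff_pos hy hb
  have hA := cutoff_pos hx (add_pos ha hB)
  have hcut : cutoff x (a + t) ^ k ≤ (1 + y * t) ^ k * cutoff x (a + cutoff y b) ^ k := by
    rw [← Real.mul_rpow (by positivity) hA.le]
    exact Real.rpow_le_rpow (cutoff_pos hx (by positivity)).le (cutoff_add_le hx hy ha ht) hk.le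
  have hratio : (a + x * s * t) / (1 + x * (a + t)) ≤ cutoff x a + s := by
    rw [add_div, cutoff]
    refine add_le_add ?_ ?_
    · gcongr
      linarith
    · rw [div_le_iff₀ (by positivity)]
      nlinarith [mul_nonneg hs0.le (mul_nonneg hx ha.le)]
  calc dunklProfile k x a b s t
      ≤ (1 + x * s) ^ (k + 1) * dunklProfileModel k x a b s t := dunklProfile_le hk hx hs ht
    _ ≤ (1 + x * s) ^ (k + 1) * ((a + b) ^ k *
          ((1 + y * t) ^ k * cutoff x (a + cutoff y b) ^ k) * (cutoff x a + s)) := by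
        unfold dunklProfileModel
        gcongr
    _ = _ := by
        rw [Real.mul_rpow (by positivity) hA.le]
        ring

lemma cutoff_le_mul_div_of_mem_bulk (hx : 0 ≤ x) (hy : 0 ≤ y) (ha : 0 < a) (hb : 0 < b)
    (hs : s ∈ bulk (x + y) a) (ht : t ∈ bulk y b) :
    cutoff x a ≤ 4 * ((a + x * s * t) / (1 + x * (a + t))) := by
  have hxy := add_nonneg hx hy
  have hs0 := (bulk_subset_Ioo hxy ha hs).1
  have ht0 := (bulk_subset_Ioo hy hb ht).1
  have hsa : s ≤ a / 2 := by linarith [hs.2, cutoff_le_self hxy ha]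
  have ha_le : a ≤ 4 * s * (1 + (x + y) * a) := by
    have := hs.1
    rw [cutoff, div_div, div_le_iff₀ (by positivity)] at this
    linarith
  have hyt : y * t ≤ 1 / 2 := by nlinarith [ht.2, mul_cutoff_le_one hy hb]
  rw [cutoff, ← mul_div_assoc, div_le_div_iff₀ (by positivity) (by positivity)]
  linarith [mul_le_mul_of_nonneg_right ha_le (mul_nonneg hx ht0.le),
    mul_le_mul_of_nonneg_left hyt (by positivity : 0 ≤ s * a * x),
    mul_le_mul_of_nonneg_right hsa (mul_nonneg hx ha.le),
    mul_nonneg hx (mul_nonneg ha.le ha.le)]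

lemma le_dunklProfile_of_mem_bulk (hk : 0 < k) (hx : 0 ≤ x) (hy : 0 ≤ y) (ha : 0 < a) (hb : 0 < b)
    (hs : s ∈ bulk (x + y) a) (ht : t ∈ bulk y b) :
    ((a + b) * cutoff x (a + cutoff y b)) ^ k * cutoff x a ≤
      8 ^ (k + 1) * dunklProfile k x a b s t := by
  have hxy := add_nonneg hx hy
  obtain ⟨hs0, -⟩ := bulk_subset_Ioo hxy ha hs
  have ht' := bulk_subset_Ioo hy hb ht
  have ht0 := ht'.1
  have hB := cutoff_pos hy hb
  have hA := cutoff_pos hx (add_pos ha hB)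
  have hsa : s ≤ a / 2 := by linarith [hs.2, cutoff_le_self hxy ha]
  have hcut : cutoff x (a + cutoff y b) ^ k ≤ 4 ^ k * cutoff x (a + t) ^ k := by
    have hat := cutoff_pos hx (add_pos ha ht0)
    rw [← Real.mul_rpow (by norm_num) hat.le]
    refine Real.rpow_le_rpow hA.le ?_ hk.le
    calc cutoff x (a + cutoff y b) ≤ cutoff x (4 * (a + t)) :=
          cutoff_le_cutoff_right hx (by positivity) (by linarith [ht.1])
      _ ≤ _ := cutoff_mul_le hx (by positivity) (by norm_num)
  have hratio := cutoff_le_mul_div_of_mem_bulk hx hy ha hb hs ht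
  rw [Real.mul_rpow (by positivity) hA.le]
  calc (a + b) ^ k * cutoff x (a + cutoff y b) ^ k * cutoff x a
      ≤ (a + b) ^ k * (4 ^ k * cutoff x (a + t) ^ k) *
          (4 * ((a + x * s * t) / (1 + x * (a + t)))) := by
        have := cutoff_pos hx (add_pos ha ht0)
        have := cutoff_pos hx ha
        gcongr
    _ = 4 ^ (k + 1) * dunklProfileModel k x a b s t := by
        rw [dunklProfileModel, Real.rpow_add_one four_ne_zero]
        ring
    _ ≤ 4 ^ (k + 1) * (2 ^ (k + 1) * dunklProfile k x a b s t) := by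
        gcongr
        exact le_dunklProfile hk hx hs0 hsa ht'
    _ = 8 ^ (k + 1) * dunklProfile k x a b s t := by
        rw [← mul_assoc, ← Real.mul_rpow (by norm_num) (by norm_num)]
        norm_num

end Profile

section ProductBounds

variable {α β : Type*} [MeasurableSpace α] [MeasurableSpace β] {μ : Measure α} {ν : Measure β}
  [SFinite μ] [SFinite ν] {S S' : Set α} {T T' : Set β} {f : α × β → ℝ} {φ : α → ℝ} {ψ : β → ℝ}

lemma integrableOn_mul_prod (hφ : IntegrableOn φ S μ) (hψ : IntegrableOn ψ T ν) :
    IntegrableOn (fun z : α × β => φ z.1 * ψ z.2) (S ×ˢ T) (μ.prod ν) := by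
  rw [IntegrableOn, ← Measure.prod_restrict]
  exact hφ.mul_prod hψ

lemma integrableOn_prod_of_le_mul_s6 (hS : MeasurableSet S) (hT : MeasurableSet T)
    (hf : Measurable f) (hφ : IntegrableOn φ S μ) (hψ : IntegrableOn ψ T ν)
    (hf0 : ∀ z ∈ S ×ˢ T, 0 ≤ f z) (hle : ∀ z ∈ S ×ˢ T, f z ≤ φ z.1 * ψ z.2) :
    IntegrableOn f (S ×ˢ T) (μ.prod ν) := by
  refine (integrableOn_mul_prod hφ hψ).mono' hf.aestronglyMeasurable
    (ae_restrict_of_forall_mem (hS.prod hT) fun z hz => ?_)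
  rw [Real.norm_of_nonneg (hf0 z hz)]
  exact hle z hz

lemma setIntegral_prod_le_mul (hS : MeasurableSet S) (hT : MeasurableSet T)
    (hf : IntegrableOn f (S ×ˢ T) (μ.prod ν)) (hφ : IntegrableOn φ S μ) (hψ : IntegrableOn ψ T ν)
    (hle : ∀ z ∈ S ×ˢ T, f z ≤ φ z.1 * ψ z.2) :
    ∫ z in S ×ˢ T, f z ∂μ.prod ν ≤ (∫ u in S, φ u ∂μ) * ∫ v in T, ψ v ∂ν := by
  rw [← setIntegral_prod_mul]
  exact setIntegral_mono_on hf (integrableOn_mul_prod hφ hψ) (hS.prod hT) hle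

lemma mul_le_setIntegral_prod (hS : MeasurableSet S) (hT : MeasurableSet T)
    (hS' : MeasurableSet S') (hT' : MeasurableSet T') (hSS' : S' ⊆ S) (hTT' : T' ⊆ T)
    (hf : IntegrableOn f (S ×ˢ T) (μ.prod ν)) (hφ : IntegrableOn φ S' μ)
    (hψ : IntegrableOn ψ T' ν) (hf0 : ∀ z ∈ S ×ˢ T, 0 ≤ f z)
    (hle : ∀ z ∈ S' ×ˢ T', φ z.1 * ψ z.2 ≤ f z) :
    (∫ u in S', φ u ∂μ) * ∫ v in T', ψ v ∂ν ≤ ∫ z in S ×ˢ T, f z ∂μ.prod ν := by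
  have hsub := Set.prod_mono hSS' hTT'
  calc (∫ u in S', φ u ∂μ) * ∫ v in T', ψ v ∂ν
      = ∫ z in S' ×ˢ T', φ z.1 * ψ z.2 ∂μ.prod ν := (setIntegral_prod_mul φ ψ S' T').symm
    _ ≤ ∫ z in S' ×ˢ T', f z ∂μ.prod ν :=
        setIntegral_mono_on (integrableOn_mul_prod hφ hψ) (hf.mono_set hsub) (hS'.prod hT') hle
    _ ≤ ∫ z in S ×ˢ T, f z ∂μ.prod ν :=
        setIntegral_mono_set hf (ae_restrict_of_forall_mem (hS.prod hT) hf0) hsub.eventuallyLE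

end ProductBounds

lemma intervalIntegral_intervalIntegral_eq_setIntegral_prod {f : ℝ × ℝ → ℝ} {a b : ℝ} (ha : 0 ≤ a)
    (hb : 0 ≤ b) (hf : IntegrableOn f (Set.Ioo 0 b ×ˢ Set.Ioo 0 a)) :
    ∫ t in (0 : ℝ)..b, ∫ s in (0 : ℝ)..a, f (t, s) = ∫ z in Set.Ioo 0 b ×ˢ Set.Ioo 0 a, f z := by
  simp_rw [intervalIntegral.integral_of_le ha, intervalIntegral.integral_of_le hb,
    integral_Ioc_eq_integral_Ioo]
  exact (setIntegral_prod f hf).symm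

section IntegralEstimate

open Set

variable {k : ℝ}

lemma exists_dunklIntegrand_le (hk : 0 < k) :
    ∃ C > 0, ∀ x ≥ 0, ∀ y ≥ 0, ∀ a b s t, s ∈ Ioo 0 a → t ∈ Ioo 0 b →
      dunklIntegrand k x y a b s t ≤
        C * ((a + b) * cutoff x (a + cutoff y b)) ^ k * kummerDensity k (k + 1) (y / 2) b t *
          (cutoff x a * kummerDensity k k ((x + y) / 2) a s +
            kummerDensity (k + 1) k ((x + y) / 2) a s) := by
  obtain ⟨C, hC⟩ := exists_dunklIntegrand_comparable hk
  obtain ⟨K₁, hK₁, habsorb₁⟩ := exists_kummerDensity_mul_rpow_le (add_pos hk one_pos)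
  obtain ⟨K₂, hK₂, habsorb₂⟩ := exists_kummerDensity_mul_rpow_le hk
  have hC0 : 0 < C :=
    (hC 0 le_rfl 0 2 2 1 1 ⟨one_pos, one_lt_two⟩ ⟨one_pos, one_lt_two⟩).const_pos
  refine ⟨C * (K₁ * K₂), by positivity, fun x hx y hy a b s t hs ht => ?_⟩
  have ha := hs.1.trans hs.2
  have hb := ht.1.trans ht.2
  have hA := cutoff_pos hx (add_pos ha (cutoff_pos hy hb))
  have hφ := kummerDensity_pos (p := k) (q := k) (M := x + y) hs
  have hψ := kummerDensity_pos (p := k) (q := k + 1) (M := y) ht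
  have hψ' := kummerDensity_pos (p := k) (q := k + 1) (M := y / 2) ht
  have hlen : 0 < cutoff x a + s := add_pos (cutoff_pos hx ha) hs.1
  rw [← mul_kummerDensity hs.1, ← add_mul]
  have hxs := habsorb₁ k k (x + y) x a s hx (le_add_of_nonneg_right hy) hs
  have hyt := habsorb₂ k (k + 1) y y b t hy le_rfl ht
  have hxs0 : 0 < 1 + x * s := by linarith [mul_nonneg hx hs.1.le]
  set A := ((a + b) * cutoff x (a + cutoff y b)) ^ k
  calc dunklIntegrand k x y a b s t
      ≤ C * (kummerDensity k k (x + y) a s * kummerDensity k (k + 1) y b t *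
          dunklProfile k x a b s t) := (hC x hx y a b s t hs ht).left_le
    _ ≤ C * (kummerDensity k k (x + y) a s * kummerDensity k (k + 1) y b t *
          (A * (((1 + x * s) ^ (k + 1) * (cutoff x a + s)) * (1 + y * t) ^ k))) := by
        gcongr
        exact dunklProfile_le_separated hk hx hy hs ht
    _ = C * A * (kummerDensity k (k + 1) y b t * (1 + y * t) ^ k) *
          ((kummerDensity k k (x + y) a s * (1 + x * s) ^ (k + 1)) * (cutoff x a + s)) := by ring
    _ ≤ C * A * (K₂ * kummerDensity k (k + 1) (y / 2) b t) *
          ((K₁ * kummerDensity k k ((x + y) / 2) a s) * (cutoff x a + s)) := by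
        exact mul_le_mul (mul_le_mul_of_nonneg_left hyt (by positivity))
          (mul_le_mul_of_nonneg_right hxs hlen.le) (by positivity) (by positivity)
    _ = _ := by ring

lemma exists_le_dunklIntegrand (hk : 0 < k) :
    ∃ c > 0, ∀ x ≥ 0, ∀ y ≥ 0, ∀ a > 0, ∀ b > 0, ∀ s ∈ bulk (x + y) a, ∀ t ∈ bulk y b,
      c * (((a + b) * cutoff x (a + cutoff y b)) ^ k * cutoff x a) *
          kummerDensity k (k + 1) y b t * kummerDensity k k (x + y) a s ≤
        dunklIntegrand k x y a b s t := by
  obtain ⟨C, hC⟩ := exists_dunklIntegrand_comparable hk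
  have hC0 : 0 < C :=
    (hC 0 le_rfl 0 2 2 1 1 ⟨one_pos, one_lt_two⟩ ⟨one_pos, one_lt_two⟩).const_pos
  refine ⟨C⁻¹ * (8 ^ (k + 1))⁻¹, by positivity, fun x hx y hy a ha b hb s hs t ht => ?_⟩
  have hs' := bulk_subset_Ioo (add_nonneg hx hy) ha hs
  have ht' := bulk_subset_Ioo hy hb ht
  have hφ := kummerDensity_pos (p := k) (q := k) (M := x + y) hs'
  have hψ := kummerDensity_pos (p := k) (q := k + 1) (M := y) ht'
  calc _ = C⁻¹ * (kummerDensity k k (x + y) a s * kummerDensity k (k + 1) y b t *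
          ((8 ^ (k + 1))⁻¹ * (((a + b) * cutoff x (a + cutoff y b)) ^ k * cutoff x a))) := by ring
    _ ≤ C⁻¹ * (kummerDensity k k (x + y) a s * kummerDensity k (k + 1) y b t *
          dunklProfile k x a b s t) := by
        gcongr
        rw [inv_mul_le_iff₀ (by positivity)]
        exact le_dunklProfile_of_mem_bulk hk hx hy ha hb hs ht
    _ ≤ dunklIntegrand k x y a b s t := (hC x hx y a b s t hs' ht').inv_mul_le

lemma exists_setIntegral_half_kummerDensity_le {p q : ℝ} (hp : 0 < p) (hq : 0 < q) :
    ∃ C > 0, ∀ M ≥ 0, ∀ a > 0,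
      ∫ s in Ioo 0 a, kummerDensity p q (M / 2) a s ≤ C * (a ^ (q - 1) * cutoff M a ^ p) := by
  obtain ⟨C, hC, hle⟩ := exists_setIntegral_kummerDensity_le hp hq
  refine ⟨C * 2 ^ p, by positivity, fun M hM a ha => (hle (M / 2) (by positivity) a ha).trans ?_⟩
  have hcut : cutoff (M / 2) a ^ p ≤ 2 ^ p * cutoff M a ^ p := by
    rw [← Real.mul_rpow zero_le_two (cutoff_pos hM ha).le]
    exact Real.rpow_le_rpow (cutoff_pos (by positivity) ha).le
      (cutoff_le_mul_cutoff_left (by positivity) one_le_two (by linarith) hM ha) hp.le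
  calc C * (a ^ (q - 1) * cutoff (M / 2) a ^ p)
      ≤ C * (a ^ (q - 1) * (2 ^ p * cutoff M a ^ p)) := by gcongr
    _ = _ := by ring

lemma exists_setIntegral_cutoff_mul_add_kummerDensity_le {p q : ℝ} (hp : 0 < p) (hq : 0 < q) :
    ∃ C > 0, ∀ x M a, 0 ≤ x → x ≤ M → 0 < a →
      ∫ s in Ioo 0 a, (cutoff x a * kummerDensity p q (M / 2) a s +
          kummerDensity (p + 1) q (M / 2) a s) ≤
        C * (cutoff x a * (a ^ (q - 1) * cutoff M a ^ p)) := by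
  obtain ⟨C₁, hC₁, h₁⟩ := exists_setIntegral_half_kummerDensity_le hp hq
  obtain ⟨C₂, hC₂, h₂⟩ := exists_setIntegral_half_kummerDensity_le (add_pos hp one_pos) hq
  refine ⟨C₁ + C₂, by positivity, fun x M a hx hxM ha => ?_⟩
  have hM := hx.trans hxM
  have hM2 : 0 ≤ M / 2 := by positivity
  have hxa := cutoff_pos hx ha
  have hMa := cutoff_pos hM ha
  have hcut : cutoff M a ≤ cutoff x a := by
    simpa using cutoff_le_mul_cutoff_left hM le_rfl (by linarith) hx ha
  rw [integral_add ((integrableOn_kummerDensity hp hq hM2 ha.le).const_mul _)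
    (integrableOn_kummerDensity (add_pos hp one_pos) hq hM2 ha.le), integral_const_mul]
  calc _ ≤ cutoff x a * (C₁ * (a ^ (q - 1) * cutoff M a ^ p)) +
          C₂ * (a ^ (q - 1) * (cutoff M a ^ p * cutoff M a)) := by
        rw [← Real.rpow_add_one hMa.ne']
        gcongr
        · exact h₁ M hM a ha
        · exact h₂ M hM a ha
    _ ≤ cutoff x a * (C₁ * (a ^ (q - 1) * cutoff M a ^ p)) +
          C₂ * (a ^ (q - 1) * (cutoff M a ^ p * cutoff x a)) := by gcongr
    _ = _ := by ring

/-- The size of the double integral of `dunklIntegrand k x y a b`. -/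
noncomputable def dunklMass (k x y a b : ℝ) : ℝ :=
  ((a + b) * cutoff x (a + cutoff y b)) ^ k * cutoff x a *
    (b ^ k * cutoff y b ^ k) * (a ^ (k - 1) * cutoff (x + y) a ^ k)

lemma dunklMass_pos {x y a b : ℝ} (hx : 0 ≤ x) (hy : 0 ≤ y) (ha : 0 < a) (hb : 0 < b) :
    0 < dunklMass k x y a b := by
  have := cutoff_pos hx (add_pos ha (cutoff_pos hy hb))
  have := cutoff_pos hy hb
  have := cutoff_pos hx ha
  have := cutoff_pos (add_nonneg hx hy) ha
  unfold dunklMass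
  positivity

lemma exists_setIntegral_dunklIntegrand_le (hk : 0 < k) :
    ∃ C > 0, ∀ x ≥ 0, ∀ y ≥ 0, ∀ a > 0, ∀ b > 0,
      IntegrableOn (fun z : ℝ × ℝ => dunklIntegrand k x y a b z.2 z.1) (Ioo 0 b ×ˢ Ioo 0 a) ∧
      ∫ z in Ioo 0 b ×ˢ Ioo 0 a, dunklIntegrand k x y a b z.2 z.1 ≤ C * dunklMass k x y a b := by
  have hk1 := add_pos hk one_pos
  obtain ⟨C, hC, hle⟩ := exists_dunklIntegrand_le hk
  obtain ⟨_, hcomp⟩ := exists_dunklIntegrand_comparable hk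
  obtain ⟨Cb, hCb, hintb⟩ := exists_setIntegral_half_kummerDensity_le hk hk1
  obtain ⟨Ca, hCa, hinta⟩ := exists_setIntegral_cutoff_mul_add_kummerDensity_le hk hk
  refine ⟨C * Cb * Ca, by positivity, fun x hx y hy a ha b hb => ?_⟩
  have hA := cutoff_pos hx (add_pos ha (cutoff_pos hy hb))
  have hyb := cutoff_pos hy hb
  have hxy2 : 0 ≤ (x + y) / 2 := by positivity
  have hφ := (integrableOn_kummerDensity hk hk1 (by positivity : 0 ≤ y / 2) hb.le).const_mul
    (C * ((a + b) * cutoff x (a + cutoff y b)) ^ k)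
  have hψ := ((integrableOn_kummerDensity hk hk hxy2 ha.le).const_mul
    (cutoff x a)).add (integrableOn_kummerDensity hk1 hk hxy2 ha.le)
  have hle' := fun (z : ℝ × ℝ) (hz : z ∈ Ioo 0 b ×ˢ Ioo 0 a) =>
    hle x hx y hy a b z.2 z.1 hz.2 hz.1
  have hint := integrableOn_prod_of_le_mul_s6 measurableSet_Ioo measurableSet_Ioo
    (measurable_dunklIntegrand k x y a b) hφ hψ
    (fun z hz => (hcomp x hx y a b z.2 z.1 hz.2 hz.1).left_pos.le) hle'
  refine ⟨hint, (setIntegral_prod_le_mul measurableSet_Ioo measurableSet_Ioo hint hφ hψ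
    hle').trans ?_⟩
  rw [integral_const_mul]
  have hb_le := hintb y hy b hb
  rw [add_sub_cancel_right] at hb_le
  calc _ ≤ C * ((a + b) * cutoff x (a + cutoff y b)) ^ k * (Cb * (b ^ k * cutoff y b ^ k)) *
        (Ca * (cutoff x a * (a ^ (k - 1) * cutoff (x + y) a ^ k))) := by
        refine mul_le_mul (by gcongr) (hinta x (x + y) a hx (le_add_of_nonneg_right hy) ha)
          (setIntegral_nonneg measurableSet_Ioo fun s hs => ?_) (by positivity)
        exact add_nonneg (mul_nonneg (cutoff_pos hx ha).le (kummerDensity_pos hs).le)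
          (kummerDensity_pos hs).le
    _ = C * Cb * Ca * dunklMass k x y a b := by
        unfold dunklMass
        ring

lemma exists_le_setIntegral_dunklIntegrand (hk : 0 < k) :
    ∃ c > 0, ∀ x ≥ 0, ∀ y ≥ 0, ∀ a > 0, ∀ b > 0,
      c * dunklMass k x y a b ≤
        ∫ z in Ioo 0 b ×ˢ Ioo 0 a, dunklIntegrand k x y a b z.2 z.1 := by
  have hk1 := add_pos hk one_pos
  obtain ⟨c, hc, hge⟩ := exists_le_dunklIntegrand hk
  obtain ⟨_, hcomp⟩ := exists_dunklIntegrand_comparable hk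
  obtain ⟨_, -, hint⟩ := exists_setIntegral_dunklIntegrand_le hk
  obtain ⟨cb, hcb, hgeb⟩ := exists_le_setIntegral_bulk_kummerDensity hk hk1
  obtain ⟨ca, hca, hgea⟩ := exists_le_setIntegral_bulk_kummerDensity hk hk
  refine ⟨c * cb * ca, by positivity, fun x hx y hy a ha b hb => ?_⟩
  have hxy := add_nonneg hx hy
  have hA := cutoff_pos hx (add_pos ha (cutoff_pos hy hb))
  have hyb := cutoff_pos hy hb
  have hxa := cutoff_pos hx ha
  have hxya := cutoff_pos hxy ha
  have hb_ge := hgeb y hy b hb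
  rw [add_sub_cancel_right] at hb_ge
  have hbulk := mul_le_setIntegral_prod measurableSet_Ioo measurableSet_Ioo measurableSet_bulk
    measurableSet_bulk (bulk_subset_Ioo hy hb) (bulk_subset_Ioo hxy ha) (hint x hx y hy a ha b hb).1
    (((integrableOn_kummerDensity hk hk1 hy hb.le).mono_set (bulk_subset_Ioo hy hb)).const_mul
      (c * (((a + b) * cutoff x (a + cutoff y b)) ^ k * cutoff x a)))
    ((integrableOn_kummerDensity hk hk hxy ha.le).mono_set (bulk_subset_Ioo hxy ha))
    (fun z hz => (hcomp x hx y a b z.2 z.1 hz.2 hz.1).left_pos.le)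
    (fun z hz => hge x hx y hy a ha b hb z.2 hz.2 z.1 hz.1)
  rw [integral_const_mul] at hbulk
  refine le_trans ?_ hbulk
  calc c * cb * ca * dunklMass k x y a b
      = c * (((a + b) * cutoff x (a + cutoff y b)) ^ k * cutoff x a) *
          (cb * (b ^ k * cutoff y b ^ k)) * (ca * (a ^ (k - 1) * cutoff (x + y) a ^ k)) := by
        unfold dunklMass
        ring
    _ ≤ _ := by
        refine mul_le_mul (by gcongr) (hgea (x + y) hxy a ha) (by positivity) ?_
        exact mul_nonneg (by positivity) (le_trans (by positivity) hb_ge)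

theorem exists_integral_dunklIntegrand_comparable (hk : 0 < k) :
    ∃ C, ∀ x ≥ 0, ∀ y ≥ 0, ∀ a > 0, ∀ b > 0,
      Comparable C (∫ t in (0 : ℝ)..b, ∫ s in (0 : ℝ)..a, dunklIntegrand k x y a b s t)
        (dunklMass k x y a b) := by
  obtain ⟨C, -, hle⟩ := exists_setIntegral_dunklIntegrand_le hk
  obtain ⟨c, hc, hge⟩ := exists_le_setIntegral_dunklIntegrand hk
  refine ⟨max C c⁻¹, fun x hx y hy a ha b hb => ?_⟩
  obtain ⟨hint, hupper⟩ := hle x hx y hy a ha b hb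
  rw [intervalIntegral_intervalIntegral_eq_setIntegral_prod ha.le hb.le hint]
  exact comparable_of_mul_le_of_le_mul hc (dunklMass_pos hx hy ha hb)
    (hge x hx y hy a ha b hb) hupper

end IntegralEstimate

section Model

variable {k x y a b : ℝ}

lemma cutoff_add_cutoff_comparable (hx : 0 ≤ x) (hy : 0 ≤ y) (ha : 0 < a) (hb : 0 < b) :
    Comparable 2 (cutoff x (a + cutoff y b))
      ((a + b) * (1 + (x + y) * a) / ((1 + x * a) * (1 + (x + y) * (a + b)))) := by
  have hcut : cutoff x (a + cutoff y b) =
      (a + b + a * b * y) / (1 + y * b + x * (a + b + a * b * y)) := by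
    unfold cutoff
    field_simp
    ring
  have hden : 0 < 1 + y * b + x * (a + b + a * b * y) := by positivity
  rw [hcut]
  refine ⟨by positivity, by positivity, ?_, ?_⟩
  · rw [mul_div, div_le_div_iff₀ hden (by positivity), ← sub_nonneg]
    ring_nf
    positivity
  · rw [mul_div, div_le_div_iff₀ (by positivity) hden, ← sub_nonneg]
    ring_nf
    positivity

lemma dunklMass_div_comparable (hk : 0 < k) (hx : 0 ≤ x) (hy : 0 ≤ y) (ha : 0 < a) (hb : 0 < b) :
    Comparable (2 ^ k) (dunklMass k x y a b / (a * (a + b) * b) ^ (2 * k))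
      ((1 + a * x) ^ (k + 1) * (1 + b * y) ^ k * (1 + (a + b) * (x + y)) ^ k)⁻¹ := by
  have h := cutoff_add_cutoff_comparable hx hy ha hb
  have hQ := h.left_pos
  have hmass : dunklMass k x y a b / (a * (a + b) * b) ^ (2 * k) =
      ((1 + a * x) * ((1 + b * y) * ((a + b) * (1 + (x + y) * a))) ^ k)⁻¹ *
        cutoff x (a + cutoff y b) ^ k := by
    rw [dunklMass, two_mul, Real.rpow_add (by positivity), Real.rpow_sub_one ha.ne']
    generalize cutoff x (a + cutoff y b) = Q at hQ ⊢
    simp only [cutoff]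
    repeat rw [Real.mul_rpow (by positivity) (by positivity)]
    repeat rw [Real.div_rpow (by positivity) (by positivity)]
    field_simp
  have hmodel : ((1 + a * x) ^ (k + 1) * (1 + b * y) ^ k * (1 + (a + b) * (x + y)) ^ k)⁻¹ =
      ((1 + a * x) * ((1 + b * y) * ((a + b) * (1 + (x + y) * a))) ^ k)⁻¹ *
        ((a + b) * (1 + (x + y) * a) / ((1 + x * a) * (1 + (x + y) * (a + b)))) ^ k := by
    rw [Real.rpow_add_one (by positivity)]
    repeat rw [Real.div_rpow (by positivity) (by positivity)]
    repeat rw [Real.mul_rpow (by positivity) (by positivity)]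
    field_simp
  rw [hmass, hmodel]
  exact (h.rpow_of_nonneg hk.le).mul_left (by positivity)

end Model

theorem estimate_C213_general {k : ℝ} (hk : 0 < k) :
    ∃ C > 0, ∀ l1 l2 l3 x1 x2 x3 : ℝ, l2 < l1 → l3 < l2 → x1 ≤ x2 → x3 ≤ x1 →
      Comparable C (EkA2 k x1 x2 x3 l1 l2 l3)
        (Real.exp (l1 * (x2 - x3) + l2 * (x1 - x3)) /
          ((1 + (l1 - l2) * (x2 - x1)) ^ (k + 1) * (1 + (l2 - l3) * (x1 - x3)) ^ k
            * (1 + (l1 - l3) * (x2 - x3)) ^ k)) := by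
  obtain ⟨C, hC⟩ := exists_integral_dunklIntegrand_comparable hk
  have hC0 : 0 < C := (hC 0 le_rfl 0 le_rfl 1 one_pos 1 one_pos).const_pos
  set c := 3 * Real.Gamma (3 * k) / Real.Gamma k ^ 2 with hc_def
  have hc : 0 < c := by positivity
  refine ⟨max c c⁻¹ * (C * 2 ^ k), by positivity,
    fun l1 l2 l3 x1 x2 x3 hl12 hl23 hx12 hx31 => ?_⟩
  have ha := sub_pos.2 hl12
  have hb := sub_pos.2 hl23
  have hx := sub_nonneg.2 hx12
  have hy := sub_nonneg.2 hx31
  have hV : 0 < ((l1 - l2) * (l1 - l2 + (l2 - l3)) * (l2 - l3)) ^ (2 * k) := by positivity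
  have hint := ((hC _ hx _ hy _ ha _ hb).mul_left (inv_pos.2 hV)).trans
    (by simpa only [inv_mul_eq_div] using dunklMass_div_comparable hk hx hy ha hb)
  have hexp := hint.mul_left (Real.exp_pos (l1 * (x2 - x3) + l2 * (x1 - x3)))
  have h := (comparable_const_mul hc hexp.left_pos).trans hexp
  rw [sub_add_sub_cancel, add_comm (x2 - x1), sub_add_sub_cancel', ← div_eq_mul_inv] at h
  convert h using 1
  rw [EkA2_eq_integral_dunklIntegrand, Vlam, hc_def]
  field_simp

/-- Theorem 4.1: sharp estimate of the `A₂` Dunkl kernel. -/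
theorem estimate_C213 (k : ℝ) (hk : 0 < k) :
    ∃ C : ℝ, 0 < C ∧ ∀ l1 l2 l3 x1 x2 x3 : ℝ,
      l1 + l2 + l3 = 0 →
      l2 < l1 →
      l3 < l2 →
      x1 + x2 + x3 = 0 →
      x1 ≤ x2 →
      x3 ≤ x1 →
      (C⁻¹ * (Real.exp (l1 * x2 + l2 * x1 + l3 * x3) /
          ((1 + (l1 - l2) * (x2 - x1)) ^ (k + 1) * (1 + (l2 - l3) * (x1 - x3)) ^ k
            * (1 + (l1 - l3) * (x2 - x3)) ^ k))
        ≤ EkA2 k x1 x2 x3 l1 l2 l3 ∧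
      EkA2 k x1 x2 x3 l1 l2 l3
        ≤ C * (Real.exp (l1 * x2 + l2 * x1 + l3 * x3) /
          ((1 + (l1 - l2) * (x2 - x1)) ^ (k + 1) * (1 + (l2 - l3) * (x1 - x3)) ^ k
            * (1 + (l1 - l3) * (x2 - x3)) ^ k))) := by
  obtain ⟨C, hC, h⟩ := estimate_C213_general hk
  refine ⟨C, hC, fun l1 l2 l3 x1 x2 x3 hl hl12 hl23 _ hx12 hx31 => ?_⟩
  have hexponent : l1 * x2 + l2 * x1 + l3 * x3 = l1 * (x2 - x3) + l2 * (x1 - x3) := by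
    linear_combination x3 * hl
  rw [hexponent]
  exact ⟨(h l1 l2 l3 x1 x2 x3 hl12 hl23 hx12 hx31).inv_mul_le,
    (h l1 l2 l3 x1 x2 x3 hl12 hl23 hx12 hx31).left_le⟩
end
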